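/- arXiv:2012.14861 — 8 statements merged into one kernel-verified Lean document; each statement's English description precedes it below -/
import Mathlib

section
/- Let d, n, s be positive integers with gcd(s,n)=1 and d ≥ 3, and suppose n ≤ d(d−1) and d does not divide n. Then for all a, b ∈ F_{q^n}, the F_q-dimension of the kernel of the σ-linearized polynomial a·x + b·x^σ − x^{σ^d} (viewed as an F_q-linear endomorphism of F_{q^n}) is strictly less than d. -/
/-!
Suppose `V = ker (a·x + b·σ(x) − σ^d(x))` had dimension at least `d`. A nonzero operator
`∑_{j < d} c_j σ^j` has kernel of dimension less than `d`, so the restrictions `u_j = σ^j|_V`,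
`j < d`, are linearly independent over `L`. They satisfy `u_{i+d} = σ^i(a) u_i + σ^i(b) u_{i+1}`,
and `a ≠ 0`. Write `n = kd + r` with `0 < r < d` and `k ≤ d − 2`. Applying the recurrence `k` times
expresses `u_n` as a nonzero multiple of `u_r` plus a combination of `u_{r+1}, …, u_{r+k}`, and one
more application to those with index at least `d` never brings `u_r` back, since `k ≤ d − 2`.
Hence `u_n` has a nonzero `u_r`-coordinate in the basis `u_0, …, u_{d-1}`, contradicting
`u_n = u_0`.
-/

open Polynomial Submodule

section Recurrence

variable {R M : Type*} [CommRing R] [AddCommGroup M] [Module R M]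
  {u : ℕ → M} {d : ℕ} {α β : ℕ → R}

theorem apply_mul_add_sub_prod_smul_mem_span
    (hu : ∀ i, u (i + d) = α i • u i + β i • u (i + 1)) (t m : ℕ) :
    u (t * d + m) - (∏ j ∈ Finset.range t, α (j * d + m)) • u m ∈
      span R (u '' Set.Ioc m (m + t)) := by
  induction t generalizing m with
  | zero => simp
  | succ t ih =>
    have hmem : ∀ i ∈ Set.Ioc m (m + (t + 1)), u i ∈ span R (u '' Set.Ioc m (m + (t + 1))) :=
      fun i hi => subset_span ⟨i, hi, rfl⟩
    have hspan : span R (u '' Set.Ioc (m + d) (m + d + t)) ≤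
        span R (u '' Set.Ioc m (m + (t + 1))) := by
      rw [span_le]
      rintro _ ⟨i, ⟨hlt, hle⟩, rfl⟩
      obtain ⟨i, rfl⟩ : ∃ j, i = j + d := ⟨i - d, by omega⟩
      rw [hu]
      exact add_mem (smul_mem _ _ (hmem i ⟨by omega, by omega⟩))
        (smul_mem _ _ (hmem (i + 1) ⟨by omega, by omega⟩))
    have hprod : ∏ j ∈ Finset.range (t + 1), α (j * d + m) =
        (∏ j ∈ Finset.range t, α (j * d + (m + d))) * α m := by
      rw [Finset.prod_range_succ']
      simp only [add_one_mul, add_assoc, add_comm d m, zero_mul, zero_add]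
    convert add_mem (hspan (ih (m + d)))
      (smul_mem _ ((∏ j ∈ Finset.range t, α (j * d + (m + d))) * β m)
        (hmem (m + 1) ⟨by omega, by omega⟩)) using 1
    rw [hprod, hu m, show (t + 1) * d + m = t * d + (m + d) by ring]
    module

theorem span_image_Ioc_le_span_image_range_diff
    (hu : ∀ i, u (i + d) = α i • u i + β i • u (i + 1)) {r k : ℕ} (hr : r < d) (hk : k + 1 < d) :
    span R (u '' Set.Ioc r (r + k)) ≤ span R (u '' (↑(Finset.range d) \ {r})) := by
  have hmem : ∀ i < d, i ≠ r → u i ∈ span R (u '' (↑(Finset.range d) \ {r})) :=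
    fun i hi hir => subset_span ⟨i, by simp [hi, hir], rfl⟩
  rw [span_le]
  rintro _ ⟨i, ⟨hlt, hle⟩, rfl⟩
  obtain hid | hdi := Nat.lt_or_ge i d
  · exact hmem i hid (by omega)
  · obtain ⟨i, rfl⟩ : ∃ j, i = j + d := ⟨i - d, by omega⟩
    rw [hu]
    exact add_mem (smul_mem _ _ (hmem i (by omega) (by omega)))
      (smul_mem _ _ (hmem (i + 1) (by omega) (by omega)))

theorem apply_ne_apply_zero_of_linearIndepOn_range [IsDomain R]
    (hu : ∀ i, u (i + d) = α i • u i + β i • u (i + 1)) (hα : ∀ i, α i ≠ 0)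
    (hli : LinearIndepOn R u (Finset.range d)) {n : ℕ} (hnd : n ≤ d * (d - 1)) (hdvd : ¬ d ∣ n) :
    u n ≠ u 0 := by
  intro hn0
  have hr0 : n % d ≠ 0 := fun h => hdvd (Nat.dvd_of_mod_eq_zero h)
  have hnlt : n < d * (d - 1) := lt_of_le_of_ne hnd fun h => hdvd (h ▸ dvd_mul_right ..)
  have hk : n / d < d - 1 := Nat.div_lt_of_lt_mul hnlt
  have hd : 0 < d := Nat.pos_of_ne_zero (by rintro rfl; simp at hnlt)
  have hrd : n % d < d := Nat.mod_lt _ hd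
  have hred := span_image_Ioc_le_span_image_range_diff hu hrd (by omega)
    (apply_mul_add_sub_prod_smul_mem_span hu (n / d) (n % d))
  have hzero : u 0 ∈ span R (u '' (↑(Finset.range d) \ {n % d})) :=
    subset_span ⟨0, by simp [hd, hr0.symm], rfl⟩
  rw [Nat.div_add_mod', hn0] at hred
  have hsmul := sub_mem hzero hred
  rw [sub_sub_cancel] at hsmul
  exact Finset.prod_ne_zero_iff.2 (fun j _ => hα _)
    (hli.eq_zero_of_smul_mem_span (by simpa using hrd) _ hsmul)

end Recurrence

section PowRestrict

variable {K L : Type*} [Field K] [Field L] [Algebra K L]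

/-- The map `x ↦ σ (x / w) - x / w`. Right division by it lowers the `σ`-degree of a linearized
polynomial vanishing at `w`. -/
def twistedDifference (σ : L ≃ₐ[K] L) (w : L) : L →ₗ[K] L :=
  (σ.toLinearMap - LinearMap.id) ∘ₗ LinearMap.mulLeft K w⁻¹

theorem twistedDifference_apply (σ : L ≃ₐ[K] L) (w x : L) :
    twistedDifference σ w x = σ (w⁻¹ * x) - w⁻¹ * x := by
  simp [twistedDifference]

theorem ker_twistedDifference_le {σ : L ≃ₐ[K] L}
    (hfix : ∀ x, σ x = x → x ∈ Set.range (algebraMap K L)) {w : L} (hw : w ≠ 0) :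
    LinearMap.ker (twistedDifference σ w) ≤ span K {w} := by
  intro x hx
  rw [LinearMap.mem_ker, twistedDifference_apply, sub_eq_zero] at hx
  obtain ⟨k, hk⟩ := hfix _ hx
  refine mem_span_singleton.2 ⟨k, ?_⟩
  rw [Algebra.smul_def, hk, mul_right_comm, inv_mul_cancel₀ hw, one_mul]

theorem finrank_le_finrank_map_twistedDifference_add_one {σ : L ≃ₐ[K] L}
    (hfix : ∀ x, σ x = x → x ∈ Set.range (algebraMap K L)) {w : L} (hw : w ≠ 0)
    (W : Submodule K L) [FiniteDimensional K W] :
    Module.finrank K W ≤ Module.finrank K (W.map (twistedDifference σ w)) + 1 := by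
  have hker : Module.finrank K (LinearMap.ker ((twistedDifference σ w).domRestrict W)) ≤ 1 := by
    rw [← finrank_span_singleton (K := K) hw, ← finrank_map_subtype_eq]
    refine finrank_mono (map_le_iff_le_comap.2 fun x hx => ?_)
    exact ker_twistedDifference_le hfix hw hx
  rw [← LinearMap.finrank_range_add_finrank_ker ((twistedDifference σ w).domRestrict W),
    LinearMap.range_domRestrict]
  gcongr

theorem sum_mul_pow_twistedDifference (σ : L ≃ₐ[K] L) {w : L} (hw : w ≠ 0) {c : ℕ → L} {e : ℕ}
    (hcw : ∑ j ∈ Finset.range (e + 1), c j * (σ ^ j) w = 0) (x : L) :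
    ∑ j ∈ Finset.range e,
        (∑ i ∈ Finset.range (j + 1), c i * (σ ^ i) w) * (σ ^ j) (twistedDifference σ w x) =
      -∑ j ∈ Finset.range (e + 1), c j * (σ ^ j) x := by
  have hparts := Finset.sum_range_by_parts
    (fun j => (σ ^ j) (w⁻¹ * x)) (fun j => c j * (σ ^ j) w) (e + 1)
  have hcancel : ∀ j, (σ ^ j) (w⁻¹ * x) * (c j * (σ ^ j) w) = c j * (σ ^ j) x := fun j => by
    rw [mul_left_comm, ← map_mul, mul_right_comm, inv_mul_cancel₀ hw, one_mul]
  simp only [smul_eq_mul, hcancel, hcw, mul_zero, zero_sub, Nat.add_sub_cancel] at hparts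
  rw [hparts, neg_neg]
  refine Finset.sum_congr rfl fun j _ => ?_
  rw [twistedDifference_apply, map_sub, pow_succ, AlgEquiv.mul_apply, mul_comm]

/-- The power `σ ^ j` restricted to `W`, as an element of the `L`-vector space `W →ₗ[K] L`. -/
def powRestrict (σ : L ≃ₐ[K] L) (W : Submodule K L) (j : ℕ) : W →ₗ[K] L :=
  (σ ^ j).toLinearMap.domRestrict W

@[simp]
theorem powRestrict_apply (σ : L ≃ₐ[K] L) (W : Submodule K L) (j : ℕ) (x : W) :
    powRestrict σ W j x = (σ ^ j) (x : L) :=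
  rfl

theorem sum_smul_powRestrict_eq_zero_iff {σ : L ≃ₐ[K] L} {W : Submodule K L} {c : ℕ → L} {e : ℕ} :
    ∑ j ∈ Finset.range e, c j • powRestrict σ W j = 0 ↔
      ∀ x ∈ W, ∑ j ∈ Finset.range e, c j * (σ ^ j) x = 0 := by
  simp [LinearMap.ext_iff, LinearMap.sum_apply]

theorem linearIndepOn_powRestrict {σ : L ≃ₐ[K] L}
    (hfix : ∀ x, σ x = x → x ∈ Set.range (algebraMap K L)) {e : ℕ} {W : Submodule K L}
    (hW : e ≤ Module.finrank K W) :
    LinearIndepOn L (powRestrict σ W) (Finset.range e) := by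
  induction e generalizing W with
  | zero => simp
  | succ e ih =>
    have : FiniteDimensional K W := Module.finite_of_finrank_pos (by omega)
    obtain ⟨w, hwW, hw⟩ := W.exists_mem_ne_zero_of_ne_bot (by rintro rfl; simp at hW)
    have hrank := finrank_le_finrank_map_twistedDifference_add_one hfix hw W
    have hmap := linearIndepOn_finset_iff.1 (ih (W := W.map (twistedDifference σ w)) (by omega))
    rw [linearIndepOn_finset_iff]
    intro c hc
    rw [sum_smul_powRestrict_eq_zero_iff] at hc
    have hpartial_lt := hmap (fun j => ∑ i ∈ Finset.range (j + 1), c i * (σ ^ i) w) <| by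
      rw [sum_smul_powRestrict_eq_zero_iff]
      rintro _ ⟨x, hx, rfl⟩
      rw [sum_mul_pow_twistedDifference σ hw (hc w hwW), hc x hx, neg_zero]
    have hpartial : ∀ j ≤ e + 1, ∑ i ∈ Finset.range j, c i * (σ ^ i) w = 0
      | 0, _ => Finset.sum_range_zero _
      | j + 1, hj => by
        obtain hlt | rfl := (Nat.le_of_succ_le_succ hj).lt_or_eq
        · exact hpartial_lt j (Finset.mem_range.2 hlt)
        · exact hc w hwW
    intro j hj
    rw [Finset.mem_range] at hj
    have hterm := hpartial (j + 1) hj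
    rw [Finset.sum_range_succ, hpartial j hj.le, zero_add] at hterm
    exact (mul_eq_zero.1 hterm).resolve_right ((map_ne_zero_iff _ (σ ^ j).injective).2 hw)

theorem powRestrict_add {σ : L ≃ₐ[K] L} {V : Submodule K L} {d : ℕ} {a b : L}
    (hV : ∀ x ∈ V, (σ ^ d) x = a * x + b * σ x) (i : ℕ) :
    powRestrict σ V (i + d) =
      (σ ^ i) a • powRestrict σ V i + (σ ^ i) b • powRestrict σ V (i + 1) := by
  ext x
  simp [pow_add, hV x x.2]

theorem ne_zero_of_forall_pow_eq {σ : L ≃ₐ[K] L}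
    (hfix : ∀ x, σ x = x → x ∈ Set.range (algebraMap K L)) {V : Submodule K L} {d : ℕ} {a b : L}
    (hV : ∀ x ∈ V, (σ ^ d) x = a * x + b * σ x) (hd : 2 ≤ d) (hdV : d ≤ Module.finrank K V) :
    a ≠ 0 := by
  rintro rfl
  obtain ⟨d, rfl⟩ := Nat.exists_eq_add_of_le' hd
  obtain ⟨b, rfl⟩ := σ.surjective b
  have hlast : powRestrict σ V (d + 1) = b • powRestrict σ V 0 := by
    ext x
    apply σ.injective
    simpa [pow_succ'] using hV x x.2
  refine (linearIndepOn_powRestrict hfix hdV).notMem_span (i := d + 1) (by simp) ?_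
  rw [hlast]
  exact smul_mem _ _ (subset_span ⟨0, by simp, rfl⟩)

theorem finrank_lt_of_forall_pow_eq {σ : L ≃ₐ[K] L}
    (hfix : ∀ x, σ x = x → x ∈ Set.range (algebraMap K L)) {V : Submodule K L} {d : ℕ} {a b : L}
    (hV : ∀ x ∈ V, (σ ^ d) x = a * x + b * σ x) {n : ℕ} (hσn : σ ^ n = 1)
    (hnd : n ≤ d * (d - 1)) (hdvd : ¬ d ∣ n) : Module.finrank K V < d := by
  by_contra! hdV
  have hd : 2 ≤ d := by
    by_contra! hd
    interval_cases d <;> simp_all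
  have ha : a ≠ 0 := ne_zero_of_forall_pow_eq hfix hV hd hdV
  refine apply_ne_apply_zero_of_linearIndepOn_range (powRestrict_add hV)
    (fun i => (map_ne_zero_iff _ (σ ^ i).injective).2 ha)
    (linearIndepOn_powRestrict hfix hdV) hnd hdvd ?_
  ext x
  simp [hσn]

end PowRestrict

section FiniteField

variable {K L : Type*} [Field K] [Fintype K] [Field L] [Algebra K L]

theorem splits_X_pow_card_sub_X : (X ^ Fintype.card K - X : K[X]).Splits := by
  rw [splits_iff_card_roots, FiniteField.roots_X_pow_card_sub_X,
    FiniteField.X_pow_card_sub_X_natDegree_eq K Fintype.one_lt_card, Finset.card_val,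
    Finset.card_univ]

theorem mem_range_algebraMap_of_pow_card_eq_self {x : L} (hx : x ^ Fintype.card K = x) :
    x ∈ Set.range (algebraMap K L) :=
  splits_X_pow_card_sub_X.mem_range_of_isRoot
    (FiniteField.X_pow_card_sub_X_ne_zero K Fintype.one_lt_card) (by simp [hx])

theorem pow_eq_self_of_pow_pow_eq_self_of_coprime {M : Type*} [Monoid M] {x : M} {q s n : ℕ}
    (hsn : s.Coprime n) (hs : x ^ q ^ s = x) (hn : x ^ q ^ n = x) : x ^ q = x := by
  have periodic_of_pow : ∀ m, x ^ q ^ m = x → (fun y : M => y ^ q).IsPeriodicPt m x :=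
    fun m hm => by rwa [Function.IsPeriodicPt, Function.IsFixedPt, pow_iterate]
  simpa [hsn.gcd_eq_one, Function.IsPeriodicPt, Function.IsFixedPt] using
    (periodic_of_pow s hs).gcd (periodic_of_pow n hn)

theorem algEquiv_pow_eq_one_of_card_eq_pow {F E : Type*} [CommSemiring F] [Field E] [Fintype E]
    [Algebra F E] {q n s : ℕ} (hcard : Fintype.card E = q ^ n) {σ : E ≃ₐ[F] E}
    (hσ : ∀ x, σ x = x ^ q ^ s) : σ ^ n = 1 := by
  ext x
  rw [AlgEquiv.coe_pow, funext hσ, pow_iterate, ← pow_mul, mul_comm, pow_mul, ← hcard]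
  exact FiniteField.pow_card_pow s x

end FiniteField

theorem stmt_0_general {K L : Type*} [Field K] [Field L] [Algebra K L] (σ : L ≃ₐ[K] L)
    (hfix : ∀ x, σ x = x → x ∈ Set.range (algebraMap K L)) {n d : ℕ} (hσn : σ ^ n = 1)
    (hnd : n ≤ d * (d - 1)) (hdvd : ¬ d ∣ n) (a b : L) :
    Module.finrank K
      (LinearMap.ker
        (LinearMap.mulLeft K a + LinearMap.mulLeft K b ∘ₗ σ.toLinearMap
          - (σ ^ d : L ≃ₐ[K] L).toLinearMap)) < d :=
  finrank_lt_of_forall_pow_eq hfix (fun _ hx => (sub_eq_zero.1 (LinearMap.mem_ker.1 hx)).symm)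
    hσn hnd hdvd

/-- Let `q` be a prime power, `F_{q^n}` the field with `q^n` elements,
`σ : x ↦ x^{q^s}` with `gcd(s,n) = 1` a generator of `Gal(F_{q^n}/F_q)`.
If `d ≥ 3`, `n ≤ d(d-1)` and `d ∤ n`, then for all `a b ∈ F_{q^n}` the `F_q`-dimension of
the kernel of `x ↦ a·x + b·σ(x) − σ^d(x)` is strictly less than `d`. -/
theorem stmt_0 (p q : ℕ) (hp : p.Prime) (hq : ∃ m : ℕ, 0 < m ∧ q = p ^ m)
    (K L : Type*) [Field K] [Field L] [Fintype K] [Fintype L] [Algebra K L]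
    (hcardK : Fintype.card K = q)
    (n : ℕ) (hn : 0 < n) (hcardL : Fintype.card L = q ^ n)
    (s : ℕ) (hs : 0 < s) (hsn : Nat.gcd s n = 1)
    (σ : L ≃ₐ[K] L) (hσ : ∀ x : L, σ x = x ^ q ^ s)
    (d : ℕ) (hd : 3 ≤ d) (hnd : n ≤ d * (d - 1)) (hdvd : ¬ d ∣ n)
    (a b : L) :
    Module.finrank K
      (LinearMap.ker
        (LinearMap.mulLeft K a + LinearMap.mulLeft K b ∘ₗ σ.toLinearMap
          - (σ ^ d : L ≃ₐ[K] L).toLinearMap)) < d := by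
  subst hcardK
  have hpow_n : ∀ x : L, x ^ Fintype.card K ^ n = x := fun x => hcardL ▸ FiniteField.pow_card x
  have hfix : ∀ x, σ x = x → x ∈ Set.range (algebraMap K L) := fun x hx =>
    mem_range_algebraMap_of_pow_card_eq_self
      (pow_eq_self_of_pow_pow_eq_self_of_coprime hsn (hσ x ▸ hx) (hpow_n x))
  exact stmt_0_general σ hfix (algEquiv_pow_eq_one_of_card_eq_pow hcardL hσ) hnd hdvd a b
end

section
/- Let d, n, s be positive integers with gcd(s,n)=1 and d ≥ 3, and suppose n ≤ d(d−1) and d divides n. Then for a, b ∈ F_{q^n}, the F_q-dimension of the kernel of a·x + b·x^σ − x^{σ^d} equals d if and only if b = 0 and N_{q^n/q^d}(a) = 1, where N_{q^n/q^d}(a) = a^{(q^n−1)/(q^d−1)} is the norm from F_{q^n} to the subfield F_{q^d}. -/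
/-!
The argument works for every finite cyclic extension `L/K` with a generator `σ` of the Galois group.

Dividing on the right by `σ - σ(w)/w` for a root `w ≠ 0`, as in the ring of skew polynomials, shows
that a `σ`-linearized polynomial of `σ`-degree `k` has a kernel of dimension at most `k`. On the
kernel of `a x + b σ(x) - σ^d(x)` we have `σ^d = a + b σ`. Iterating this `m = [L : K] / d` times,
where moving the factors past powers of `σ` only changes their coefficients, expresses
`σ^{dm} = 1` there as a product of `m` factors `α + β σ`. If `b ≠ 0`, this product minus `1` has
`σ`-degree `m`, so the kernel has dimension at most `m ≤ d - 1`.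

If `b = 0`, the kernel consists of the solutions of `σ^d(x) = a x`. By Hilbert's Theorem 90 there
is a nonzero solution `y` exactly when the norm of `a` to the fixed field of `σ^d` is `1`, and then
the kernel is `y` times that field, which has degree `d` over `K`.
-/

open Module Subgroup IntermediateField

section LinearAlgebra

variable {K V : Type*} [Field K] [AddCommGroup V] [Module K V] [FiniteDimensional K V]

theorem finrank_ker_mul_le (f g : End K V) :
    finrank K (LinearMap.ker (f * g)) ≤
      finrank K (LinearMap.ker f) + finrank K (LinearMap.ker g) := by
  let h : LinearMap.ker (f * g) →ₗ[K] V := g.domRestrict (LinearMap.ker (f * g))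
  have range_le : LinearMap.range h ≤ LinearMap.ker f := by
    rintro _ ⟨x, rfl⟩
    exact x.2
  have map_ker_le : (LinearMap.ker h).map (Submodule.subtype _) ≤ LinearMap.ker g := by
    rintro _ ⟨x, hx, rfl⟩
    exact hx
  have finrank_map := Submodule.finrank_map_subtype_eq _ (LinearMap.ker h)
  calc
    finrank K (LinearMap.ker (f * g))
      = finrank K (LinearMap.range h) + finrank K (LinearMap.ker h) :=
        h.finrank_range_add_finrank_ker.symm
    _ ≤ finrank K (LinearMap.ker f) + finrank K (LinearMap.ker g) :=
        add_le_add (Submodule.finrank_mono range_le)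
          (finrank_map ▸ Submodule.finrank_mono map_ker_le)

end LinearAlgebra

section Semilinear

variable {K L : Type*} [Field K] [Field L] [Algebra K L]

theorem toLinearMap_pow_apply (σ : L ≃ₐ[K] L) (j : ℕ) (x : L) :
    (σ.toLinearMap ^ j) x = (σ ^ j) x := by
  rw [Module.End.pow_apply, AlgEquiv.coe_pow]; rfl

theorem toLinearMap_pow_mul_smul (σ : L ≃ₐ[K] L) (j : ℕ) (c : L) (f : End K L) :
    σ.toLinearMap ^ j * c • f = (σ ^ j) c • (σ.toLinearMap ^ j * f) := by
  ext x
  simp [toLinearMap_pow_apply]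

theorem smul_toLinearMap_pow (σ : L ≃ₐ[K] L) (a : L) (k : ℕ) :
    (a • σ.toLinearMap) ^ k = (∏ i ∈ Finset.range k, (σ ^ i) a) • σ.toLinearMap ^ k := by
  induction k with
  | zero => simp
  | succ k ih =>
    rw [pow_succ, ih, smul_mul_assoc, toLinearMap_pow_mul_smul, smul_smul, Finset.prod_range_succ,
      ← pow_succ]

theorem mem_fixedField_zpowers_iff {τ : L ≃ₐ[K] L} {x : L} :
    x ∈ fixedField (zpowers τ) ↔ τ x = x := by
  rw [mem_fixedField_iff]
  refine ⟨fun h ↦ h τ (mem_zpowers τ), fun h ↦ ?_⟩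
  have : zpowers τ ≤ MulAction.stabilizer Gal(L/K) x := zpowers_le.2 h
  exact fun f hf ↦ this hf

theorem mem_ker_toLinearMap_sub_smul_one_iff {τ : L ≃ₐ[K] L} {a x : L} :
    x ∈ LinearMap.ker (τ.toLinearMap - a • 1) ↔ τ x = a * x :=
  sub_eq_zero

theorem ker_toLinearMap_sub_smul_one {τ : L ≃ₐ[K] L} {a y : L} (hy : y ≠ 0) (hτy : τ y = a * y) :
    LinearMap.ker (τ.toLinearMap - a • 1) =
      (fixedField (zpowers τ)).toSubalgebra.toSubmodule.map (LinearMap.mulLeft K y) := by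
  ext x
  have fixed_iff : τ (x / y) = x / y ↔ τ x = a * x := by
    have hτy0 : τ y ≠ 0 := (map_ne_zero τ).2 hy
    rw [map_div₀, div_eq_div_iff hτy0 hy, hτy, ← mul_assoc, mul_left_inj' hy, mul_comm x]
  rw [mem_ker_toLinearMap_sub_smul_one_iff, ← fixed_iff, ← mem_fixedField_zpowers_iff,
    Submodule.mem_map]
  refine ⟨fun h ↦ ⟨x / y, h, mul_div_cancel₀ x hy⟩, ?_⟩
  rintro ⟨z, hz, rfl⟩
  rwa [LinearMap.mulLeft_apply, mul_div_cancel_left₀ z hy]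

theorem finrank_ker_toLinearMap_sub_smul_one {τ : L ≃ₐ[K] L} {a y : L} (hy : y ≠ 0)
    (hτy : τ y = a * y) :
    finrank K (LinearMap.ker (τ.toLinearMap - a • 1)) = finrank K (fixedField (zpowers τ)) := by
  rw [ker_toLinearMap_sub_smul_one hy hτy]
  exact (Submodule.equivMapOfInjective _ (mul_right_injective₀ hy) _).symm.finrank_eq

theorem finrank_ker_toLinearMap_sub_smul_one_le {τ : L ≃ₐ[K] L} (a : L) :
    finrank K (LinearMap.ker (τ.toLinearMap - a • 1)) ≤ finrank K (fixedField (zpowers τ)) := by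
  obtain hbot | hbot := eq_or_ne (LinearMap.ker (τ.toLinearMap - a • 1)) ⊥
  · rw [hbot, _root_.finrank_bot]
    exact Nat.zero_le _
  obtain ⟨y, hy, hy0⟩ := Submodule.exists_mem_ne_zero_of_ne_bot hbot
  exact (finrank_ker_toLinearMap_sub_smul_one hy0 (mem_ker_toLinearMap_sub_smul_one_iff.1 hy)).le

end Semilinear

section LinearizedPolynomial

variable {K L : Type*} [Field K] [Field L] [Algebra K L]

/-- The endomorphisms induced by the `σ`-linearized polynomials of `σ`-degree less than `k`, that
is, the `L`-span of `1, σ, …, σ ^ (k - 1)`. -/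
def linearizedDegreeLT (σ : L ≃ₐ[K] L) (k : ℕ) : Submodule L (End K L) :=
  Submodule.span L ((σ.toLinearMap ^ ·) '' Set.Iio k)

/-- The endomorphism `f` is induced by some `σ`-linearized polynomial of `σ`-degree exactly `k`.
As `σ` may have finite order, `k` is not determined by `f`. -/
def HasLinearizedDegree (σ : L ≃ₐ[K] L) (f : End K L) (k : ℕ) : Prop :=
  ∃ c : L, c ≠ 0 ∧ f - c • σ.toLinearMap ^ k ∈ linearizedDegreeLT σ k

variable {σ : L ≃ₐ[K] L} {f g : End K L} {j k : ℕ}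

theorem linearizedDegreeLT_mono : Monotone (linearizedDegreeLT σ) := fun _ _ h ↦
  Submodule.span_mono (Set.image_mono (Set.Iio_subset_Iio h))

theorem pow_mem_linearizedDegreeLT (h : j < k) : σ.toLinearMap ^ j ∈ linearizedDegreeLT σ k :=
  Submodule.subset_span ⟨j, h, rfl⟩

theorem one_mem_linearizedDegreeLT (h : 0 < k) : 1 ∈ linearizedDegreeLT σ k :=
  pow_mem_linearizedDegreeLT h

theorem toLinearMap_mul_mem_linearizedDegreeLT (hf : f ∈ linearizedDegreeLT σ k) :
    σ.toLinearMap * f ∈ linearizedDegreeLT σ (k + 1) := by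
  induction hf using Submodule.span_induction with
  | mem _ h =>
    obtain ⟨j, hj, rfl⟩ := h
    simpa only [← pow_succ'] using pow_mem_linearizedDegreeLT (Nat.succ_lt_succ hj)
  | zero => simp
  | add _ _ _ _ hg hh => simpa only [mul_add] using add_mem hg hh
  | smul c g _ hg =>
    simpa using (toLinearMap_pow_mul_smul σ 1 c g).symm ▸ Submodule.smul_mem _ (σ c) hg

theorem pow_succ_eq_pow_mul_sub_add (σ : L ≃ₐ[K] L) (α : L) (k : ℕ) :
    σ.toLinearMap ^ (k + 1) =
      σ.toLinearMap ^ k * (σ.toLinearMap - α • 1) + (σ ^ k) α • σ.toLinearMap ^ k := by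
  rw [mul_sub, toLinearMap_pow_mul_smul, mul_one, pow_succ, sub_add_cancel]

theorem exists_pow_eq_mul_sub_add (σ : L ≃ₐ[K] L) (α : L) (j : ℕ) :
    ∃ g ∈ linearizedDegreeLT σ j, ∃ r : L,
      σ.toLinearMap ^ j = g * (σ.toLinearMap - α • 1) + r • 1 := by
  induction j with
  | zero => exact ⟨0, zero_mem _, 1, by simp⟩
  | succ j ih =>
    obtain ⟨g, hg, r, hgr⟩ := ih
    refine ⟨σ.toLinearMap ^ j + (σ ^ j) α • g, ?_, (σ ^ j) α * r, ?_⟩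
    · exact add_mem (pow_mem_linearizedDegreeLT j.lt_succ_self)
        (Submodule.smul_mem _ _ (linearizedDegreeLT_mono j.le_succ hg))
    · rw [pow_succ_eq_pow_mul_sub_add σ α j, add_mul, smul_mul_assoc, add_assoc, mul_smul,
        ← smul_add, ← hgr]

theorem exists_eq_mul_sub_add (α : L) (hf : f ∈ linearizedDegreeLT σ (k + 1)) :
    ∃ g ∈ linearizedDegreeLT σ k, ∃ r : L, f = g * (σ.toLinearMap - α • 1) + r • 1 := by
  induction hf using Submodule.span_induction with
  | mem _ h =>
    obtain ⟨j, hj, rfl⟩ := h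
    obtain ⟨g, hg, r, hgr⟩ := exists_pow_eq_mul_sub_add σ α j
    exact ⟨g, linearizedDegreeLT_mono (Nat.lt_succ_iff.1 hj) hg, r, hgr⟩
  | zero => exact ⟨0, zero_mem _, 0, by simp⟩
  | add _ _ _ _ hf₁ hf₂ =>
    obtain ⟨g₁, hg₁, r₁, rfl⟩ := hf₁
    obtain ⟨g₂, hg₂, r₂, rfl⟩ := hf₂
    exact ⟨g₁ + g₂, add_mem hg₁ hg₂, r₁ + r₂, by rw [add_mul, add_smul]; abel⟩
  | smul c _ _ hf =>
    obtain ⟨g, hg, r, rfl⟩ := hf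
    exact ⟨c • g, Submodule.smul_mem _ c hg, c * r, by rw [smul_add, smul_mul_assoc, mul_smul]⟩

namespace HasLinearizedDegree

theorem one : HasLinearizedDegree σ 1 0 :=
  ⟨1, one_ne_zero, by simp⟩

theorem add_mem (hf : HasLinearizedDegree σ f k) (hg : g ∈ linearizedDegreeLT σ k) :
    HasLinearizedDegree σ (f + g) k := by
  obtain ⟨c, hc, hfc⟩ := hf
  exact ⟨c, hc, by simpa only [add_sub_right_comm] using Submodule.add_mem _ hfc hg⟩

theorem smul_one_add_smul_mul (hf : HasLinearizedDegree σ f k) (α : L) {β : L} (hβ : β ≠ 0) :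
    HasLinearizedDegree σ ((α • 1 + β • σ.toLinearMap) * f) (k + 1) := by
  obtain ⟨c, hc, hfc⟩ := hf
  have hf_mem : f ∈ linearizedDegreeLT σ (k + 1) := by
    rw [← sub_add_cancel f (c • σ.toLinearMap ^ k)]
    exact Submodule.add_mem _ (linearizedDegreeLT_mono k.le_succ hfc)
      (Submodule.smul_mem _ c (pow_mem_linearizedDegreeLT k.lt_succ_self))
  have decomposition : (α • 1 + β • σ.toLinearMap) * f - (β * σ c) • σ.toLinearMap ^ (k + 1) =
      α • f + β • (σ.toLinearMap * (f - c • σ.toLinearMap ^ k)) := by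
    have hσc := toLinearMap_pow_mul_smul σ 1 c (σ.toLinearMap ^ k)
    simp only [pow_one] at hσc
    rw [add_mul, smul_mul_assoc, one_mul, smul_mul_assoc, mul_sub, hσc, pow_succ', smul_sub,
      mul_smul, add_sub_assoc]
  refine ⟨β * σ c, mul_ne_zero hβ ((map_ne_zero σ).2 hc), decomposition ▸ ?_⟩
  exact Submodule.add_mem _ (Submodule.smul_mem _ α hf_mem)
    (Submodule.smul_mem _ β (toLinearMap_mul_mem_linearizedDegreeLT hfc))

theorem exists_eq_mul_sub (hf : HasLinearizedDegree σ f (k + 1)) {w : L} (hw : w ≠ 0)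
    (hfw : f w = 0) :
    ∃ g, HasLinearizedDegree σ g k ∧ f = g * (σ.toLinearMap - (σ w / w) • 1) := by
  obtain ⟨c, hc, hfc⟩ := hf
  set α := σ w / w
  have hαw : (σ.toLinearMap - α • 1 : End K L) w = 0 := by simp [α, hw]
  obtain ⟨g, hg, r, hgr⟩ := exists_eq_mul_sub_add α <| Submodule.add_mem _ hfc <|
    Submodule.smul_mem _ (c * (σ ^ k) α) (pow_mem_linearizedDegreeLT k.lt_succ_self)
  have division : f = (c • σ.toLinearMap ^ k + g) * (σ.toLinearMap - α • 1) + r • 1 := by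
    rw [add_mul, add_assoc, ← hgr, pow_succ_eq_pow_mul_sub_add σ α k, smul_mul_assoc, smul_add,
      mul_smul]
    abel
  have hr : r = 0 := by
    have := congr($division w)
    simpa [hfw, hαw, hw] using this
  refine ⟨c • σ.toLinearMap ^ k + g, ⟨c, hc, by simpa using hg⟩, ?_⟩
  simpa [hr] using division

theorem finrank_ker_le [FiniteDimensional K L] (hσ : fixedField (zpowers σ) = ⊥)
    (hf : HasLinearizedDegree σ f k) : finrank K (LinearMap.ker f) ≤ k := by
  induction k generalizing f with
  | zero =>
    obtain ⟨c, hc, hfc⟩ := hf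
    have hf_eq : f = c • 1 := by simpa [linearizedDegreeLT, sub_eq_zero] using hfc
    have hker : LinearMap.ker f = ⊥ := LinearMap.ker_eq_bot'.2 fun x hx ↦ by
      simpa [hf_eq, hc] using hx
    simp [hker]
  | succ k ih =>
    obtain hbot | hbot := eq_or_ne (LinearMap.ker f) ⊥
    · rw [hbot, _root_.finrank_bot]
      exact Nat.zero_le _
    obtain ⟨w, hfw, hw⟩ := Submodule.exists_mem_ne_zero_of_ne_bot hbot
    obtain ⟨g, hg, rfl⟩ := hf.exists_eq_mul_sub hw hfw
    refine (finrank_ker_mul_le _ _).trans (add_le_add (ih hg) ?_)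
    refine (finrank_ker_toLinearMap_sub_smul_one_le _).trans_eq ?_
    rw [hσ, IntermediateField.finrank_bot]

theorem ne_zero [FiniteDimensional K L] (hσ : fixedField (zpowers σ) = ⊥)
    (hf : HasLinearizedDegree σ f k) (hk : k < finrank K L) : f ≠ 0 := by
  rintro rfl
  have hle := hf.finrank_ker_le hσ
  rw [LinearMap.ker_zero, finrank_top] at hle
  exact hk.not_ge hle

theorem geom_sum {a : L} (ha : a ≠ 0) (k : ℕ) :
    HasLinearizedDegree σ (∑ i ∈ Finset.range (k + 1), (a • σ.toLinearMap) ^ i) k := by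
  induction k with
  | zero => simpa using one
  | succ k ih =>
    rw [geom_sum_succ]
    simpa using (ih.smul_one_add_smul_mul 0 ha).add_mem (one_mem_linearizedDegreeLT k.succ_pos)

end HasLinearizedDegree

end LinearizedPolynomial

section CyclicExtension

variable {K L : Type*} [Field K] [Field L] [Algebra K L] [FiniteDimensional K L] [IsGalois K L]
  {σ : L ≃ₐ[K] L}

theorem orderOf_eq_finrank_of_zpowers_eq_top (hσ : zpowers σ = ⊤) : orderOf σ = finrank K L :=
  (orderOf_eq_card_of_zpowers_eq_top hσ).trans (IsGalois.card_aut_eq_finrank K L)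

theorem fixedField_zpowers_eq_bot (hσ : zpowers σ = ⊤) : fixedField (zpowers σ) = ⊥ := by
  rw [hσ, IsGalois.fixedField_top]

theorem finrank_fixedField_zpowers_pow (hσ : zpowers σ = ⊤) {d : ℕ} (hd : d ∣ finrank K L) :
    finrank K (fixedField (zpowers (σ ^ d))) = d := by
  have hd0 : 0 < d := Nat.pos_of_dvd_of_pos hd finrank_pos
  have horder := orderOf_eq_finrank_of_zpowers_eq_top hσ
  have hrel : finrank (fixedField (zpowers (σ ^ d))) L = finrank K L / d := by
    rw [finrank_fixedField_eq_card, Nat.card_zpowers, orderOf_pow_of_dvd hd0.ne' (horder ▸ hd),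
      horder]
  have htower := finrank_mul_finrank K (fixedField (zpowers (σ ^ d))) L
  rw [hrel] at htower
  exact Nat.eq_of_mul_eq_mul_right (Nat.div_pos (Nat.le_of_dvd finrank_pos hd) hd0)
    (htower.trans (Nat.mul_div_cancel' hd).symm)

theorem algebraMap_norm_eq_prod_pow (hσ : zpowers σ = ⊤) (x : L) :
    algebraMap K L (Algebra.norm K x) = ∏ i ∈ Finset.range (finrank K L), (σ ^ i) x := by
  classical
  have image_pow : (Finset.range (orderOf σ)).image (σ ^ ·) = Finset.univ :=
    IsCyclic.image_range_orderOf fun τ ↦ hσ ▸ mem_top τ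
  have injOn_pow : Set.InjOn (σ ^ ·) (Finset.range (orderOf σ)) := by
    simpa only [Finset.coe_range] using pow_injOn_Iio_orderOf
  rw [Algebra.norm_eq_prod_automorphisms, ← image_pow, Finset.prod_image injOn_pow,
    orderOf_eq_finrank_of_zpowers_eq_top hσ]

theorem inv_smul_toLinearMap_pow_finrank (hσ : zpowers σ = ⊤) {a : L} (ha : Algebra.norm K a = 1) :
    (a⁻¹ • σ.toLinearMap) ^ finrank K L = 1 := by
  have hσ_pow : σ ^ finrank K L = 1 :=
    orderOf_eq_finrank_of_zpowers_eq_top hσ ▸ pow_orderOf_eq_one σ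
  ext x
  rw [smul_toLinearMap_pow, ← algebraMap_norm_eq_prod_pow hσ, Algebra.norm_inv, ha]
  simp [toLinearMap_pow_apply, hσ_pow]

/-- Hilbert's Theorem 90. The version in Mathlib, `groupCohomology.exists_div_of_norm_eq_one`, is
restricted to fields in `Type`. -/
theorem exists_apply_eq_mul_of_norm_eq_one (hσ : zpowers σ = ⊤) {a : L}
    (ha : Algebra.norm K a = 1) : ∃ y ≠ 0, σ y = a * y := by
  have ha0 : a ≠ 0 := Algebra.norm_ne_zero_iff.1 (ha ▸ one_ne_zero)
  set T : End K L := a⁻¹ • σ.toLinearMap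
  set G : End K L := ∑ i ∈ Finset.range (finrank K L), T ^ i
  have hTG : T * G = G := by
    have telescope : (T - 1) * G = T ^ finrank K L - 1 := mul_geom_sum T (finrank K L)
    rwa [inv_smul_toLinearMap_pow_finrank hσ ha, sub_self, sub_mul, one_mul, sub_eq_zero]
      at telescope
  have hG : G ≠ 0 := by
    obtain ⟨k, hk⟩ : ∃ k, finrank K L = k + 1 := Nat.exists_eq_succ_of_ne_zero finrank_pos.ne'
    have hdeg : HasLinearizedDegree σ G k := by
      simpa only [G, hk] using HasLinearizedDegree.geom_sum (inv_ne_zero ha0) k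
    exact hdeg.ne_zero (fixedField_zpowers_eq_bot hσ) (by omega)
  obtain ⟨z, hz⟩ := DFunLike.ne_iff.1 hG
  have hσG : a⁻¹ * σ (G z) = G z := congr($hTG z)
  exact ⟨G z, hz, (inv_mul_eq_iff_eq_mul₀ ha0).1 hσG⟩

theorem norm_eq_one_iff_exists_apply_eq_mul (hσ : zpowers σ = ⊤) {a : L} :
    Algebra.norm K a = 1 ↔ ∃ y ≠ 0, σ y = a * y := by
  refine ⟨exists_apply_eq_mul_of_norm_eq_one hσ, ?_⟩
  rintro ⟨y, hy, hσy⟩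
  have norm_mul : Algebra.norm K a * Algebra.norm K y = Algebra.norm K y := by
    rw [← map_mul, ← hσy, Algebra.norm_eq_of_algEquiv]
  exact (mul_eq_right₀ (Algebra.norm_ne_zero_iff.2 hy)).1 norm_mul

theorem norm_fixedField_zpowers_eq_one_iff (τ : L ≃ₐ[K] L) {a : L} :
    Algebra.norm (fixedField (zpowers τ)) a = 1 ↔ ∃ y ≠ 0, τ y = a * y := by
  let e := subgroupEquivAlgEquiv (zpowers τ)
  have e_zpowers : zpowers (e ⟨τ, mem_zpowers τ⟩) = ⊤ := by
    refine eq_top_iff' _ |>.2 fun ρ ↦ ?_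
    obtain ⟨k, hk⟩ := mem_zpowers_iff.1 (e.symm ρ).2
    refine mem_zpowers_iff.2 ⟨k, ?_⟩
    rw [← map_zpow, ← e.eq_symm_apply]
    exact Subtype.ext hk
  exact norm_eq_one_iff_exists_apply_eq_mul e_zpowers

end CyclicExtension

section Trinomial

variable {K L : Type*} [Field K] [Field L] [Algebra K L]

/-- The endomorphism induced by the `σ`-linearized trinomial `a x + b σ(x) - σ^d(x)`. -/
def linearizedTrinomial (σ : L ≃ₐ[K] L) (d : ℕ) (a b : L) : End K L :=
  LinearMap.mulLeft K a + LinearMap.mulLeft K b ∘ₗ σ.toLinearMap - (σ ^ d : L ≃ₐ[K] L).toLinearMap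

variable {σ : L ≃ₐ[K] L} {d : ℕ} {a b : L}

theorem mem_ker_linearizedTrinomial_iff {x : L} :
    x ∈ LinearMap.ker (linearizedTrinomial σ d a b) ↔ (σ ^ d) x = a * x + b * σ x :=
  sub_eq_zero.trans eq_comm

theorem ker_linearizedTrinomial_zero :
    LinearMap.ker (linearizedTrinomial σ d a 0) =
      LinearMap.ker ((σ ^ d).toLinearMap - a • 1) := by
  ext x
  rw [mem_ker_linearizedTrinomial_iff, mem_ker_toLinearMap_sub_smul_one_iff, zero_mul, add_zero]

theorem exists_hasLinearizedDegree_eqOn_ker (hb : b ≠ 0) (i : ℕ) :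
    ∃ f, HasLinearizedDegree σ f i ∧
      Set.EqOn f ⇑(σ ^ (d * i)) (LinearMap.ker (linearizedTrinomial σ d a b)) := by
  induction i with
  | zero => exact ⟨1, .one, fun x _ ↦ by simp⟩
  | succ i ih =>
    obtain ⟨f, hf, hfx⟩ := ih
    set τ := σ ^ (d * i) with hτ
    refine ⟨(τ a • 1 + τ b • σ.toLinearMap) * f,
      hf.smul_one_add_smul_mul _ ((map_ne_zero τ).2 hb), fun x hx ↦ ?_⟩
    have hστ : σ (τ x) = τ (σ x) := by
      rw [hτ, ← AlgEquiv.mul_apply, ← AlgEquiv.mul_apply, ← pow_succ, ← pow_succ']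
    calc
      τ a * f x + τ b * σ (f x) = τ (a * x + b * σ x) := by
        rw [hfx hx, hστ, map_add, map_mul, map_mul]
      _ = τ ((σ ^ d) x) := by rw [mem_ker_linearizedTrinomial_iff.1 hx]
      _ = (σ ^ (d * (i + 1))) x := by rw [hτ, ← AlgEquiv.mul_apply, ← pow_add, Nat.mul_succ]

variable [FiniteDimensional K L]

theorem finrank_ker_linearizedTrinomial_le (hσ : fixedField (zpowers σ) = ⊥) (hb : b ≠ 0)
    {m : ℕ} (hm : 0 < m) (hσdm : σ ^ (d * m) = 1) :
    finrank K (LinearMap.ker (linearizedTrinomial σ d a b)) ≤ m := by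
  obtain ⟨f, hf, hfx⟩ := exists_hasLinearizedDegree_eqOn_ker (σ := σ) (d := d) (a := a) hb m
  have hdeg : HasLinearizedDegree σ (f + -1) m :=
    hf.add_mem (neg_mem (one_mem_linearizedDegreeLT hm))
  have ker_le : LinearMap.ker (linearizedTrinomial σ d a b) ≤ LinearMap.ker (f + -1) := by
    intro x hx
    simp [hfx hx, hσdm]
  exact (Submodule.finrank_mono ker_le).trans (hdeg.finrank_ker_le hσ)

variable [IsGalois K L]

theorem finrank_ker_linearizedTrinomial_zero_eq_iff (hσ : zpowers σ = ⊤) (hd : d ∣ finrank K L) :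
    finrank K (LinearMap.ker (linearizedTrinomial σ d a 0)) = d ↔
      Algebra.norm (fixedField (zpowers (σ ^ d))) a = 1 := by
  rw [norm_fixedField_zpowers_eq_one_iff, ker_linearizedTrinomial_zero]
  constructor
  · intro hdim
    have hd0 : 0 < d := Nat.pos_of_dvd_of_pos hd finrank_pos
    have hne : LinearMap.ker ((σ ^ d).toLinearMap - a • 1) ≠ ⊥ := by
      intro hbot
      rw [hbot, _root_.finrank_bot] at hdim
      exact hd0.ne hdim
    obtain ⟨y, hy, hy0⟩ := Submodule.exists_mem_ne_zero_of_ne_bot hne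
    exact ⟨y, hy0, mem_ker_toLinearMap_sub_smul_one_iff.1 hy⟩
  · rintro ⟨y, hy0, hy⟩
    rw [finrank_ker_toLinearMap_sub_smul_one hy0 hy, finrank_fixedField_zpowers_pow hσ hd]

theorem eq_zero_of_finrank_ker_linearizedTrinomial_eq (hσ : zpowers σ = ⊤) (hd : d ∣ finrank K L)
    (hdeg : finrank K L ≤ d * (d - 1))
    (hdim : finrank K (LinearMap.ker (linearizedTrinomial σ d a b)) = d) : b = 0 := by
  by_contra hb
  have hpos : 0 < finrank K L := finrank_pos
  obtain ⟨m, hm⟩ := hd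
  have hm0 : 0 < m := Nat.pos_of_mul_pos_left (hm ▸ hpos)
  have hd0 : 0 < d := Nat.pos_of_mul_pos_right (hm ▸ hpos)
  have hmd : m ≤ d - 1 := Nat.le_of_mul_le_mul_left (hm ▸ hdeg) hd0
  have hσdm : σ ^ (d * m) = 1 := by
    rw [← hm, ← orderOf_eq_finrank_of_zpowers_eq_top hσ, pow_orderOf_eq_one]
  have hle := finrank_ker_linearizedTrinomial_le (a := a) (fixedField_zpowers_eq_bot hσ) hb hm0 hσdm
  omega

theorem stmt_1_general (hσ : zpowers σ = ⊤) (hd : d ∣ finrank K L)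
    (hdeg : finrank K L ≤ d * (d - 1)) :
    finrank K (LinearMap.ker (linearizedTrinomial σ d a b)) = d ↔
      b = 0 ∧ Algebra.norm (fixedField (zpowers (σ ^ d))) a = 1 := by
  constructor
  · intro hdim
    obtain rfl := eq_zero_of_finrank_ker_linearizedTrinomial_eq hσ hd hdeg hdim
    exact ⟨rfl, (finrank_ker_linearizedTrinomial_zero_eq_iff hσ hd).1 hdim⟩
  · rintro ⟨rfl, ha⟩
    exact (finrank_ker_linearizedTrinomial_zero_eq_iff hσ hd).2 ha

end Trinomial

section FiniteField

variable {K L : Type*} [Field K] [Field L] [Algebra K L] [Finite L]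

theorem zpowers_eq_top_of_apply_eq_pow [Fintype K] {σ : L ≃ₐ[K] L} {s : ℕ}
    (hσ : ∀ x, σ x = x ^ Fintype.card K ^ s) (hs : s.Coprime (finrank K L)) :
    zpowers σ = ⊤ := by
  have hσ_frob : σ = FiniteField.frobeniusAlgEquivOfAlgebraic K L ^ s := by
    ext x
    rw [hσ, AlgEquiv.coe_pow, FiniteField.coe_frobeniusAlgEquivOfAlgebraic_iterate]
  have hfrob := FiniteField.orderOf_frobeniusAlgEquivOfAlgebraic K L
  apply eq_top_of_card_eq
  rw [Nat.card_zpowers, IsGalois.card_aut_eq_finrank, hσ_frob, ← hfrob]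
  exact Nat.Coprime.orderOf_pow (hfrob ▸ hs.symm)

theorem norm_eq_one_iff_pow_eq_one (F : IntermediateField K L) {a : L} :
    Algebra.norm F a = 1 ↔
      a ^ ((Nat.card K ^ finrank K L - 1) / (Nat.card K ^ finrank K F - 1)) = 1 := by
  rw [← Module.natCard_eq_pow_finrank, ← Module.natCard_eq_pow_finrank,
    ← FiniteField.algebraMap_norm_eq_pow, map_eq_one_iff _ (algebraMap F L).injective]

end FiniteField

/-- With `σ : x ↦ x^{q^s}`, `gcd(s,n)=1`, `d ≥ 3`, `n ≤ d(d-1)` and `d ∣ n`: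
the `F_q`-dimension of the kernel of `x ↦ a·x + b·σ(x) − σ^d(x)` equals `d` if and only if
`b = 0` and `N_{q^n/q^d}(a) = a^{(q^n-1)/(q^d-1)} = 1`. -/
theorem stmt_1 (p q : ℕ) (hp : p.Prime) (hq : ∃ m : ℕ, 0 < m ∧ q = p ^ m)
    (K L : Type*) [Field K] [Field L] [Fintype K] [Fintype L] [Algebra K L]
    (hcardK : Fintype.card K = q)
    (n : ℕ) (hn : 0 < n) (hcardL : Fintype.card L = q ^ n)
    (s : ℕ) (hs : 0 < s) (hsn : Nat.gcd s n = 1)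
    (σ : L ≃ₐ[K] L) (hσ : ∀ x : L, σ x = x ^ q ^ s)
    (d : ℕ) (hd : 3 ≤ d) (hnd : n ≤ d * (d - 1)) (hdvd : d ∣ n)
    (a b : L) :
    Module.finrank K
      (LinearMap.ker
        (LinearMap.mulLeft K a + LinearMap.mulLeft K b ∘ₗ σ.toLinearMap
          - (σ ^ d : L ≃ₐ[K] L).toLinearMap)) = d
      ↔ b = 0 ∧ a ^ ((q ^ n - 1) / (q ^ d - 1)) = 1 := by
  have hfinrank : Module.finrank K L = n := by
    have hcard : q ^ Module.finrank K L = q ^ n := by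
      rw [← hcardL, ← hcardK, ← Module.card_eq_pow_finrank]
    exact Nat.pow_right_injective (hcardK ▸ Fintype.one_lt_card) hcard
  have hzpowers : zpowers σ = ⊤ :=
    zpowers_eq_top_of_apply_eq_pow (hcardK.symm ▸ hσ) (hfinrank.symm ▸ hsn)
  have hdvd_finrank : d ∣ Module.finrank K L := hfinrank.symm ▸ hdvd
  have hnorm := norm_eq_one_iff_pow_eq_one (fixedField (zpowers (σ ^ d))) (a := a)
  rw [finrank_fixedField_zpowers_pow hzpowers hdvd_finrank, Nat.card_eq_fintype_card, hcardK,
    hfinrank] at hnorm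
  rw [← hnorm]
  exact stmt_1_general hzpowers hdvd_finrank (hfinrank.symm ▸ hnd)
end

section
/- Let d, n, s be positive integers with gcd(s,n)=1, d ≥ 3 and n = d(d−1)+1. Then for a, b ∈ F_{q^n}, the F_q-dimension of the kernel of a·x + b·x^σ − x^{σ^d} equals d if and only if the following three conditions hold: N_{q^n/q}(a) = (−1)^{d−1}; b = −∏_{i=0}^{d−1} σ^{id+1}(a); and d−1 is a power of the characteristic p of F_q. -/
/-!
Put `n = [L : K]` and `ε = (-1) ^ (d - 1)`, and let `V` be the kernel of the trinomial, on which
`σ ^ d = a + b * σ`. By the Moore determinant, no nonzero `σ`-polynomial of degree less than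
`dim V` vanishes on `V`.

If `dim V = d`, comparing the Moore determinant of a basis of `V` with its image under `σ` gives
the norm of `a`, and reducing `σ ^ n = 1` modulo `σ ^ d = a + b * σ` gives `b`. Conversely, for
such `a` and `b`, Hilbert's Theorem 90 for the generator `σ ^ d` provides `g` with
`a * g = ε * (σ ^ d) g` and `b * σ g = -(σ ^ d) g`, so that multiplication by `g` reduces the
problem to the constant coefficients `(ε, -1)`. There the kernel has dimension `d` if and only if
`X ^ d + X - ε` divides `X ^ n - 1`, which amounts to `(X - ε) ^ (d - 1) = X ^ (d - 1) + 1`, that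
is, to the vanishing of the inner binomial coefficients of `d - 1` in `K`.
-/

namespace SigmaTrinomial

open Finset Module Polynomial

section Moore

variable {K L : Type*} [Field K] [Field L] [Algebra K L] {σ : Gal(L/K)}

/-- The Moore matrix of `x` with respect to `σ`, whose `i`-th row is `σ ^ i` applied to `x`. Its
determinant detects linear independence of `x` over the fixed field of `σ`. -/
def moore (σ : Gal(L/K)) {m : ℕ} (x : Fin m → L) : Matrix (Fin m) (Fin m) L :=
  .of fun i j => (σ ^ (i : ℕ)) (x j)

theorem pow_succ_apply (i : ℕ) (x : L) : (σ ^ (i + 1)) x = σ ((σ ^ i) x) := by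
  rw [pow_succ', AlgEquiv.mul_apply]

theorem sum_succ_map_sub_mul_pow_apply_eq_zero {m i : ℕ} {x c : Fin (m + 1) → L} (hc0 : c 0 = 1)
    (hi : ∑ j, c j * (σ ^ i) (x j) = 0) (hi_succ : ∑ j, c j * (σ ^ (i + 1)) (x j) = 0) :
    ∑ j : Fin m, (σ (c j.succ) - c j.succ) * (σ ^ i) (σ (x j.succ)) = 0 := by
  have hσi : ∑ j, σ (c j) * (σ ^ (i + 1)) (x j) = 0 := by
    simpa only [map_sum, map_mul, map_zero, pow_succ_apply] using congrArg σ hi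
  rw [Fin.sum_univ_succ, hc0, map_one] at hσi
  rw [Fin.sum_univ_succ, hc0] at hi_succ
  simp only [sub_mul, sum_sub_distrib, ← AlgEquiv.mul_apply, ← pow_succ]
  linear_combination hσi - hi_succ

-- Normalise `c 0 = 1`; subtracting consecutive equations then shows that `σ` fixes every `c j`,
-- so that the equation `i = 0` is a linear relation over `K`.
theorem eq_zero_of_forall_sum_mul_pow_apply_eq_zero
    (hfix : ∀ x, σ x = x → x ∈ Set.range (algebraMap K L)) {m : ℕ} {x c : Fin m → L}
    (hx : LinearIndependent K x) (hc : ∀ i < m, ∑ j, c j * (σ ^ i) (x j) = 0) : c = 0 := by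
  induction m with
  | zero => exact Subsingleton.elim _ _
  | succ m ih =>
    have hx_tail : LinearIndependent K (Fin.tail x) := hx.comp _ (Fin.succ_injective m)
    suffices hc0 : c 0 = 0 by
      have hc_tail : Fin.tail c = 0 := ih hx_tail fun i hi => by
        simpa [Fin.sum_univ_succ, hc0, Fin.tail] using hc i (by lia)
      rw [← Fin.cons_self_tail c, hc0, hc_tail]
      exact Matrix.cons_zero_zero
    by_contra hc0
    set k : Fin (m + 1) → L := fun j => c j / c 0
    have hk : ∀ i < m + 1, ∑ j, k j * (σ ^ i) (x j) = 0 := fun i hi => by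
      simp only [k, div_mul_eq_mul_div, ← sum_div, hc i hi, zero_div]
    have hk0 : k 0 = 1 := div_self hc0
    have hσx_tail : LinearIndependent K (σ ∘ Fin.tail x) :=
      hx_tail.map' σ.toLinearMap (LinearMap.ker_eq_bot.2 σ.injective)
    have hk_fixed : (fun j : Fin m => σ (k j.succ) - k j.succ) = 0 := ih hσx_tail fun i hi =>
      sum_succ_map_sub_mul_pow_apply_eq_zero hk0 (hk i (by lia)) (hk (i + 1) (by lia))
    have hk_mem : ∀ j, k j ∈ Set.range (algebraMap K L) := Fin.cases ⟨1, by rw [map_one, hk0]⟩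
      fun j => hfix _ (sub_eq_zero.1 (congrFun hk_fixed j))
    choose r hr using hk_mem
    have hr0 : r 0 = 0 := Fintype.linearIndependent_iff.1 hx r
      (by simpa [Algebra.smul_def, hr] using hk 0 m.succ_pos) 0
    rw [← hr, hr0, map_zero] at hk0
    exact zero_ne_one hk0

theorem det_moore_ne_zero (hfix : ∀ x, σ x = x → x ∈ Set.range (algebraMap K L)) {m : ℕ}
    {x : Fin m → L} (hx : LinearIndependent K x) : (moore σ x).det ≠ 0 := by
  rw [Ne, ← Matrix.exists_mulVec_eq_zero_iff]
  rintro ⟨c, hc, hMc⟩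
  refine hc (eq_zero_of_forall_sum_mul_pow_apply_eq_zero hfix hx fun i hi => ?_)
  simpa [Matrix.mulVec, dotProduct, moore, mul_comm] using congrFun hMc ⟨i, hi⟩

theorem eq_zero_of_forall_mem_sum_mul_pow_apply_eq_zero
    (hfix : ∀ x, σ x = x → x ∈ Set.range (algebraMap K L)) {V : Submodule K L} {m : ℕ}
    (hm : m ≤ finrank K V) {c : ℕ → L}
    (hc : ∀ x ∈ V, ∑ i ∈ range m, c i * (σ ^ i) x = 0) {i : ℕ} (hi : i < m) : c i = 0 := by
  obtain ⟨x, hx⟩ := exists_linearIndependent_of_le_finrank hm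
  have hdet := det_moore_ne_zero hfix (hx.map' V.subtype V.ker_subtype)
  refine congrFun (Matrix.eq_zero_of_vecMul_eq_zero hdet (v := fun i : Fin m => c i) ?_) ⟨i, hi⟩
  ext j
  simpa [Matrix.vecMul, dotProduct, moore, sum_range] using hc (x j) (x j).2

theorem det_map_moore {m : ℕ} {x : Fin (m + 1) → L} {c : Fin (m + 1) → L}
    (hc : ∀ j, (σ ^ (m + 1)) (x j) = ∑ i, c i * (σ ^ (i : ℕ)) (x j)) :
    σ (moore σ x).det = (-1) ^ m * (c 0 * (moore σ x).det) := by
  have hmap : σ.mapMatrix (moore σ x) = ((moore σ x).updateRow 0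
      (∑ i, c i • moore σ x i)).submatrix (finRotate (m + 1)) id := by
    ext i j
    induction i using Fin.lastCases with
    | last => simp [moore, ← hc, -AlgEquiv.coe_pow, pow_succ_apply]
    | cast i => simp [moore, -AlgEquiv.coe_pow, pow_succ_apply]
  rw [AlgEquiv.map_det, hmap, Matrix.det_permute, Matrix.det_updateRow_sum, sign_finRotate]
  simp

theorem norm_eq_neg_one_pow_of_finrank_eq [FiniteDimensional K L]
    (hfix : ∀ x, σ x = x → x ∈ Set.range (algebraMap K L)) {V : Submodule K L} {m : ℕ}
    (hV : finrank K V = m + 1) {c : Fin (m + 1) → L}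
    (hc : ∀ x ∈ V, (σ ^ (m + 1)) x = ∑ i, c i * (σ ^ (i : ℕ)) x) :
    Algebra.norm K (c 0) = (-1) ^ (m * finrank K L) := by
  obtain ⟨x, hx⟩ := exists_linearIndependent_of_le_finrank hV.ge
  have hdet := det_moore_ne_zero hfix (hx.map' V.subtype V.ker_subtype)
  have hnorm := congrArg (Algebra.norm K) (det_map_moore fun j => hc (x j) (x j).2)
  have hsign : Algebra.norm K ((-1 : L) ^ m) = (-1) ^ (m * finrank K L) := by
    simpa [pow_mul] using Algebra.norm_algebraMap (S := L) ((-1 : K) ^ m)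
  rw [Algebra.norm_eq_of_algEquiv, map_mul, map_mul, hsign, ← mul_assoc] at hnorm
  have hmul : (-1) ^ (m * finrank K L) * Algebra.norm K (c 0) = 1 :=
    (left_eq_mul₀ (Algebra.norm_ne_zero_iff.2 hdet)).1 (hnorm.trans (mul_comm _ _))
  rw [eq_inv_of_mul_eq_one_right hmul, ← inv_pow, inv_neg_one]

end Moore

section Cyclic

variable {K L : Type*} [Field K] [Field L] [Algebra K L] [FiniteDimensional K L] [IsGalois K L]
  {σ : Gal(L/K)}

theorem orderOf_eq_finrank (hσ : Subgroup.zpowers σ = ⊤) : orderOf σ = finrank K L := by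
  rw [orderOf_eq_card_of_zpowers_eq_top hσ, IsGalois.card_aut_eq_finrank]

theorem pow_finrank_eq_one (hσ : Subgroup.zpowers σ = ⊤) : σ ^ finrank K L = 1 := by
  rw [← orderOf_eq_finrank hσ, pow_orderOf_eq_one]

theorem mem_range_algebraMap_of_apply_eq_self (hσ : Subgroup.zpowers σ = ⊤) {x : L}
    (hx : σ x = x) : x ∈ Set.range (algebraMap K L) := by
  have hstab : Subgroup.zpowers σ ≤ MulAction.stabilizer Gal(L/K) x :=
    (Subgroup.zpowers_le).2 hx
  exact (IsGalois.mem_range_algebraMap_iff_fixed x).2 fun f => hstab (hσ ▸ Subgroup.mem_top f)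

theorem zpowers_pow_eq_top (hσ : Subgroup.zpowers σ = ⊤) {k : ℕ}
    (hk : k.Coprime (finrank K L)) : Subgroup.zpowers (σ ^ k) = ⊤ := by
  rw [eq_top_iff, ← hσ, Subgroup.zpowers_le, mem_zpowers_pow_iff, orderOf_eq_finrank hσ]
  exact hk

theorem algebraMap_norm_eq_prod_pow_apply (hσ : Subgroup.zpowers σ = ⊤) (x : L) :
    algebraMap K L (Algebra.norm K x) = ∏ i ∈ range (finrank K L), (σ ^ i) x := by
  classical
  have himage : (range (orderOf σ)).image (σ ^ ·) = univ :=
    IsCyclic.image_range_orderOf fun f => hσ ▸ Subgroup.mem_top f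
  rw [Algebra.norm_eq_prod_automorphisms, ← himage, prod_image, orderOf_eq_finrank hσ]
  simpa using pow_injOn_Iio_orderOf (x := σ)

-- Hilbert's Theorem 90; `groupCohomology.exists_div_of_norm_eq_one` requires `K L : Type`.
theorem exists_mul_apply_eq_self_of_norm_eq_one (hσ : Subgroup.zpowers σ = ⊤) {c : L}
    (hc : Algebra.norm K c = 1) : ∃ g ≠ 0, c * σ g = g := by
  set n := finrank K L
  let P : ℕ → L := fun i => ∏ j ∈ range i, (σ ^ j) c
  have hPn : P n = 1 := by
    rw [← map_one (algebraMap K L), ← hc, algebraMap_norm_eq_prod_pow_apply hσ]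
  obtain ⟨θ, hθ⟩ : ∃ θ, ∑ i ∈ range n, P i * (σ ^ i) θ ≠ 0 := by
    by_contra! hzero
    have hP0 := eq_zero_of_forall_mem_sum_mul_pow_apply_eq_zero
      (fun _ => mem_range_algebraMap_of_apply_eq_self hσ) (V := ⊤) (finrank_top K L).ge (c := P)
      (fun x _ => hzero x) finrank_pos
    simp [P] at hP0
  have hstep (i : ℕ) : c * σ (P i * (σ ^ i) θ) = P (i + 1) * (σ ^ (i + 1)) θ := by
    simp only [P, prod_range_succ', map_mul, map_prod, pow_succ_apply, pow_zero,
      AlgEquiv.one_apply]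
    ring
  refine ⟨_, hθ, ?_⟩
  have hshift := sum_range_succ' (fun i => P i * (σ ^ i) θ) n
  rw [sum_range_succ, hPn, pow_finrank_eq_one hσ] at hshift
  rw [map_sum, mul_sum, sum_congr rfl fun i _ => hstep i]
  simpa [P] using hshift.symm

end Cyclic

section ConstantCoefficients

variable {K L : Type*} [Field K] [Field L] [Algebra K L] {σ : Gal(L/K)}

theorem toLinearMap_pow_apply (i : ℕ) (x : L) : (σ.toLinearMap ^ i) x = (σ ^ i) x :=
  (LinearMap.congr_fun (map_pow (AlgEquiv.toLinearMapHom K L) σ i) x).symm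

theorem finrank_ker_aeval_le_natDegree (hfix : ∀ x, σ x = x → x ∈ Set.range (algebraMap K L))
    {P : K[X]} (hP : P ≠ 0) : finrank K (aeval σ.toLinearMap P).ker ≤ P.natDegree := by
  by_contra! hlt
  have hlead := eq_zero_of_forall_mem_sum_mul_pow_apply_eq_zero hfix hlt
    (c := fun i => algebraMap K L (P.coeff i))
    (fun x hx => by
      rw [← LinearMap.mem_ker.1 hx, aeval_eq_sum_range, LinearMap.sum_apply]
      refine sum_congr rfl fun i _ => ?_
      rw [LinearMap.smul_apply, toLinearMap_pow_apply, Algebra.smul_def])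
    (Nat.lt_succ_self _)
  exact hP (leadingCoeff_eq_zero.1 ((map_eq_zero _).1 hlead))

theorem aeval_X_pow_finrank_sub_one [FiniteDimensional K L] [IsGalois K L]
    (hσ : Subgroup.zpowers σ = ⊤) : aeval σ.toLinearMap (X ^ finrank K L - 1 : K[X]) = 0 := by
  ext x
  simp [toLinearMap_pow_apply, pow_finrank_eq_one hσ, -AlgEquiv.coe_pow]

theorem dvd_X_pow_finrank_sub_one_of_finrank_ker_aeval [FiniteDimensional K L] [IsGalois K L]
    (hσ : Subgroup.zpowers σ = ⊤) {P : K[X]} (hP : P ≠ 0)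
    (hker : finrank K (aeval σ.toLinearMap P).ker = P.natDegree) :
    P ∣ X ^ finrank K L - 1 := by
  by_contra hdvd
  set R := (X ^ finrank K L - 1 : K[X]) % P with hR
  have hR0 : R ≠ 0 := mt EuclideanDomain.mod_eq_zero.1 hdvd
  have hle : (aeval σ.toLinearMap P).ker ≤ (aeval σ.toLinearMap R).ker := fun x hx => by
    rw [LinearMap.mem_ker] at hx ⊢
    rw [hR, EuclideanDomain.mod_eq_sub_mul_div, map_sub, aeval_X_pow_finrank_sub_one hσ, mul_comm,
      map_mul]
    simp [hx]
  have hker_le : finrank K (aeval σ.toLinearMap P).ker ≤ R.natDegree :=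
    (Submodule.finrank_mono hle).trans <| finrank_ker_aeval_le_natDegree
      (fun _ => mem_range_algebraMap_of_apply_eq_self hσ) hR0
  have hlt := natDegree_lt_natDegree hR0 (degree_mod_lt (X ^ finrank K L - 1) hP)
  lia

theorem finrank_ker_aeval_eq_natDegree_of_dvd [FiniteDimensional K L] [IsGalois K L]
    (hσ : Subgroup.zpowers σ = ⊤) {P : K[X]} (hdvd : P ∣ X ^ finrank K L - 1) :
    finrank K (aeval σ.toLinearMap P).ker = P.natDegree := by
  have hfix (x : L) := mem_range_algebraMap_of_apply_eq_self hσ (x := x)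
  obtain ⟨Q, hQ⟩ := hdvd
  have hPQ : P * Q ≠ 0 := hQ ▸ (monic_X_pow_sub_C (1 : K) finrank_pos.ne').ne_zero
  have hP := left_ne_zero_of_mul hPQ
  have hQ0 := right_ne_zero_of_mul hPQ
  have hdeg : P.natDegree + Q.natDegree = finrank K L := by
    rw [← natDegree_mul hP hQ0, ← hQ, ← map_one C, natDegree_X_pow_sub_C]
  have hle : (aeval σ.toLinearMap P).range ≤ (aeval σ.toLinearMap Q).ker := by
    rw [LinearMap.range_le_ker_iff, ← Module.End.mul_eq_comp, ← map_mul, mul_comm, ← hQ,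
      aeval_X_pow_finrank_sub_one hσ]
  have hrange : finrank K (aeval σ.toLinearMap P).range ≤ Q.natDegree :=
    (Submodule.finrank_mono hle).trans (finrank_ker_aeval_le_natDegree hfix hQ0)
  have hker := finrank_ker_aeval_le_natDegree hfix hP
  have hrank := (aeval σ.toLinearMap P).finrank_range_add_finrank_ker
  lia

theorem finrank_ker_aeval_eq_natDegree_iff_dvd [FiniteDimensional K L] [IsGalois K L]
    (hσ : Subgroup.zpowers σ = ⊤) {P : K[X]} (hP : P ≠ 0) :
    finrank K (aeval σ.toLinearMap P).ker = P.natDegree ↔ P ∣ X ^ finrank K L - 1 :=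
  ⟨dvd_X_pow_finrank_sub_one_of_finrank_ker_aeval hσ hP, finrank_ker_aeval_eq_natDegree_of_dvd hσ⟩

end ConstantCoefficients

section Divisibility

variable {K : Type*} [Field K]

theorem exists_eq_expChar_pow_of_choose_eq_zero (p : ℕ) [ExpChar K p] {e : ℕ} (he : 0 < e)
    (h : ∀ i, 0 < i → i < e → (e.choose i : K) = 0) : ∃ m, e = p ^ m := by
  rcases ‹ExpChar K p› with _ | hp
  · refine ⟨0, ?_⟩
    by_contra hne
    simpa [he.ne'] using h 1 one_pos (by lia)
  · have := Fact.mk hp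
    refine ⟨_, Choose.eq_pow_multiplicity_of_choose_modEq_zero_nat he fun i hi => ?_⟩
    rw [mem_Icc] at hi
    exact Nat.modEq_zero_iff_dvd.2 ((CharP.cast_eq_zero_iff K p _).1 (h i (by lia) (by lia)))

theorem X_sub_pow_eq_iff_exists_eq_expChar_pow (p : ℕ) [ExpChar K p] {e : ℕ} (he : 0 < e) :
    (X - (-1) ^ e : K[X]) ^ e = X ^ e + 1 ↔ ∃ m, e = p ^ m := by
  constructor
  · refine fun heq => exists_eq_expChar_pow_of_choose_eq_zero (K := K) p he fun i hi hie => ?_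
    have hC : (X - (-1) ^ e : K[X]) = X + C (-(-1) ^ e) := by simp [sub_eq_add_neg]
    have hcoeff : ((X - (-1) ^ e : K[X]) ^ e).coeff i = 0 := by
      simp [heq, coeff_X_pow, coeff_one, hie.ne, hi.ne']
    rw [hC, coeff_X_add_C_pow] at hcoeff
    exact (mul_eq_zero_iff_left (pow_ne_zero _ (by simp))).1 hcoeff
  · rintro ⟨m, rfl⟩
    rw [sub_pow_expChar_pow, neg_one_pow_expChar_pow, neg_one_pow_expChar_pow, sub_neg_eq_add]

theorem natDegree_X_pow_add_X_sub {e : ℕ} (he : 0 < e) :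
    (X ^ (e + 1) + X - (-1) ^ e : K[X]).natDegree = e + 1 := by
  rw [← map_one C, ← map_neg, ← map_pow]
  compute_degree!
  simp [he.ne']

theorem monic_X_pow_add_X_sub {e : ℕ} (he : 0 < e) :
    (X ^ (e + 1) + X - (-1) ^ e : K[X]).Monic := by
  rw [← map_one C, ← map_neg, ← map_pow]
  monicity!
  lia

theorem natDegree_X_mul_X_sub_pow_sub (e : ℕ) :
    (X * (X - (-1) ^ e) ^ e - (-1) ^ e : K[X]).natDegree = e + 1 := by
  rw [← map_one C, ← map_neg, ← map_pow, natDegree_sub_C,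
    monic_X.natDegree_mul ((monic_X_sub_C _).pow e), natDegree_X, natDegree_pow,
    natDegree_X_sub_C, mul_one, add_comm]

theorem monic_X_mul_X_sub_pow_sub (e : ℕ) :
    (X * (X - (-1) ^ e) ^ e - (-1) ^ e : K[X]).Monic := by
  rw [← map_one C, ← map_neg, ← map_pow]
  refine (monic_X.mul ((monic_X_sub_C _).pow e)).sub_of_left (degree_C_le.trans_lt ?_)
  rw [degree_mul, degree_pow, degree_X, degree_X_sub_C, nsmul_one]
  positivity

-- Modulo `X ^ (e + 1) + X - (-1) ^ e` the power `X ^ ((e + 1) * e)` is `((-1) ^ e - X) ^ e`,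
-- so the divisibility is one between monic polynomials of the same degree `e + 1`.
theorem X_pow_add_X_sub_dvd_iff_X_sub_pow_eq {e : ℕ} (he : 0 < e) :
    (X ^ (e + 1) + X - (-1) ^ e : K[X]) ∣ X ^ ((e + 1) * e + 1) - 1 ↔
      (X - (-1) ^ e : K[X]) ^ e = X ^ e + 1 := by
  have hmonic := monic_X_pow_add_X_sub (K := K) he
  have hmonic' := monic_X_mul_X_sub_pow_sub (K := K) e
  have hdeg := (natDegree_X_mul_X_sub_pow_sub (K := K) e).le.trans
    (natDegree_X_pow_add_X_sub (K := K) he).ge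
  set ε : K[X] := (-1) ^ e with hε
  have hεε : ε * ε = 1 := by rw [hε, ← mul_pow]; simp
  have hεpow : (ε - X) ^ e = ε * (X - ε) ^ e := by rw [← neg_sub, neg_pow]
  have hmod : X ^ (e + 1) + X - ε ∣ X ^ ((e + 1) * e) - ε * (X - ε) ^ e := by
    have h := sub_dvd_pow_sub_pow (X ^ (e + 1)) (ε - X) e
    rwa [hεpow, ← pow_mul, sub_sub_eq_add_sub] at h
  have hsplit : X ^ ((e + 1) * e + 1) - 1 =
      X * (X ^ ((e + 1) * e) - ε * (X - ε) ^ e) + ε * (X * (X - ε) ^ e - ε) := by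
    linear_combination hεε
  rw [hsplit, dvd_add_right (hmod.mul_left X), (IsUnit.of_mul_eq_one ε hεε).dvd_mul_left]
  constructor
  · intro hdvd
    have heq := eq_of_monic_of_dvd_of_natDegree_le hmonic hmonic' hdvd hdeg
    exact mul_left_cancel₀ X_ne_zero (by linear_combination heq)
  · intro heq
    rw [heq]
    exact dvd_of_eq (by ring)

end Divisibility

section Trinomial

variable {K L : Type*} [Field K] [Field L] [Algebra K L] {σ : Gal(L/K)}

/-- The `K`-linear map `x ↦ a * x + b * σ x - (σ ^ d) x` induced by a `σ`-trinomial. -/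
def trinomial (σ : Gal(L/K)) (d : ℕ) (a b : L) : L →ₗ[K] L :=
  .mulLeft K a + .mulLeft K b ∘ₗ σ.toLinearMap - (σ ^ d).toLinearMap

theorem trinomial_apply (d : ℕ) (a b x : L) :
    trinomial σ d a b x = a * x + b * σ x - (σ ^ d) x := rfl

theorem mem_ker_trinomial {d : ℕ} {a b x : L} :
    x ∈ (trinomial σ d a b).ker ↔ (σ ^ d) x = a * x + b * σ x := by
  rw [LinearMap.mem_ker, trinomial_apply, sub_eq_zero, eq_comm]

/-- The coefficients of the reduction of `σ ^ (k * d)` modulo `σ ^ d = a + b * σ`, that is,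
`σ ^ (k * d) = ∑ j ≤ k, reductionCoeff σ d a b k j * σ ^ j` on the kernel of the trinomial. They
vanish for `j > k`, and their recursion is a twisted form of Pascal's rule. -/
def reductionCoeff (σ : Gal(L/K)) (d : ℕ) (a b : L) : ℕ → ℕ → L
  | 0, 0 => 1
  | 0, _ + 1 => 0
  | k + 1, 0 => (σ ^ (k * d)) a * reductionCoeff σ d a b k 0
  | k + 1, j + 1 => (σ ^ (k * d)) a * reductionCoeff σ d a b k (j + 1) +
      (σ ^ (k * d)) b * σ (reductionCoeff σ d a b k j)

theorem reductionCoeff_zero_right (d : ℕ) (a b : L) (k : ℕ) :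
    reductionCoeff σ d a b k 0 = ∏ i ∈ range k, (σ ^ (i * d)) a := by
  induction k with
  | zero => simp [reductionCoeff]
  | succ k ih => rw [reductionCoeff, ih, prod_range_succ, mul_comm]

theorem reductionCoeff_eq_zero_of_lt (d : ℕ) (a b : L) {k j : ℕ} (hkj : k < j) :
    reductionCoeff σ d a b k j = 0 := by
  induction k generalizing j with
  | zero =>
    obtain ⟨j, rfl⟩ := Nat.exists_eq_add_of_lt hkj
    rw [reductionCoeff]
  | succ k ih =>
    obtain ⟨j, rfl⟩ := Nat.exists_eq_add_of_lt (k.zero_lt_succ.trans hkj)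
    rw [reductionCoeff, ih (by lia), ih (by lia), map_zero, mul_zero, mul_zero, add_zero]

theorem pow_mul_apply_eq_sum_reductionCoeff {d : ℕ} {a b x : L}
    (hx : (σ ^ d) x = a * x + b * σ x) (k : ℕ) :
    (σ ^ (k * d)) x = ∑ j ∈ range (k + 1), reductionCoeff σ d a b k j * (σ ^ j) x := by
  induction k with
  | zero => simp [reductionCoeff]
  | succ k ih =>
    have hstep : (σ ^ ((k + 1) * d)) x =
        (σ ^ (k * d)) a * (σ ^ (k * d)) x + (σ ^ (k * d)) b * σ ((σ ^ (k * d)) x) := by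
      rw [add_one_mul, pow_add, AlgEquiv.mul_apply, hx, map_add, map_mul, map_mul,
        ← pow_succ_apply, pow_succ, AlgEquiv.mul_apply]
    have hextend : ∑ j ∈ range (k + 1), reductionCoeff σ d a b k j * (σ ^ j) x =
        ∑ j ∈ range (k + 2), reductionCoeff σ d a b k j * (σ ^ j) x := by
      rw [sum_range_succ _ (k + 1), reductionCoeff_eq_zero_of_lt _ _ _ k.lt_succ_self, zero_mul,
        add_zero]
    rw [hstep, ih]
    nth_rw 1 [hextend]
    rw [sum_range_succ', sum_range_succ' _ (k + 1)]
    simp only [reductionCoeff, map_sum, map_mul, ← pow_succ_apply, mul_add, mul_sum, add_mul,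
      sum_add_distrib, mul_assoc]
    ring

theorem eq_neg_prod_of_le_finrank_ker_trinomial
    (hfix : ∀ x, σ x = x → x ∈ Set.range (algebraMap K L)) {m : ℕ}
    (hpow : σ ^ ((m + 2) * (m + 1) + 1) = 1) {a b : L}
    (hker : m + 2 ≤ finrank K (trinomial σ (m + 2) a b).ker) :
    b = -∏ i ∈ range (m + 2), (σ ^ (i * (m + 2) + 1)) a := by
  rw [mul_comm] at hpow
  let c := reductionCoeff σ (m + 2) a b (m + 1)
  -- The coefficients of `σ ^ ((m + 2) * (m + 1) + 1) - 1` reduced modulo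
  -- `σ ^ (m + 2) = a + b * σ`.
  let r : ℕ → L
    | 0 => σ (c (m + 1)) * a - 1
    | 1 => σ (c 0) + σ (c (m + 1)) * b
    | j + 2 => σ (c (j + 1))
  have hr : ∀ x ∈ (trinomial σ (m + 2) a b).ker, ∑ j ∈ range (m + 2), r j * (σ ^ j) x = 0 := by
    intro x hx
    rw [mem_ker_trinomial] at hx
    have hxn : x = ∑ j ∈ range (m + 2), σ (c j) * (σ ^ (j + 1)) x := calc
      x = σ ((σ ^ ((m + 1) * (m + 2))) x) := by
        rw [← pow_succ_apply, hpow, AlgEquiv.one_apply]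
      _ = _ := by
        rw [pow_mul_apply_eq_sum_reductionCoeff hx, map_sum]
        simp only [map_mul, ← pow_succ_apply, c]
    rw [sum_range_succ, hx, sum_range_succ'] at hxn
    rw [sum_range_succ', sum_range_succ']
    simp only [r, zero_add, pow_one, pow_zero, AlgEquiv.one_apply] at hxn ⊢
    linear_combination -hxn
  have hr_zero {i : ℕ} (hi : i < m + 2) : r i = 0 :=
    eq_zero_of_forall_mem_sum_mul_pow_apply_eq_zero hfix hker hr hi
  have hb : b = -(σ (c 0) * a) := by
    linear_combination a * hr_zero (i := 1) (by lia) - b * hr_zero (i := 0) (by lia)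
  rw [hb, prod_range_succ, hpow, AlgEquiv.one_apply]
  simp only [c, reductionCoeff_zero_right, map_prod, pow_succ_apply]

theorem norm_eq_neg_one_pow_of_finrank_ker_trinomial [FiniteDimensional K L]
    (hfix : ∀ x, σ x = x → x ∈ Set.range (algebraMap K L)) {m : ℕ} {a b : L}
    (hker : finrank K (trinomial σ (m + 2) a b).ker = m + 2) :
    Algebra.norm K a = (-1) ^ ((m + 1) * finrank K L) := by
  refine norm_eq_neg_one_pow_of_finrank_eq hfix hker
    (c := Fin.cons a (Fin.cons b 0)) fun x hx => ?_
  rw [mem_ker_trinomial.1 hx]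
  simp [Fin.sum_univ_succ]

theorem finrank_ker_trinomial_congr {d : ℕ} {a b α β g : L} (hg : g ≠ 0)
    (ha : a * g = α * (σ ^ d) g) (hb : b * σ g = β * (σ ^ d) g) :
    finrank K (trinomial σ d a b).ker = finrank K (trinomial σ d α β).ker := by
  let e := Units.mulLeftLinearEquiv K L (Units.mk0 g hg)
  have hcomap : (trinomial σ d α β).ker = (trinomial σ d a b).ker.comap e.toLinearMap := by
    ext x
    have hconj : trinomial σ d a b (e x) = (σ ^ d) g * trinomial σ d α β x := by
      change trinomial σ d a b (g * x) = _
      simp only [trinomial_apply, map_mul]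
      linear_combination x * ha + σ x * hb
    rw [Submodule.mem_comap, LinearMap.mem_ker, LinearMap.mem_ker, LinearEquiv.coe_coe, hconj,
      mul_eq_zero_iff_left ((_root_.map_ne_zero _).2 hg)]
  rw [hcomap, Submodule.comap_equiv_eq_map_symm, LinearEquiv.finrank_map_eq]

theorem ker_trinomial_eq_ker_aeval (e : ℕ) :
    (trinomial σ (e + 1) ((-1) ^ e) (-1)).ker =
      (aeval σ.toLinearMap (X ^ (e + 1) + X - (-1) ^ e : K[X])).ker := by
  ext x
  have hC : ((-1) ^ e : K[X]) = C ((-1) ^ e) := by simp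
  rw [mem_ker_trinomial, hC, LinearMap.mem_ker, map_sub, aeval_C, LinearMap.sub_apply,
    algebraMap_end_apply, Algebra.smul_def]
  simp only [map_add, map_pow, map_neg, map_one, aeval_X, LinearMap.add_apply,
    toLinearMap_pow_apply, AlgEquiv.toLinearMap_apply]
  constructor <;> intro h <;> linear_combination h

theorem prod_pow_apply_mul_apply {d : ℕ} {ε : K} {a g : L}
    (hag : a * g = algebraMap K L ε * (σ ^ d) g) (k : ℕ) :
    (∏ i ∈ range k, (σ ^ (i * d + 1)) a) * σ g =
      algebraMap K L ε ^ k * (σ ^ (k * d + 1)) g := by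
  induction k with
  | zero => simp
  | succ k ih =>
    have hstep : (σ ^ (k * d + 1)) a * (σ ^ (k * d + 1)) g =
        algebraMap K L ε * (σ ^ ((k + 1) * d + 1)) g := by
      rw [← map_mul, hag, map_mul, AlgEquiv.commutes, ← AlgEquiv.mul_apply, ← pow_add,
        add_right_comm, ← add_one_mul]
    rw [prod_range_succ, pow_succ (algebraMap K L ε)]
    linear_combination (σ ^ (k * d + 1)) a * ih + algebraMap K L ε ^ k * hstep

theorem finrank_ker_trinomial_eq_of_norm_eq [FiniteDimensional K L] [IsGalois K L]
    (hσ : Subgroup.zpowers σ = ⊤) {e : ℕ} (hfinrank : finrank K L = (e + 1) * e + 1) {a b : L}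
    (ha : Algebra.norm K a = (-1) ^ e)
    (hb : b = -∏ i ∈ range (e + 1), (σ ^ (i * (e + 1) + 1)) a) :
    finrank K (trinomial σ (e + 1) a b).ker =
      finrank K (trinomial σ (e + 1) ((-1) ^ e) (-1)).ker := by
  set ε : K := (-1) ^ e with hε
  have hε0 : ε ≠ 0 := pow_ne_zero _ (neg_ne_zero.2 one_ne_zero)
  have hεd : ε ^ (e + 1) = 1 := by rw [hε, ← pow_mul, (Nat.even_mul_succ_self e).neg_one_pow]
  have ha0 : a ≠ 0 := Algebra.norm_ne_zero_iff.1 (ha ▸ hε0)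
  have hnorm : Algebra.norm K (algebraMap K L ε / a) = 1 := by
    refine (mul_eq_right₀ hε0).1 ?_
    nth_rw 2 [← ha]
    rw [← map_mul, div_mul_cancel₀ _ ha0, Algebra.norm_algebraMap, hfinrank, pow_succ, pow_mul,
      hεd, one_pow, one_mul]
  have hcoprime : (e + 1).Coprime (finrank K L) := by
    simp [hfinrank]
  obtain ⟨g, hg0, hg⟩ :=
    exists_mul_apply_eq_self_of_norm_eq_one (zpowers_pow_eq_top hσ hcoprime) hnorm
  have hag : a * g = algebraMap K L ε * (σ ^ (e + 1)) g := by
    rw [div_mul_eq_mul_div, div_eq_iff ha0] at hg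
    rw [hg, mul_comm]
  have hwrap : σ ^ ((e + 1) * (e + 1) + 1) = σ ^ (e + 1) := by
    rw [show (e + 1) * (e + 1) + 1 = finrank K L + (e + 1) by rw [hfinrank]; ring, pow_add,
      pow_finrank_eq_one hσ, one_mul]
  have hbg : b * σ g = -1 * (σ ^ (e + 1)) g := by
    rw [hb, neg_mul, prod_pow_apply_mul_apply hag, hwrap, ← map_pow, hεd, map_one, one_mul,
      neg_one_mul]
  exact finrank_ker_trinomial_congr hg0 (by simpa [hε] using hag) hbg

theorem finrank_ker_trinomial_eq_iff_exists_eq_expChar_pow [FiniteDimensional K L] [IsGalois K L]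
    (p : ℕ) [ExpChar K p] (hσ : Subgroup.zpowers σ = ⊤) {e : ℕ} (he : 0 < e)
    (hfinrank : finrank K L = (e + 1) * e + 1) :
    finrank K (trinomial σ (e + 1) ((-1) ^ e) (-1)).ker = e + 1 ↔ ∃ m, e = p ^ m := by
  rw [ker_trinomial_eq_ker_aeval, ← X_sub_pow_eq_iff_exists_eq_expChar_pow (K := K) p he,
    ← X_pow_add_X_sub_dvd_iff_X_sub_pow_eq he, ← hfinrank,
    ← finrank_ker_aeval_eq_natDegree_iff_dvd hσ (monic_X_pow_add_X_sub he).ne_zero,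
    natDegree_X_pow_add_X_sub he]

end Trinomial

section FiniteField

variable {K L : Type*} [Field K] [Field L] [Algebra K L] [Fintype K]

theorem finrank_eq_of_card_eq_pow [Fintype L] {n : ℕ}
    (hcard : Fintype.card L = Fintype.card K ^ n) : finrank K L = n :=
  Nat.pow_right_injective Fintype.one_lt_card (card_eq_pow_finrank.symm.trans hcard)

theorem norm_eq_neg_one_pow_iff_pow_eq [Finite L] {a : L} {k : ℕ} :
    Algebra.norm K a = (-1) ^ k ↔
      a ^ ((Fintype.card K ^ finrank K L - 1) / (Fintype.card K - 1)) = (-1) ^ k := by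
  rw [← (algebraMap K L).injective.eq_iff, FiniteField.algebraMap_norm_eq_pow,
    Module.natCard_eq_pow_finrank (K := K), Nat.card_eq_fintype_card, map_pow, map_neg, map_one]

theorem zpowers_eq_top_of_forall_apply_eq_pow [Finite L] {σ : Gal(L/K)} {s : ℕ}
    (hσ : ∀ x, σ x = x ^ Fintype.card K ^ s) (hs : s.Coprime (finrank K L)) :
    Subgroup.zpowers σ = ⊤ := by
  let φ := FiniteField.frobeniusAlgEquivOfAlgebraic K L
  have hφ : Subgroup.zpowers φ = ⊤ := eq_top_iff.2 fun f _ =>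
    have ⟨i, hi⟩ := (FiniteField.bijective_frobeniusAlgEquivOfAlgebraic_pow K L).2 f
    ⟨i, hi⟩
  have hσφ : σ = φ ^ s := AlgEquiv.ext fun x => by
    rw [hσ, AlgEquiv.coe_pow, FiniteField.coe_frobeniusAlgEquivOfAlgebraic_iterate]
  rw [hσφ]
  exact zpowers_pow_eq_top hφ hs

end FiniteField

end SigmaTrinomial

open SigmaTrinomial in
theorem stmt_2_general {K L : Type*} [Field K] [Field L] [Algebra K L] [IsGalois K L] (p : ℕ)
    [ExpChar K p] {σ : Gal(L/K)} (hσ : Subgroup.zpowers σ = ⊤) {d : ℕ} (hd : 2 ≤ d)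
    (hfinrank : Module.finrank K L = d * (d - 1) + 1) (a b : L) :
    Module.finrank K (trinomial σ d a b).ker = d ↔
      Algebra.norm K a = (-1) ^ (d - 1) ∧
        b = -∏ i ∈ Finset.range d, (σ ^ (i * d + 1)) a ∧ ∃ m, d - 1 = p ^ m := by
  have : FiniteDimensional K L := Module.finite_of_finrank_pos (by lia)
  obtain ⟨m, rfl⟩ := Nat.exists_eq_add_of_le' hd
  change Module.finrank K L = (m + 2) * (m + 1) + 1 at hfinrank
  have hconst := finrank_ker_trinomial_eq_iff_exists_eq_expChar_pow p hσ m.succ_pos hfinrank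
  constructor
  · intro hker
    have hfix (x : L) := mem_range_algebraMap_of_apply_eq_self hσ (x := x)
    have hodd : Odd (Module.finrank K L) := by
      rw [hfinrank, mul_comm]
      exact (Nat.even_mul_succ_self (m + 1)).add_one
    have ha : Algebra.norm K a = (-1) ^ (m + 1) := by
      rw [norm_eq_neg_one_pow_of_finrank_ker_trinomial hfix hker, pow_mul', hodd.neg_one_pow]
    have hb := eq_neg_prod_of_le_finrank_ker_trinomial hfix
      (hfinrank ▸ pow_finrank_eq_one hσ) hker.ge
    rw [finrank_ker_trinomial_eq_of_norm_eq hσ hfinrank ha hb] at hker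
    exact ⟨ha, hb, hconst.1 hker⟩
  · rintro ⟨ha, hb, hm⟩
    rw [finrank_ker_trinomial_eq_of_norm_eq hσ hfinrank ha hb]
    exact hconst.2 hm

/-- With `σ : x ↦ x^{q^s}`, `gcd(s,n)=1`, `d ≥ 3` and `n = d(d-1)+1`:
the `F_q`-dimension of the kernel of `x ↦ a·x + b·σ(x) − σ^d(x)` equals `d` if and only if
`N_{q^n/q}(a) = (-1)^{d-1}`, `b = -∏_{i=0}^{d-1} σ^{id+1}(a)`, and `d-1` is a power of the
characteristic `p`. -/
theorem stmt_2 (p q : ℕ) (hp : p.Prime) (hq : ∃ m : ℕ, 0 < m ∧ q = p ^ m)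
    (K L : Type*) [Field K] [Field L] [Fintype K] [Fintype L] [Algebra K L]
    (hcardK : Fintype.card K = q)
    (n : ℕ) (hn : 0 < n) (hcardL : Fintype.card L = q ^ n)
    (s : ℕ) (hs : 0 < s) (hsn : Nat.gcd s n = 1)
    (σ : L ≃ₐ[K] L) (hσ : ∀ x : L, σ x = x ^ q ^ s)
    (d : ℕ) (hd : 3 ≤ d) (hnval : n = d * (d - 1) + 1)
    (a b : L) :
    Module.finrank K
      (LinearMap.ker
        (LinearMap.mulLeft K a + LinearMap.mulLeft K b ∘ₗ σ.toLinearMap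
          - (σ ^ d : L ≃ₐ[K] L).toLinearMap)) = d
      ↔ (a ^ ((q ^ n - 1) / (q - 1)) = (-1 : L) ^ (d - 1)
          ∧ b = - ∏ i ∈ Finset.range d, (σ ^ (i * d + 1)) a
          ∧ ∃ m : ℕ, d - 1 = p ^ m) := by
  have := Fact.mk hp
  have hchar : CharP K p := by
    obtain ⟨m, -, rfl⟩ := hq
    exact charP_of_card_eq_prime_pow hcardK
  subst hcardK
  obtain rfl := SigmaTrinomial.finrank_eq_of_card_eq_pow hcardL
  rw [← SigmaTrinomial.norm_eq_neg_one_pow_iff_pow_eq]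
  have hgen := SigmaTrinomial.zpowers_eq_top_of_forall_apply_eq_pow hσ hsn
  exact stmt_2_general p hgen (by lia) hnval a b
end

section
/- Let d, n, s be positive integers with gcd(s,n)=1, d ≥ 3 and n = d(d−1)+g for some g ∈ {1,…,d−1}. For a, b ∈ F_{q^n} and each t ∈ {0,1,…,d−1}, define c_{d−1,t} ∈ F_{q^n} as the sum, over all (t+1)-tuples (i_0,…,i_t) of nonnegative integers with i_0+⋯+i_t = d−1−t, of the product [∏_{m=0}^{t−1} ∏_{j=1}^{i_m} σ^{d(d − i_0 − ⋯ − i_{m−1} − j − (m+1)) + g + m}(a)] · [∏_{j=1}^{i_t} σ^{d(i_t − j) + t + g}(a)] · [∏_{u=0}^{t−1} σ^{d(d−2 − i_0 − ⋯ − i_u − u) + u + g}(b)], where empty products equal 1 and powers of σ are taken modulo n. Then the F_q-dimension of the kernel of a·x + b·x^σ − x^{σ^d} equals d if and only if a ≠ 0 and the following system holds: c_{d−1,0} = (−1)^g · (∏_{i=0}^{g−1} σ^i(b)) · (∏_{i=0}^{g−1} σ^i(a))^{−1}; for every v with 0 ≤ v ≤ g−1, c_{d−1,d−g+v} = (−1)^v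 · (∏_{i=0}^{v−1} σ^i(b)) · (∏_{i=0}^{v} σ^i(a))^{−1}; and c_{d−1,t} = 0 for every t with 1 ≤ t ≤ d−g−1. -/
open Finset in
/-- The coefficient `c_{d-1,t}` from Theorem `th:main`: the sum over all `(t+1)`-tuples
`(i_0, …, i_t)` of nonnegative integers with `i_0 + ⋯ + i_t = d-1-t` of the products
`[∏_{m=0}^{t-1} ∏_{j=1}^{i_m} σ^{d(d - i_0 - ⋯ - i_{m-1} - j - (m+1)) + g + m}(a)] ·
 [∏_{j=1}^{i_t} σ^{d(i_t - j) + t + g}(a)] ·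
 [∏_{u=0}^{t-1} σ^{d(d-2 - i_0 - ⋯ - i_u - u) + u + g}(b)]`,
with powers of `σ` taken as integer powers (`σ` has order `n`, so this is "modulo n"). -/
noncomputable def cCoeff {K L : Type*} [Field K] [Field L] [Algebra K L]
    (σ : L ≃ₐ[K] L) (d g t : ℕ) (a b : L) : L :=
  ∑ iv ∈ Finset.Nat.antidiagonalTuple (t + 1) (d - 1 - t),
    (fun I : ℕ → ℕ =>
      (fun S : ℕ → ℕ =>
        (∏ m ∈ range t, ∏ j ∈ range (I m),
            (σ ^ ((d : ℤ) * ((d : ℤ) - (S m : ℤ) - ((j : ℤ) + 1) - ((m : ℤ) + 1))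
              + (g : ℤ) + (m : ℤ))) a) *
        (∏ j ∈ range (I t),
            (σ ^ ((d : ℤ) * ((I t : ℤ) - ((j : ℤ) + 1)) + (t : ℤ) + (g : ℤ))) a) *
        (∏ u ∈ range t,
            (σ ^ ((d : ℤ) * ((d : ℤ) - 2 - (S (u + 1) : ℤ) - (u : ℤ))
              + (u : ℤ) + (g : ℤ))) b))
      (fun m => ∑ u ∈ range m, I u))
    (fun m => if h : m < t + 1 then iv ⟨m, h⟩ else 0)

/-!
A `σ`-linearized polynomial `P` is an element of the skew polynomial ring `L[X; σ]` acting on `L`,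
and by Dedekind's independence of automorphisms its kernel has dimension at most `deg P`. Write
`X ^ n = Q * P + R` with `deg R < deg P`. As `σ ^ n = 1`, the operator `1 - R` vanishes on `ker P`,
so a kernel of dimension `deg P` forces `R = 1`; conversely, if `R = 1` then `Q * P` acts as zero
and counting dimensions gives `dim ker P = deg P`. For `P = a + b X - X ^ d`, iterating
`X ^ (e + d) ≡ σ^e(a) X ^ e + σ^e(b) X ^ (e + 1)` expresses `X ^ n` through
`X ^ g, …, X ^ (g + d - 1)` with coefficients `c_{d-1,t}`; one more reduction of the powers
`≥ d` yields `R`, and `R = 1` is a triangular system in the `c_{d-1,t}`.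
-/

open Finset Module Polynomial

section ReductionCoeff

variable {R : Type*} [CommSemiring R] (α β : ℤ → R) (d : ℕ)

/-- The coefficient of `y (e + t)` in the expansion of `y (e + d * k)`, for a sequence `y` with
`y (e + d) = α e • y e + β e • y (e + 1)`. The arguments of `reductionCoeff α β d` are `k`, `t`, `e`
in this order; the index `e` is an integer so that it matches the integer powers of `σ` in
`cCoeff`. -/
def reductionCoeff : ℕ → ℕ → ℤ → R
  | 0, 0, _ => 1
  | 0, _ + 1, _ => 0
  | k + 1, 0, e => α (e + d * k) * reductionCoeff k 0 e
  | k + 1, t + 1, e =>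
      α (e + d * k) * reductionCoeff k (t + 1) e + β (e + d * k) * reductionCoeff k t (e + 1)

lemma reductionCoeff_eq_zero_of_lt {k t : ℕ} (hkt : k < t) (e : ℤ) :
    reductionCoeff α β d k t e = 0 := by
  induction k generalizing t e with
  | zero => obtain ⟨t, rfl⟩ := Nat.exists_eq_succ_of_ne_zero hkt.ne'; rfl
  | succ k ih =>
    obtain ⟨t, rfl⟩ := Nat.exists_eq_succ_of_ne_zero (Nat.ne_zero_of_lt hkt)
    simp only [reductionCoeff, ih (show k < t + 1 by omega), ih (show k < t by omega), mul_zero,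
      add_zero]

lemma sum_reductionCoeff_succ_smul {M : Type*} [AddCommMonoid M] [Module R M] (k : ℕ) (e : ℤ)
    (z : ℕ → M) :
    ∑ t ∈ range (k + 2), reductionCoeff α β d (k + 1) t e • z t =
      α (e + d * k) • ∑ t ∈ range (k + 1), reductionCoeff α β d k t e • z t +
        β (e + d * k) • ∑ t ∈ range (k + 1), reductionCoeff α β d k t (e + 1) • z (t + 1) := by
  have hextend : ∑ t ∈ range (k + 1), reductionCoeff α β d k t e • z t =
      ∑ t ∈ range (k + 2), reductionCoeff α β d k t e • z t := by
    rw [sum_range_succ _ (k + 1), reductionCoeff_eq_zero_of_lt α β d k.lt_succ_self, zero_smul,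
      add_zero]
  rw [hextend, sum_range_succ', sum_range_succ' _ (k + 1)]
  simp only [reductionCoeff, add_smul, mul_smul, sum_add_distrib, smul_add, smul_sum]
  exact add_right_comm _ _ _

lemma eq_sum_reductionCoeff_smul {M : Type*} [AddCommMonoid M] [Module R M] {N : ℕ} {y : ℕ → M}
    (hd : 0 < d) (hy : ∀ e : ℕ, e + d ≤ N → y (e + d) = α e • y e + β e • y (e + 1))
    {k e : ℕ} (hN : e + d * k ≤ N) :
    y (e + d * k) = ∑ t ∈ range (k + 1), reductionCoeff α β d k t e • y (e + t) := by
  induction k generalizing e with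
  | zero => simp [reductionCoeff]
  | succ k ih =>
    rw [mul_add_one, ← add_assoc] at hN ⊢
    rw [hy _ hN, ih (by omega), add_right_comm, ih (by omega),
      sum_reductionCoeff_succ_smul α β d k e fun t => y (e + t)]
    push_cast
    simp only [add_assoc, add_comm 1]

lemma reductionCoeff_zero_right (k : ℕ) (e : ℤ) :
    reductionCoeff α β d k 0 e = ∏ i ∈ range k, α (e + d * (k - 1 - i)) := by
  induction k with
  | zero => rfl
  | succ k ih =>
    rw [reductionCoeff, ih, prod_range_succ', mul_comm]
    push_cast
    ring_nf

-- Split off the steps taken before the first `β`-step.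
lemma reductionCoeff_succ_right (j t : ℕ) (e : ℤ) :
    reductionCoeff α β d (j + t + 1) (t + 1) e =
      ∑ p ∈ antidiagonal j, (∏ i ∈ range p.1, α (e + d * (j + t - i))) *
        β (e + d * (p.2 + t)) * reductionCoeff α β d (p.2 + t) t (e + 1) := by
  induction j with
  | zero =>
    simp [reductionCoeff, reductionCoeff_eq_zero_of_lt]
  | succ j ih =>
    rw [Finset.Nat.sum_antidiagonal_succ, add_right_comm j 1 t, reductionCoeff, ih, mul_sum,
      add_comm]
    congr 1
    · simp [add_right_comm]
    · refine sum_congr rfl fun p _ => ?_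
      rw [prod_range_succ']
      push_cast
      ring_nf

/-- The summand of the closed form of `reductionCoeff α β d k t e` in which the `r`-th run of
consecutive `α`-steps has length `I r`, successive runs being separated by `β`-steps. -/
def runTerm (t : ℕ) (k e : ℤ) (I : ℕ → ℕ) : R :=
  (∏ r ∈ range (t + 1), ∏ i ∈ range (I r),
      α (e + r + d * (k - 1 - (∑ u ∈ range r, I u : ℕ) - r - i))) *
    ∏ r ∈ range t, β (e + r + d * (k - 1 - (∑ u ∈ range (r + 1), I u : ℕ) - r))

lemma runTerm_succ (t : ℕ) (k e : ℤ) (I : ℕ → ℕ) :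
    runTerm α β d (t + 1) k e I =
      (∏ i ∈ range (I 0), α (e + d * (k - 1 - i))) * β (e + d * (k - 1 - I 0)) *
        runTerm α β d t (k - 1 - I 0) (e + 1) fun r => I (r + 1) := by
  simp only [runTerm]
  rw [prod_range_succ' _ (t + 1), prod_range_succ' fun r => β _]
  simp only [sum_range_succ' I]
  push_cast
  have hα (S r i : ℤ) : e + (r + 1) + d * (k - 1 - (S + I 0) - (r + 1) - i) =
      e + 1 + r + d * (k - 1 - I 0 - 1 - S - r - i) := by ring
  have hβ (S r : ℤ) : e + (r + 1) + d * (k - 1 - (S + I 0) - (r + 1)) =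
      e + 1 + r + d * (k - 1 - I 0 - 1 - S - r) := by ring
  simp only [sum_range_zero, add_zero, sub_zero, zero_add, hα, hβ]
  ring

end ReductionCoeff

section AntidiagonalTuple

/-- The extension by zero of a tuple to a sequence. -/
def extendByZero {k : ℕ} (v : Fin k → ℕ) : ℕ → ℕ := fun m => if h : m < k then v ⟨m, h⟩ else 0

lemma extendByZero_cons_zero {k : ℕ} (i : ℕ) (v : Fin k → ℕ) :
    extendByZero (Fin.cons i v : Fin (k + 1) → ℕ) 0 = i := by
  simp [extendByZero]

lemma extendByZero_cons_succ {k : ℕ} (i : ℕ) (v : Fin k → ℕ) (m : ℕ) :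
    extendByZero (Fin.cons i v : Fin (k + 1) → ℕ) (m + 1) = extendByZero v m := by
  simp only [extendByZero, add_lt_add_iff_right]
  rfl

lemma sum_range_extendByZero {k : ℕ} (v : Fin k → ℕ) :
    ∑ m ∈ range k, extendByZero v m = ∑ i, v i := by
  simp [sum_range, extendByZero]

lemma sum_antidiagonalTuple_succ {M : Type*} [AddCommMonoid M] (k n : ℕ)
    (F : (Fin (k + 1) → ℕ) → M) :
    ∑ v ∈ Finset.Nat.antidiagonalTuple (k + 1) n, F v =
      ∑ p ∈ antidiagonal n, ∑ v ∈ Finset.Nat.antidiagonalTuple k p.2, F (Fin.cons p.1 v) := by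
  change ((List.Nat.antidiagonalTuple (k + 1) n).map F).sum =
    ((List.Nat.antidiagonal n).map fun p =>
      ((List.Nat.antidiagonalTuple k p.2).map fun v => F (Fin.cons p.1 v)).sum).sum
  simp [List.Nat.antidiagonalTuple, List.flatMap, Function.comp_def, List.map_flatten]

end AntidiagonalTuple

lemma reductionCoeff_eq_sum_runTerm {R : Type*} [CommSemiring R] (α β : ℤ → R) (d j t : ℕ)
    (e : ℤ) :
    reductionCoeff α β d (j + t) t e =
      ∑ v ∈ Finset.Nat.antidiagonalTuple (t + 1) j,
        runTerm α β d t (j + t) e (extendByZero v) := by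
  induction t generalizing j e with
  | zero => simp [reductionCoeff_zero_right, runTerm, extendByZero]
  | succ t ih =>
    rw [← add_assoc, reductionCoeff_succ_right, sum_antidiagonalTuple_succ]
    refine sum_congr rfl fun p hp => ?_
    have hj : (j : ℤ) = p.1 + p.2 := by exact_mod_cast (mem_antidiagonal.mp hp).symm
    rw [ih, mul_sum]
    refine sum_congr rfl fun v _ => ?_
    simp only [runTerm_succ, extendByZero_cons_zero, extendByZero_cons_succ, hj]
    push_cast
    ring_nf

lemma cCoeff_eq_reductionCoeff {K L : Type*} [Field K] [Field L] [Algebra K L] (σ : L ≃ₐ[K] L)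
    {d t : ℕ} (g : ℕ) (a b : L) (ht : t < d) :
    cCoeff σ d g t a b =
      reductionCoeff (fun e => (σ ^ e) a) (fun e => (σ ^ e) b) d (d - 1) t g := by
  obtain ⟨j, rfl⟩ : ∃ j, d = j + t + 1 := ⟨d - t - 1, by omega⟩
  rw [cCoeff, Nat.add_sub_cancel, Nat.add_sub_cancel, reductionCoeff_eq_sum_runTerm]
  refine sum_congr rfl fun v hv => ?_
  have hlast : ((∑ u ∈ range t, extendByZero v u : ℕ) : ℤ) + extendByZero v t = j := by
    rw [Finset.Nat.mem_antidiagonalTuple, ← sum_range_extendByZero, sum_range_succ] at hv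
    exact_mod_cast hv
  simp only [runTerm, prod_range_succ _ t, extendByZero] at hlast ⊢
  push_cast
  congr 1
  · congr 1
    · refine prod_congr rfl fun m _ => prod_congr rfl fun i _ => ?_
      congr 2
      ring
    · refine prod_congr rfl fun i _ => ?_
      congr 2
      push_cast at hlast
      linear_combination (j + t + 1 : ℤ) * hlast
  · refine prod_congr rfl fun u _ => ?_
    congr 2
    ring

section SigmaPolynomial

variable {K L : Type*} [CommRing K] [CommRing L] [Algebra K L] (σ : L ≃ₐ[K] L)

/-- The operator `∑ aᵢ σⁱ` on `L` attached to a `σ`-linearized polynomial. Such a polynomial is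
encoded by the ordinary polynomial `∑ aᵢ Xⁱ` with the same coefficients, so that only the module
structure and the degree of `L[X]` are meaningful, not its product. -/
noncomputable def sigmaEval : L[X] →ₗ[L] (L →ₗ[K] L) :=
  lsum fun i => LinearMap.toSpanSingleton L _ (σ ^ i).toLinearMap

lemma sigmaEval_monomial (i : ℕ) (c : L) :
    sigmaEval σ (monomial i c) = c • (σ ^ i).toLinearMap := by
  simp [sigmaEval]

lemma sigmaEval_X_pow (i : ℕ) : sigmaEval σ (X ^ i) = (σ ^ i).toLinearMap := by
  rw [X_pow_eq_monomial, sigmaEval_monomial, one_smul]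

lemma sigmaEval_one : sigmaEval σ 1 = LinearMap.id := by
  simpa using! sigmaEval_X_pow σ 0

lemma sigmaEval_eq_sum_range (P : L[X]) :
    sigmaEval σ P = ∑ i ∈ range (P.natDegree + 1), P.coeff i • (σ ^ i).toLinearMap := by
  conv_lhs => rw [P.as_sum_range]
  simp only [map_sum, sigmaEval_monomial]

lemma sigmaEval_X_pow_mul_map (e : ℕ) (P : L[X]) :
    sigmaEval σ (X ^ e * P.map (σ ^ e : L ≃ₐ[K] L).toRingHom) =
      (σ ^ e).toLinearMap ∘ₗ sigmaEval σ P := by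
  induction P using Polynomial.induction_on' with
  | add P Q hP hQ => rw [Polynomial.map_add, mul_add, map_add, hP, hQ, map_add, LinearMap.comp_add]
  | monomial i c =>
    ext x
    simp [X_pow_mul_monomial, sigmaEval_monomial, add_comm i, Function.iterate_add_apply]

/-- Multiplication on the right by `P` in the skew polynomial ring `L[X; σ]`, where
`X * c = σ c * X`. -/
noncomputable def sigmaMulRight (P : L[X]) : L[X] →ₗ[L] L[X] :=
  lsum fun e => LinearMap.toSpanSingleton L _ (X ^ e * P.map (σ ^ e : L ≃ₐ[K] L).toRingHom)

lemma sigmaMulRight_monomial (P : L[X]) (e : ℕ) (c : L) :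
    sigmaMulRight σ P (monomial e c) = c • (X ^ e * P.map (σ ^ e : L ≃ₐ[K] L).toRingHom) := by
  simp [sigmaMulRight]

lemma sigmaEval_sigmaMulRight (P Q : L[X]) :
    sigmaEval σ (sigmaMulRight σ P Q) = sigmaEval σ Q ∘ₗ sigmaEval σ P := by
  induction Q using Polynomial.induction_on' with
  | add Q₁ Q₂ h₁ h₂ => rw [map_add, map_add, h₁, h₂, map_add, LinearMap.add_comp]
  | monomial e c =>
    rw [sigmaMulRight_monomial, map_smul, sigmaEval_X_pow_mul_map, sigmaEval_monomial,
      LinearMap.smul_comp]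

end SigmaPolynomial

section Kernel

variable {K L : Type*} [Field K] [Field L] [Algebra K L] {σ : L ≃ₐ[K] L}

lemma pow_finrank_eq_one [FiniteDimensional K L] [IsGalois K L] (σ : L ≃ₐ[K] L) :
    σ ^ finrank K L = 1 := by
  rw [← IsGalois.card_aut_eq_finrank, pow_card_eq_one']

-- Dedekind: the `dim_L End_K(L)` many automorphisms are linearly independent over `L`.
lemma span_range_toLinearMap_eq_top (K L : Type*) [Field K] [Field L] [Algebra K L]
    [FiniteDimensional K L] [IsGalois K L] :
    Submodule.span L (Set.range fun τ : L ≃ₐ[K] L => τ.toLinearMap) = ⊤ := by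
  have hindep : LinearIndependent L fun τ : L ≃ₐ[K] L => τ.toLinearMap :=
    (linearIndependent_toLinearMap K L L).comp (fun τ : L ≃ₐ[K] L => (τ : L →ₐ[K] L))
      AlgEquiv.coe_toAlgHom_injective
  refine hindep.span_eq_top_of_card_eq_finrank ?_
  rw [finrank_linearMap_self, ← Nat.card_eq_fintype_card, IsGalois.card_aut_eq_finrank]

lemma restrict_pow_mem_span {P : L[X]} (hP : P ≠ 0) (i : ℕ) :
    (σ ^ i).toLinearMap ∘ₗ (LinearMap.ker (sigmaEval σ P)).subtype ∈
      Submodule.span L (Set.range fun j : Fin P.natDegree =>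
        (σ ^ (j : ℕ)).toLinearMap ∘ₗ (LinearMap.ker (sigmaEval σ P)).subtype) := by
  set D := P.natDegree
  set ι := (LinearMap.ker (sigmaEval σ P)).subtype
  induction i using Nat.strong_induction_on with
  | h i ih =>
    obtain hi | hi := lt_or_ge i D
    · exact Submodule.subset_span ⟨⟨i, hi⟩, rfl⟩
    obtain ⟨e, rfl⟩ := Nat.exists_eq_add_of_le' hi
    have hrel : ∑ k ∈ range (D + 1), (σ ^ e) (P.coeff k) • (σ ^ (e + k)).toLinearMap ∘ₗ ι = 0 := by
      ext x
      have hx : (σ ^ e) (sigmaEval σ P x) = 0 := by rw [LinearMap.mem_ker.mp x.2, map_zero]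
      simpa [sigmaEval_eq_sum_range, Function.iterate_add_apply] using! hx
    have hlead : (σ ^ e) (P.coeff D) ≠ 0 :=
      (map_ne_zero (σ ^ e)).mpr (leadingCoeff_ne_zero.mpr hP)
    rw [sum_range_succ, add_eq_zero_iff_neg_eq] at hrel
    rw [← Submodule.smul_mem_iff _ hlead, ← hrel]
    exact neg_mem (sum_mem fun k hk =>
      Submodule.smul_mem _ _ (ih _ (by have := mem_range.mp hk; omega)))

lemma finrank_ker_sigmaEval_le [FiniteDimensional K L] [IsGalois K L]
    (hσ : ∀ τ, τ ∈ Subgroup.zpowers σ) {P : L[X]} (hP : P ≠ 0) :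
    finrank K (LinearMap.ker (sigmaEval σ P)) ≤ P.natDegree := by
  set V := LinearMap.ker (sigmaEval σ P)
  let restrict : (L →ₗ[K] L) →ₗ[L] (V →ₗ[K] L) := LinearMap.lcomp L L V.subtype
  have hrestrict : LinearMap.range restrict = ⊤ :=
    LinearMap.range_eq_top.mpr fun φ => LinearMap.exists_extend φ
  have hspan : Submodule.span L (Set.range fun j : Fin P.natDegree =>
      (σ ^ (j : ℕ)).toLinearMap ∘ₗ V.subtype) = ⊤ := by
    rw [eq_top_iff, ← hrestrict, LinearMap.range_eq_map, ← span_range_toLinearMap_eq_top,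
      Submodule.map_span_le]
    rintro _ ⟨τ, rfl⟩
    obtain ⟨i, rfl⟩ := mem_powers_iff_mem_zpowers.mpr (hσ τ)
    exact restrict_pow_mem_span hP i
  calc finrank K V = finrank L (V →ₗ[K] L) := (finrank_linearMap_self K L V).symm
    _ = Set.finrank L (Set.range fun j : Fin P.natDegree =>
          (σ ^ (j : ℕ)).toLinearMap ∘ₗ V.subtype) := by rw [Set.finrank, hspan, finrank_top]
    _ ≤ P.natDegree := (finrank_range_le_card _).trans_eq (Fintype.card_fin _)

lemma finrank_ker_sigmaEval_eq_natDegree_iff [FiniteDimensional K L] [IsGalois K L]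
    (hσ : ∀ τ, τ ∈ Subgroup.zpowers σ) {P Q R : L[X]} (hQ : Q ≠ 0)
    (hdeg : Q.natDegree + P.natDegree ≤ finrank K L)
    (hR : R.natDegree < P.natDegree)
    (hdiv : sigmaEval σ Q ∘ₗ sigmaEval σ P = LinearMap.id - sigmaEval σ R) :
    finrank K (LinearMap.ker (sigmaEval σ P)) = P.natDegree ↔ R = 1 := by
  constructor
  · intro hker
    by_contra hne
    have hle : LinearMap.ker (sigmaEval σ P) ≤ LinearMap.ker (sigmaEval σ (1 - R)) := by
      rw [map_sub, sigmaEval_one, ← hdiv]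
      exact LinearMap.ker_le_ker_comp _ _
    have hlt : (1 - R).natDegree < P.natDegree := by
      have := natDegree_sub_le 1 R
      rw [natDegree_one] at this
      omega
    have := Submodule.finrank_mono hle
    have := finrank_ker_sigmaEval_le hσ (sub_ne_zero.mpr (Ne.symm hne))
    omega
  · rintro rfl
    have hrange : LinearMap.range (sigmaEval σ P) ≤ LinearMap.ker (sigmaEval σ Q) := by
      rw [LinearMap.range_le_ker_iff, hdiv, sigmaEval_one, sub_self]
    have := Submodule.finrank_mono hrange
    have := finrank_ker_sigmaEval_le hσ hQ
    have := finrank_ker_sigmaEval_le hσ (ne_zero_of_natDegree_gt hR)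
    have := LinearMap.finrank_range_add_finrank_ker (sigmaEval σ P)
    omega

end Kernel

lemma mem_zpowers_of_eq_pow_card_pow {K L : Type*} [Field K] [Field L] [Fintype K] [Finite L]
    [Algebra K L] {σ : L ≃ₐ[K] L} {s : ℕ} (hσ : ∀ x, σ x = x ^ Fintype.card K ^ s)
    (hs : s.Coprime (finrank K L)) (τ : L ≃ₐ[K] L) : τ ∈ Subgroup.zpowers σ := by
  let φ := FiniteField.frobeniusAlgEquivOfAlgebraic K L
  have hσφ : σ = φ ^ s := by
    ext x
    rw [hσ, AlgEquiv.coe_pow, FiniteField.coe_frobeniusAlgEquivOfAlgebraic_iterate]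
  have hφ : φ ∈ Subgroup.zpowers (φ ^ s) := by
    rwa [mem_zpowers_pow_iff, FiniteField.orderOf_frobeniusAlgEquivOfAlgebraic]
  obtain ⟨i, rfl⟩ := (FiniteField.bijective_frobeniusAlgEquivOfAlgebraic_pow K L).surjective τ
  exact hσφ ▸ pow_mem hφ _

lemma finrank_eq_of_card_eq_card_pow {K L : Type*} [Field K] [Field L] [Fintype K] [Fintype L]
    [Algebra K L] {n : ℕ} (hcard : Fintype.card L = Fintype.card K ^ n) : finrank K L = n := by
  rw [Module.card_eq_pow_finrank (K := K)] at hcard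
  exact Nat.pow_right_injective Fintype.one_lt_card hcard

section Remainder

variable {L : Type*} [CommSemiring L] (A B c : ℕ → L) {w g : ℕ}

/-- The remainder of `X ^ n` modulo the trinomial `a + b X - X ^ (w + g)` in `L[X; σ]`, obtained
from `X ^ n ≡ ∑ t < w + g, c t • X ^ (g + t)` by replacing each `X ^ (w + g + v)` with
`A v • X ^ v + B v • X ^ (v + 1)`, where `A v = σ^v a` and `B v = σ^v b`. -/
noncomputable def trinomialRemainder (w g : ℕ) : L[X] :=
  ∑ t ∈ range w, c t • X ^ (g + t) +
    ∑ v ∈ range g, c (w + v) • (A v • X ^ v + B v • X ^ (v + 1))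

lemma natDegree_trinomialRemainder_lt (hw : 0 < w) :
    (trinomialRemainder A B c w g).natDegree < w + g := by
  suffices hmem : trinomialRemainder A B c w g ∈ degreeLE L ↑(w + g - 1) by
    have := natDegree_le_iff_degree_le.mpr (mem_degreeLE.mp hmem)
    omega
  have hX {i : ℕ} (hi : i < w + g) : (X ^ i : L[X]) ∈ degreeLE L ↑(w + g - 1) :=
    mem_degreeLE.mpr ((degree_X_pow_le i).trans (by exact_mod_cast Nat.le_sub_one_of_lt hi))
  refine add_mem (sum_mem fun t ht => Submodule.smul_mem _ _ (hX ?_))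
    (sum_mem fun v hv => Submodule.smul_mem _ _ (add_mem (Submodule.smul_mem _ _ (hX ?_))
      (Submodule.smul_mem _ _ (hX ?_))))
  all_goals simp only [mem_range] at *; omega

lemma coeff_sum_smul_X_pow_add (w k i : ℕ) :
    (∑ t ∈ range w, c t • (X : L[X]) ^ (k + t)).coeff i =
      if k ≤ i ∧ i < k + w then c (i - k) else 0 := by
  simp only [finsetSum_coeff, coeff_smul, coeff_X_pow, smul_eq_mul, mul_ite, mul_one, mul_zero]
  split_ifs with hi
  · obtain ⟨t, rfl⟩ := Nat.exists_eq_add_of_le hi.1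
    simp [show t < w by omega]
  · refine sum_eq_zero fun t ht => if_neg fun hit => hi ?_
    have := mem_range.mp ht
    omega

lemma coeff_trinomialRemainder (i : ℕ) :
    (trinomialRemainder A B c w g).coeff i =
      (if g ≤ i ∧ i < g + w then c (i - g) else 0) +
        ((if i < g then c (w + i) * A i else 0) +
          if 1 ≤ i ∧ i < 1 + g then c (w + (i - 1)) * B (i - 1) else 0) := by
  have hA := coeff_sum_smul_X_pow_add (fun v => c (w + v) * A v) g 0 i
  have hB := coeff_sum_smul_X_pow_add (fun v => c (w + v) * B v) g 1 i
  simp only [zero_add, zero_le, true_and, Nat.sub_zero] at hA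
  rw [← hA, ← hB, ← coeff_sum_smul_X_pow_add c, ← coeff_add, ← coeff_add, ← sum_add_distrib]
  simp only [trinomialRemainder, smul_add, smul_smul, add_comm 1]

lemma trinomialRemainder_eq_one_iff (hw : 0 < w) (hg : 0 < g) :
    trinomialRemainder A B c w g = 1 ↔
      (c w * A 0 = 1 ∧ ∀ v, v + 1 < g → c (w + (v + 1)) * A (v + 1) + c (w + v) * B v = 0) ∧
        c 0 + c (w + (g - 1)) * B (g - 1) = 0 ∧ ∀ t, 1 ≤ t → t < w → c t = 0 := by
  simp only [Polynomial.ext_iff, coeff_trinomialRemainder, coeff_one]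
  constructor
  · intro h
    refine ⟨⟨?_, fun v hv => ?_⟩, ?_, fun t ht htw => ?_⟩
    · simpa [hg, hg.ne'] using h 0
    · simpa [hv, show ¬ g ≤ v + 1 by omega, show v < g by omega, add_comm 1] using h (v + 1)
    · simpa [hw, hg, hg.ne', Nat.one_le_iff_ne_zero] using h g
    · simpa [htw, show ¬ g + t < 1 + g by omega, hg.ne'] using h (g + t)
  · rintro ⟨⟨hzero, hlow⟩, hself, hhigh⟩ i
    obtain hi | rfl | hi := lt_trichotomy i g
    · obtain _ | v := i
      · simpa [hg, hg.ne'] using hzero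
      · simpa [hi, show ¬ g ≤ v + 1 by omega, show v < g by omega, add_comm 1] using hlow v hi
    · simpa [hw, hg, hg.ne', Nat.one_le_iff_ne_zero] using hself
    · obtain ⟨t, rfl⟩ := Nat.exists_eq_add_of_lt hi
      have hcoeff : g + t + 1 < g + w → c (g + t + 1 - g) = 0 := fun ht =>
        hhigh _ (by omega) (by omega)
      simpa [show ¬ g + t + 1 < 1 + g by omega, show g ≤ g + t + 1 by omega,
        show ¬ g + t + 1 < g by omega] using hcoeff

end Remainder

section System

variable {L : Type*} [Field L] {A B c : ℕ → L} {w g : ℕ}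

/-- The solution `u v = (-1) ^ v * (B 0 ⋯ B (v - 1)) / (A 0 ⋯ A v)` of the two-term recurrence
`u (v + 1) * A (v + 1) + u v * B v = 0` with `u 0 * A 0 = 1`. -/
def alternatingQuotient (A B : ℕ → L) (v : ℕ) : L :=
  (-1) ^ v * (∏ i ∈ range v, B i) * (∏ i ∈ range (v + 1), A i)⁻¹

lemma alternatingQuotient_zero_mul (B : ℕ → L) (hA : A 0 ≠ 0) :
    alternatingQuotient A B 0 * A 0 = 1 := by
  simp [alternatingQuotient, hA]

lemma alternatingQuotient_mul (A B : ℕ → L) (v : ℕ) :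
    alternatingQuotient A B v * B v =
      -((-1) ^ (v + 1) * (∏ i ∈ range (v + 1), B i) * (∏ i ∈ range (v + 1), A i)⁻¹) := by
  rw [alternatingQuotient, prod_range_succ B]
  ring

lemma alternatingQuotient_succ_mul (B : ℕ → L) {v : ℕ} (hA : A (v + 1) ≠ 0) :
    alternatingQuotient A B (v + 1) * A (v + 1) + alternatingQuotient A B v * B v = 0 := by
  rw [alternatingQuotient_mul, alternatingQuotient, prod_range_succ A (v + 1), mul_inv,
    ← mul_assoc, inv_mul_cancel_right₀ hA, add_neg_cancel]

lemma eq_alternatingQuotient_iff (hA : ∀ v, A v ≠ 0) (hg : 0 < g) {u : ℕ → L} :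
    (u 0 * A 0 = 1 ∧ ∀ v, v + 1 < g → u (v + 1) * A (v + 1) + u v * B v = 0) ↔
      ∀ v < g, u v = alternatingQuotient A B v := by
  constructor
  · rintro ⟨hzero, hsucc⟩ v hv
    refine mul_right_cancel₀ (hA v) ?_
    induction v with
    | zero => rw [hzero, alternatingQuotient_zero_mul B (hA 0)]
    | succ v ih =>
      have hu : u v = alternatingQuotient A B v := mul_right_cancel₀ (hA v) (ih (by omega))
      exact add_right_cancel
        ((hsucc v hv).trans (hu ▸ (alternatingQuotient_succ_mul B (hA (v + 1))).symm))
  · intro hu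
    refine ⟨hu 0 hg ▸ alternatingQuotient_zero_mul B (hA 0), fun v hv => ?_⟩
    rw [hu _ hv, hu _ (by omega), alternatingQuotient_succ_mul B (hA (v + 1))]

lemma trinomialRemainder_eq_one_iff_eq_alternatingQuotient (hA : ∀ v, A v ≠ 0) (hw : 0 < w)
    (hg : 0 < g) :
    trinomialRemainder A B c w g = 1 ↔
      c 0 = (-1) ^ g * (∏ i ∈ range g, B i) * (∏ i ∈ range g, A i)⁻¹ ∧
        (∀ v < g, c (w + v) = alternatingQuotient A B v) ∧ ∀ t, 1 ≤ t → t < w → c t = 0 := by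
  have hlow := eq_alternatingQuotient_iff (B := B) (u := fun v => c (w + v)) hA hg
  rw [add_zero] at hlow
  rw [trinomialRemainder_eq_one_iff A B c hw hg, hlow, and_left_comm (b := ∀ v < g, _)]
  refine and_congr_right fun hu => and_congr_left' ?_
  rw [hu _ (Nat.sub_one_lt_of_lt hg), alternatingQuotient_mul, Nat.sub_add_cancel hg,
    add_neg_eq_zero]

end System

section Trinomial

variable {K L : Type*} [CommRing K] [CommRing L] [Algebra K L] (σ : L ≃ₐ[K] L) (a b : L)

/-- The `σ`-linearized polynomial `a x + b x^σ - x^(σ^d)`, encoded as in `sigmaEval`. -/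
noncomputable def sigmaTrinomial (d : ℕ) : L[X] :=
  C a + C b * X - X ^ d

lemma natDegree_sigmaTrinomial [Nontrivial L] {d : ℕ} (hd : 2 ≤ d) :
    (sigmaTrinomial a b d).natDegree = d := by
  have hlin : (C a + C b * X).natDegree ≤ 1 := by compute_degree
  rw [sigmaTrinomial, natDegree_sub_eq_right_of_natDegree_lt] <;> rw [natDegree_X_pow]
  omega

lemma sigmaEval_sigmaTrinomial (d : ℕ) :
    sigmaEval σ (sigmaTrinomial a b d) =
      LinearMap.mulLeft K a + LinearMap.mulLeft K b ∘ₗ σ.toLinearMap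
        - (σ ^ d : L ≃ₐ[K] L).toLinearMap := by
  rw [sigmaTrinomial, map_sub, map_add, sigmaEval_X_pow, ← pow_one X, C_mul_X_pow_eq_monomial,
    sigmaEval_monomial, ← monomial_zero_left, sigmaEval_monomial]
  ext x
  simp

lemma sigmaMulRight_sigmaTrinomial_X_pow (d e : ℕ) :
    sigmaMulRight σ (sigmaTrinomial a b d) (X ^ e) =
      (σ ^ e) a • X ^ e + (σ ^ e) b • X ^ (e + 1) - X ^ (e + d) := by
  have hmap : (sigmaTrinomial a b d).map (σ ^ e : L ≃ₐ[K] L).toRingHom =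
      C ((σ ^ e) a) + C ((σ ^ e) b) * X - X ^ d := by
    simp [sigmaTrinomial]
  rw [X_pow_eq_monomial, sigmaMulRight_monomial, hmap, ← X_pow_eq_monomial]
  simp only [smul_eq_C_mul, map_one]
  ring

end Trinomial

section TrinomialDivision

variable {K L : Type*} [Field K] [Field L] [Algebra K L] (σ : L ≃ₐ[K] L) (a b : L) {d g : ℕ}

/-- The remainder of `X ^ (d * (d - 1) + g)` modulo `sigmaTrinomial a b d` in `L[X; σ]`. -/
noncomputable def cRemainder (d g : ℕ) : L[X] :=
  trinomialRemainder (fun v => (σ ^ v) a) (fun v => (σ ^ v) b) (fun t => cCoeff σ d g t a b)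
    (d - g) g

lemma map_X_pow_eq_map_cRemainder {M : Type*} [AddCommGroup M] [Module L M] (φ : L[X] →ₗ[L] M)
    (hd : 2 ≤ d) (hg : g ≤ d)
    (hφ : ∀ e, e + d ≤ d * (d - 1) + g →
      φ (X ^ (e + d)) = (σ ^ e) a • φ (X ^ e) + (σ ^ e) b • φ (X ^ (e + 1))) :
    φ (X ^ (d * (d - 1) + g)) = φ (cRemainder σ a b d g) := by
  have hsum : φ (X ^ (d * (d - 1) + g)) =
      ∑ t ∈ range d, cCoeff σ d g t a b • φ (X ^ (g + t)) := by
    rw [add_comm, eq_sum_reductionCoeff_smul (N := d * (d - 1) + g) (fun e => (σ ^ e) a)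
      (fun e => (σ ^ e) b) d (y := fun e => φ (X ^ e)) (by omega) (by simpa using hφ) (by omega),
      Nat.sub_add_cancel (by omega)]
    refine sum_congr rfl fun t ht => ?_
    rw [cCoeff_eq_reductionCoeff σ g a b (mem_range.mp ht)]
  have hwrap {v : ℕ} (hv : v < g) : φ (X ^ (g + (d - g + v))) =
      (σ ^ v) a • φ (X ^ v) + (σ ^ v) b • φ (X ^ (v + 1)) := by
    rw [← hφ v (by have := Nat.le_mul_of_pos_right d (show 0 < d - 1 by omega); omega),
      show g + (d - g + v) = v + d by omega]
  have hsplit := sum_range_add (fun t => cCoeff σ d g t a b • φ (X ^ (g + t))) (d - g) g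
  rw [Nat.sub_add_cancel hg] at hsplit
  rw [hsum, hsplit, cRemainder, trinomialRemainder]
  simp only [map_add, map_sum, map_smul]
  exact congrArg _ (sum_congr rfl fun v hv => by rw [hwrap (mem_range.mp hv)])

lemma exists_sigmaMulRight_eq_X_pow_sub_cRemainder (hd : 2 ≤ d) (hg : g ≤ d) :
    ∃ Q : L[X], Q.natDegree + d ≤ d * (d - 1) + g ∧
      sigmaMulRight σ (sigmaTrinomial a b d) Q =
        X ^ (d * (d - 1) + g) - cRemainder σ a b d g := by
  set N := d * (d - 1) + g
  have hdN : d ≤ N := by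
    have := Nat.le_mul_of_pos_right d (show 0 < d - 1 by omega)
    omega
  set multiples : Submodule L L[X] :=
    (degreeLE L ↑(N - d)).map (sigmaMulRight σ (sigmaTrinomial a b d))
  have hmem : X ^ N - cRemainder σ a b d g ∈ multiples := by
    rw [← Submodule.Quotient.eq]
    refine map_X_pow_eq_map_cRemainder σ a b multiples.mkQ hd hg fun e he => Eq.symm ?_
    simp only [← map_smul, ← map_add]
    refine (Submodule.Quotient.eq _).mpr ?_
    rw [← sigmaMulRight_sigmaTrinomial_X_pow]
    refine Submodule.mem_map_of_mem (mem_degreeLE.mpr ((degree_X_pow_le e).trans ?_))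
    exact_mod_cast Nat.le_sub_of_add_le he
  obtain ⟨Q, hQ, hdiv⟩ := hmem
  have := natDegree_le_iff_degree_le.mpr (mem_degreeLE.mp hQ)
  exact ⟨Q, by omega, hdiv⟩

lemma natDegree_cRemainder_lt (hg : g < d) : (cRemainder σ a b d g).natDegree < d := by
  have := natDegree_trinomialRemainder_lt (fun v => (σ ^ v) a) (fun v => (σ ^ v) b)
    (fun t => cCoeff σ d g t a b) (g := g) (Nat.sub_pos_of_lt hg)
  rwa [Nat.sub_add_cancel hg.le] at this

lemma finrank_ker_sigmaTrinomial_eq_iff [IsGalois K L] (hσ : ∀ τ, τ ∈ Subgroup.zpowers σ)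
    (hd : 2 ≤ d) (hg : g < d) (hn : finrank K L = d * (d - 1) + g) :
    finrank K (LinearMap.ker (sigmaEval σ (sigmaTrinomial a b d))) = d ↔
      cRemainder σ a b d g = 1 := by
  obtain ⟨Q, hdeg, hdiv⟩ := exists_sigmaMulRight_eq_X_pow_sub_cRemainder σ a b hd hg.le
  have : FiniteDimensional K L := .of_finrank_pos (by omega)
  have hR := natDegree_cRemainder_lt σ a b hg
  have hP := natDegree_sigmaTrinomial a b hd
  have hQ : Q ≠ 0 := by
    rintro rfl
    rw [map_zero, eq_comm, sub_eq_zero] at hdiv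
    rw [← hdiv, natDegree_X_pow] at hR
    omega
  have hcomp := congrArg (sigmaEval σ) hdiv
  rw [sigmaEval_sigmaMulRight, map_sub, sigmaEval_X_pow, ← hn, pow_finrank_eq_one] at hcomp
  have := finrank_ker_sigmaEval_eq_natDegree_iff hσ hQ (by omega) (by omega) hcomp
  rwa [hP] at this

lemma cRemainder_eq_one_iff (hg : 0 < g) (hgd : g < d) :
    cRemainder σ a b d g = 1 ↔
      a ≠ 0 ∧
        cCoeff σ d g 0 a b =
          (-1) ^ g * (∏ i ∈ range g, (σ ^ i) b) * (∏ i ∈ range g, (σ ^ i) a)⁻¹ ∧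
        (∀ v < g, cCoeff σ d g (d - g + v) a b =
          alternatingQuotient (fun i => (σ ^ i) a) (fun i => (σ ^ i) b) v) ∧
        ∀ t, 1 ≤ t → t < d - g → cCoeff σ d g t a b = 0 := by
  have hw : 0 < d - g := Nat.sub_pos_of_lt hgd
  by_cases ha : a = 0
  · simp [cRemainder, trinomialRemainder_eq_one_iff _ _ _ hw hg, ha]
  · have hA (v : ℕ) : (σ ^ v) a ≠ 0 := (_root_.map_ne_zero _).mpr ha
    rw [cRemainder, trinomialRemainder_eq_one_iff_eq_alternatingQuotient hA hw hg]
    exact (and_iff_right ha).symm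

end TrinomialDivision

theorem stmt_3_general {K L : Type*} [Field K] [Field L] [Algebra K L] [IsGalois K L]
    {σ : L ≃ₐ[K] L} (hσ : ∀ τ, τ ∈ Subgroup.zpowers σ) {d g : ℕ} (hg1 : 1 ≤ g)
    (hg2 : g ≤ d - 1) (hn : finrank K L = d * (d - 1) + g) (a b : L) :
    finrank K
      (LinearMap.ker
        (LinearMap.mulLeft K a + LinearMap.mulLeft K b ∘ₗ σ.toLinearMap
          - (σ ^ d : L ≃ₐ[K] L).toLinearMap)) = d
      ↔ (a ≠ 0
          ∧ cCoeff σ d g 0 a b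
              = (-1 : L) ^ g * (∏ i ∈ range g, (σ ^ i) b) * (∏ i ∈ range g, (σ ^ i) a)⁻¹
          ∧ (∀ v : ℕ, v ≤ g - 1 →
              cCoeff σ d g (d - g + v) a b
                = (-1 : L) ^ v * (∏ i ∈ range v, (σ ^ i) b)
                  * (∏ i ∈ range (v + 1), (σ ^ i) a)⁻¹)
          ∧ (∀ t : ℕ, 1 ≤ t → t ≤ d - g - 1 → cCoeff σ d g t a b = 0)) := by
  have hgd : g < d := by omega
  simp only [Nat.le_sub_one_iff_lt hg1, Nat.le_sub_one_iff_lt (Nat.sub_pos_of_lt hgd)]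
  rw [← sigmaEval_sigmaTrinomial, finrank_ker_sigmaTrinomial_eq_iff σ a b hσ (by omega) hgd hn]
  exact cRemainder_eq_one_iff σ a b hg1 hgd

/-- (Theorem `th:main`.) With `σ : x ↦ x^{q^s}`, `gcd(s,n)=1`, `d ≥ 3`,
`n = d(d-1)+g`, `1 ≤ g ≤ d-1`: the `F_q`-dimension of the kernel of
`x ↦ a·x + b·σ(x) − σ^d(x)` equals `d` iff `a ≠ 0` and the coefficients `c_{d-1,t}`
satisfy the stated system of equations. -/
theorem stmt_3 (p q : ℕ) (hp : p.Prime) (hq : ∃ m : ℕ, 0 < m ∧ q = p ^ m)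
    (K L : Type*) [Field K] [Field L] [Fintype K] [Fintype L] [Algebra K L]
    (hcardK : Fintype.card K = q)
    (n : ℕ) (hn : 0 < n) (hcardL : Fintype.card L = q ^ n)
    (s : ℕ) (hs : 0 < s) (hsn : Nat.gcd s n = 1)
    (σ : L ≃ₐ[K] L) (hσ : ∀ x : L, σ x = x ^ q ^ s)
    (d g : ℕ) (hd : 3 ≤ d) (hg1 : 1 ≤ g) (hg2 : g ≤ d - 1)
    (hnval : n = d * (d - 1) + g)
    (a b : L) :
    Module.finrank K
      (LinearMap.ker
        (LinearMap.mulLeft K a + LinearMap.mulLeft K b ∘ₗ σ.toLinearMap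
          - (σ ^ d : L ≃ₐ[K] L).toLinearMap)) = d
      ↔ (a ≠ 0
          ∧ cCoeff σ d g 0 a b
              = (-1 : L) ^ g * (∏ i ∈ Finset.range g, (σ ^ i) b)
                * (∏ i ∈ Finset.range g, (σ ^ i) a)⁻¹
          ∧ (∀ v : ℕ, v ≤ g - 1 →
              cCoeff σ d g (d - g + v) a b
                = (-1 : L) ^ v * (∏ i ∈ Finset.range v, (σ ^ i) b)
                  * (∏ i ∈ Finset.range (v + 1), (σ ^ i) a)⁻¹)
          ∧ (∀ t : ℕ, 1 ≤ t → t ≤ d - g - 1 → cCoeff σ d g t a b = 0)) := by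
  subst hcardK
  have hfinrank := finrank_eq_of_card_eq_card_pow hcardL
  exact stmt_3_general (mem_zpowers_of_eq_pow_card_pow hσ (hfinrank ▸ hsn)) hg1 hg2
    (hfinrank.trans hnval) a b
end

section
/- Let d, n, s be positive integers with gcd(s,n)=1, d ≥ 3 and n = d(d−1)+g for some g ∈ {1,…,d−1}, and let a, b ∈ F_{q^n}. If the F_q-dimension of the kernel of a·x + b·x^σ − x^{σ^d} equals d, then a ≠ 0 and the following two equations hold: (∏_{i=0}^{g−1} σ^i(b)) · (∏_{i=0}^{g−1} σ^i(a))^{−1} = (−1)^g · ∏_{i=0}^{d−2} σ^{g+id}(a), and (∏_{i=0}^{g−2} σ^i(b)) · (∏_{i=0}^{g−1} σ^i(a))^{−1} = (−1)^{g−1} · ∏_{i=1}^{d−1} σ^{g−1+(d−1)i}(b), where empty products equal 1 and powers of σ are taken modulo n. -/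
/-!
On the kernel of `a x + b σ(x) - σ^d(x)` every power `σ^k` is a combination of `1, σ, …, σ^(d-1)`.
If the kernel has dimension `d`, Moore's determinant shows that these coefficients are unique, so
for `k = n` the identity `σ^n = 1` forces them to be `1, 0, …, 0`. Running the recursion for the
coefficients backwards from `n` through `g` (resp. `g - 1`) steps writes the constant coefficient
of `σ^(d(d-1))` (resp. `σ^(d(d-1)+1)`) as `± ∏ σ^i(b) / ∏ σ^i(a)`. Running it forwards from `0`, the
coefficient of `σ^(d-1)` vanishes so often that the first of these constant coefficients is a single
product of conjugates of `a`, and the second is `a` times a product of conjugates of `b`.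
-/

open Finset Module

section Moore

/-- The Moore matrix of a family `v` with respect to `σ`: its `i`-th row is
`(v i, σ (v i), σ² (v i), …)`. Its determinant detects linear independence of `v` over the fixed
field of `σ`. -/
def mooreMatrix {K L : Type*} [CommSemiring K] [Semiring L] [Algebra K L] (σ : L ≃ₐ[K] L) {m : ℕ}
    (v : Fin m → L) : Matrix (Fin m) (Fin m) L :=
  .of fun i j => (σ ^ (j : ℕ)) (v i)

-- A relation and its image under `σ` have the same first term once `c 0 = 1`, so it cancels.
lemma sum_apply_sub_mul_pow_apply_eq_zero {K L : Type*} [CommSemiring K] [CommRing L] [Algebra K L]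
    {σ : L ≃ₐ[K] L} {m : ℕ} {v c : Fin (m + 1) → L} (hc0 : c 0 = 1)
    (hc : ∀ j < m + 1, ∑ i, c i * (σ ^ j) (v i) = 0) {j : ℕ} (hj : j < m) :
    ∑ i : Fin m, (σ (c i.succ) - c i.succ) * (σ ^ j) (σ (v i.succ)) = 0 := by
  have hshift : ∑ i, c i * (σ ^ j) (σ (v i)) = 0 := by
    simpa only [pow_succ, AlgEquiv.mul_apply] using hc (j + 1) (by omega)
  have htwist : ∑ i, σ (c i) * (σ ^ j) (σ (v i)) = 0 := by
    simpa only [map_sum, map_mul, map_zero, ← AlgEquiv.mul_apply, ← pow_succ, ← pow_succ'] using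
      congrArg σ (hc j (by omega))
  rw [Fin.sum_univ_succ] at hshift htwist
  simp only [sub_mul, sum_sub_distrib]
  simp only [hc0, map_one] at hshift htwist
  linear_combination htwist - hshift

variable {K L : Type*} [Field K] [Field L] [Algebra K L] {σ : L ≃ₐ[K] L}

lemma eq_zero_of_sum_mul_pow_apply_eq_zero (hfix : ∀ z, σ z = z → z ∈ Set.range (algebraMap K L))
    {m : ℕ} {v : Fin m → L} (hv : LinearIndependent K v) {c : Fin m → L}
    (hc : ∀ j < m, ∑ i, c i * (σ ^ j) (v i) = 0) : c = 0 := by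
  induction m with
  | zero => exact Subsingleton.elim _ _
  | succ m ih =>
    have htail : LinearIndependent K fun i : Fin m => v i.succ :=
      hv.comp _ (Fin.succ_injective m)
    by_cases hc0 : c 0 = 0
    · have hsucc : (fun i : Fin m => c i.succ) = 0 := ih htail fun j hj => by
        simpa [Fin.sum_univ_succ, hc0] using hc j (by omega)
      exact funext (Fin.cases hc0 (congrFun hsucc))
    · set c' : Fin (m + 1) → L := fun i => (c 0)⁻¹ * c i with hc'_def
      have hc'0 : c' 0 = 1 := inv_mul_cancel₀ hc0
      have hc' : ∀ j < m + 1, ∑ i, c' i * (σ ^ j) (v i) = 0 := fun j hj => by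
        simp only [hc'_def, mul_assoc, ← mul_sum, hc j hj, mul_zero]
      have hσv : LinearIndependent K fun i : Fin m => σ (v i.succ) :=
        htail.map' σ.toLinearMap σ.toLinearEquiv.ker
      have hdiff := ih hσv fun j hj => sum_apply_sub_mul_pow_apply_eq_zero hc'0 hc' hj
      have hfixed : ∀ i, σ (c' i) = c' i :=
        Fin.cases (by rw [hc'0, map_one]) fun i => sub_eq_zero.1 (congrFun hdiff i)
      choose k hk using fun i => hfix _ (hfixed i)
      have hk0 : k 0 = 0 := Fintype.linearIndependent_iff.1 hv k
        (by simpa [Algebra.smul_def, hk] using hc' 0 (by omega)) 0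
      simp [← hk, hk0] at hc'0

lemma det_mooreMatrix_ne_zero (hfix : ∀ z, σ z = z → z ∈ Set.range (algebraMap K L))
    {m : ℕ} {v : Fin m → L} (hv : LinearIndependent K v) : (mooreMatrix σ v).det ≠ 0 := by
  intro hdet
  obtain ⟨c, hc_ne, hc⟩ := Matrix.exists_vecMul_eq_zero_iff.2 hdet
  exact hc_ne (eq_zero_of_sum_mul_pow_apply_eq_zero hfix hv fun j hj => congrFun hc ⟨j, hj⟩)

lemma coeff_eq_of_sum_mul_pow_apply_eq (hfix : ∀ z, σ z = z → z ∈ Set.range (algebraMap K L))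
    {m : ℕ} {W : Submodule K L} (hW : m ≤ finrank K W) {e f : ℕ → L}
    (hef : ∀ x ∈ W, ∑ j ∈ range m, e j * (σ ^ j) x = ∑ j ∈ range m, f j * (σ ^ j) x)
    {j : ℕ} (hj : j < m) : e j = f j := by
  obtain ⟨v, hv⟩ := exists_linearIndependent_of_le_finrank hW
  have hdet : (mooreMatrix σ fun i => (v i : L)).det ≠ 0 :=
    det_mooreMatrix_ne_zero hfix (hv.map' W.subtype W.ker_subtype)
  have hzero : (fun j : Fin m => e j - f j) = 0 :=
    Matrix.eq_zero_of_mulVec_eq_zero hdet <| funext fun i => by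
      have hvi := sub_eq_zero.2 (hef (v i) (v i).2)
      rw [← sum_sub_distrib, sum_range] at hvi
      simpa [Matrix.mulVec, dotProduct, mooreMatrix, ← sub_mul, mul_comm] using hvi
  exact sub_eq_zero.1 (congrFun hzero ⟨j, hj⟩)

end Moore

section TrinomialRem

/-- `trinomialRem σ a b t k j` is the coefficient of `σ^j` in the remainder of `σ^k` modulo the
skew trinomial `σ^(t+2) - b σ - a`. Only the entries with `j ≤ t + 1` belong to the remainder; the
index `j` runs over `ℕ` to keep the recursion simple. The degree `d ≥ 2` of the trinomial is
written `t + 2`, so that `t + 1` is the top index. -/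
def trinomialRem {K L : Type*} [CommSemiring K] [Semiring L] [Algebra K L] (σ : L ≃ₐ[K] L)
    (a b : L) (t : ℕ) : ℕ → ℕ → L
  | 0, 0 => 1
  | 0, _ + 1 => 0
  | k + 1, 0 => a * σ (trinomialRem σ a b t k (t + 1))
  | k + 1, 1 => σ (trinomialRem σ a b t k 0) + b * σ (trinomialRem σ a b t k (t + 1))
  | k + 1, j + 2 => σ (trinomialRem σ a b t k (j + 1))

variable {K L : Type*} [CommSemiring K] [CommRing L] [Algebra K L] (σ : L ≃ₐ[K] L) (a b : L)
  (t : ℕ)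

lemma pow_apply_eq_sum_trinomialRem {x : L} (hx : (σ ^ (t + 2)) x = a * x + b * σ x) (k : ℕ) :
    (σ ^ k) x = ∑ j ∈ range (t + 2), trinomialRem σ a b t k j * (σ ^ j) x := by
  induction k with
  | zero => simp [sum_range_succ', trinomialRem]
  | succ k ih =>
    rw [pow_succ', AlgEquiv.mul_apply, ih, map_sum, sum_range_succ, sum_range_succ',
      sum_range_succ', sum_range_succ']
    simp only [map_mul, ← AlgEquiv.mul_apply, ← pow_succ', hx, trinomialRem]
    simp only [zero_add, pow_one, pow_zero, AlgEquiv.one_apply]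
    ring

lemma trinomialRem_add_add (k j m : ℕ) :
    trinomialRem σ a b t (k + m) (j + 1 + m) = (σ ^ m) (trinomialRem σ a b t k (j + 1)) := by
  induction m with
  | zero => simp
  | succ m ih =>
    rw [pow_succ', AlgEquiv.mul_apply, ← ih, ← add_assoc, show j + 1 + (m + 1) = j + m + 2 by ring,
      trinomialRem, add_right_comm j 1 m]

lemma trinomialRem_top_add (k : ℕ) :
    trinomialRem σ a b t (k + (t + 1)) (t + 1) = (σ ^ (t + 1)) (trinomialRem σ a b t k 0)
      + (σ ^ t) b * (σ ^ (t + 1)) (trinomialRem σ a b t k (t + 1)) := by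
  have hshift := trinomialRem_add_add σ a b t (k + 1) 0 t
  rw [show k + 1 + t = k + (t + 1) by ring, show 0 + 1 + t = t + 1 by ring] at hshift
  rw [hshift, trinomialRem, map_add, map_mul, pow_succ, AlgEquiv.mul_apply, AlgEquiv.mul_apply]

lemma trinomialRem_top_of_le {r : ℕ} (hr : r ≤ t) : trinomialRem σ a b t r (t + 1) = 0 := by
  obtain ⟨j, rfl⟩ := Nat.exists_eq_add_of_le' hr
  simpa [trinomialRem, add_right_comm j 1 r] using trinomialRem_add_add σ a b (j + r) 0 j r

lemma trinomialRem_top_eq_zero {i r : ℕ} (hir : i ≤ r) (hr : r ≤ t) :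
    trinomialRem σ a b t ((t + 1) * i + r) (t + 1) = 0 := by
  induction i generalizing r with
  | zero => simpa using trinomialRem_top_of_le σ a b t hr
  | succ i ih =>
    obtain ⟨r, rfl⟩ := Nat.exists_eq_succ_of_ne_zero (show r ≠ 0 by omega)
    have hzero : trinomialRem σ a b t ((t + 1) * i + (r + 1)) 0 = 0 := by
      rw [← add_assoc, trinomialRem, ih (by omega) (by omega), map_zero, mul_zero]
    rw [show (t + 1) * (i + 1) + (r + 1) = (t + 1) * i + (r + 1) + (t + 1) by ring,
      trinomialRem_top_add, hzero, ih (by omega) hr]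
    simp

lemma trinomialRem_mul_zero {i : ℕ} (hi : i ≤ t + 1) :
    trinomialRem σ a b t ((t + 2) * i) 0 = ∏ l ∈ range i, (σ ^ (l * (t + 2))) a := by
  induction i with
  | zero => simp [trinomialRem]
  | succ i ih =>
    have htop : trinomialRem σ a b t ((t + 2) * i) (t + 1) = 0 := by
      rw [show (t + 2) * i = (t + 1) * i + i by ring]
      exact trinomialRem_top_eq_zero σ a b t le_rfl (by omega)
    rw [show (t + 2) * (i + 1) = (t + 2) * i + (t + 1) + 1 by ring, trinomialRem,
      trinomialRem_top_add, htop, ih (by omega), map_zero, mul_zero, add_zero,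
      ← AlgEquiv.mul_apply, ← pow_succ', map_prod, prod_range_succ', mul_comm]
    simp only [← AlgEquiv.mul_apply, ← pow_add, zero_mul, pow_zero, AlgEquiv.one_apply,
      show ∀ l, t + 1 + 1 + l * (t + 2) = (l + 1) * (t + 2) by intro l; ring]

lemma trinomialRem_top_mul {i : ℕ} (hi : i ≤ t + 1) :
    trinomialRem σ a b t ((t + 1) * (i + 1)) (t + 1)
      = ∏ l ∈ range i, (σ ^ (t + (t + 1) * l)) b := by
  induction i with
  | zero =>
    have htop : trinomialRem σ a b t 0 (t + 1) = 0 := rfl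
    simpa [trinomialRem, htop] using trinomialRem_top_add σ a b t 0
  | succ i ih =>
    have hzero : trinomialRem σ a b t ((t + 1) * (i + 1)) 0 = 0 := by
      rw [show (t + 1) * (i + 1) = (t + 1) * i + t + 1 by ring, trinomialRem,
        trinomialRem_top_eq_zero σ a b t (by omega) le_rfl, map_zero, mul_zero]
    rw [mul_add_one (t + 1) (i + 1), trinomialRem_top_add, hzero, ih (by omega), map_zero,
      zero_add, map_prod, prod_range_succ', mul_comm]
    simp only [← AlgEquiv.mul_apply, ← pow_add, mul_zero, add_zero,
      show ∀ l, t + 1 + (t + (t + 1) * l) = t + (t + 1) * (l + 1) by intro l; ring]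

lemma trinomialRem_mul_add_one_zero :
    trinomialRem σ a b t ((t + 2) * (t + 1) + 1) 0
      = a * ∏ i ∈ Icc 1 (t + 1), (σ ^ ((t + 1) * i)) b := by
  rw [trinomialRem, mul_comm (t + 2), trinomialRem_top_mul σ a b t le_rfl, map_prod,
    ← Ico_add_one_right_eq_Icc, prod_Ico_eq_prod_range]
  simp only [← AlgEquiv.mul_apply, ← pow_succ', Nat.add_sub_cancel,
    show ∀ l, t + (t + 1) * l + 1 = (t + 1) * (1 + l) by intro l; ring]

variable {σ a b t}

lemma pow_trinomialRem_zero_mul_prod {k j : ℕ} (hzero : trinomialRem σ a b t (k + j) 0 = 1)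
    (hsucc : ∀ i < j, trinomialRem σ a b t (k + j) (i + 1) = 0) :
    (σ ^ j) (trinomialRem σ a b t k 0) * ∏ i ∈ range j, (σ ^ i) a
      = (-1) ^ j * ∏ i ∈ range j, (σ ^ i) b := by
  induction j generalizing k with
  | zero => simpa using hzero
  | succ j ih =>
    rw [show k + (j + 1) = k + 1 + j by ring] at hzero hsucc
    have hind := ih hzero fun i hi => hsucc i (by omega)
    have hone : (σ ^ j) (trinomialRem σ a b t (k + 1) 1) = 0 := by
      rw [← hsucc j (by omega), ← zero_add 1, ← trinomialRem_add_add]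
      congr 1; ring
    simp only [trinomialRem, map_add, map_mul] at hone hind
    rw [pow_succ, AlgEquiv.mul_apply, prod_range_succ, prod_range_succ]
    linear_combination (∏ i ∈ range j, (σ ^ i) a) * (σ ^ j) a * hone - (σ ^ j) b * hind

end TrinomialRem

section FixedField

variable {K L : Type*} [Field K] [Field L] [Algebra K L] {σ : L ≃ₐ[K] L}

lemma mem_range_algebraMap_of_orderOf_eq_finrank [FiniteDimensional K L] [IsGalois K L]
    (hσ : orderOf σ = finrank K L) {z : L} (hz : σ z = z) : z ∈ Set.range (algebraMap K L) := by
  refine IntermediateField.mem_bot.1 ((IsGalois.mem_bot_iff_fixed z).2 fun τ => ?_)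
  have hτ : τ ∈ Subgroup.zpowers σ := by
    rw [(Subgroup.zpowers σ).eq_top_of_card_eq
      (by rw [Nat.card_zpowers, hσ, IsGalois.card_aut_eq_finrank])]
    exact Subgroup.mem_top τ
  have hstab : Subgroup.zpowers σ ≤ MulAction.stabilizer (L ≃ₐ[K] L) z := by
    rwa [Subgroup.zpowers_le]
  exact hstab hτ

lemma orderOf_eq_finrank_of_coprime [Fintype K] [Finite L] {s : ℕ}
    (hs : s.Coprime (finrank K L)) (hσ : ∀ x, σ x = x ^ Fintype.card K ^ s) :
    orderOf σ = finrank K L := by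
  have hfrob : σ = FiniteField.frobeniusAlgEquivOfAlgebraic K L ^ s := by
    ext x
    rw [hσ, AlgEquiv.coe_pow, FiniteField.coe_frobeniusAlgEquivOfAlgebraic_iterate]
  rw [← FiniteField.orderOf_frobeniusAlgEquivOfAlgebraic K L] at hs ⊢
  rw [hfrob, hs.symm.orderOf_pow]

end FixedField

section Kernel

variable {K L : Type*} [Field K] [Field L] [Algebra K L] {σ : L ≃ₐ[K] L} {a b : L}

lemma trinomialRem_eq_ite_of_le_finrank_ker
    (hfix : ∀ z, σ z = z → z ∈ Set.range (algebraMap K L)) {n t : ℕ} (hσn : σ ^ n = 1)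
    (hker : t + 2 ≤ finrank K (LinearMap.ker (LinearMap.mulLeft K a
      + LinearMap.mulLeft K b ∘ₗ σ.toLinearMap - (σ ^ (t + 2) : L ≃ₐ[K] L).toLinearMap)))
    {j : ℕ} (hj : j < t + 2) : trinomialRem σ a b t n j = if j = 0 then 1 else 0 := by
  refine coeff_eq_of_sum_mul_pow_apply_eq hfix hker (f := fun j => if j = 0 then 1 else 0)
    (fun x hx => ?_) hj
  have hx' : (σ ^ (t + 2)) x = a * x + b * σ x := (sub_eq_zero.1 hx).symm
  rw [← pow_apply_eq_sum_trinomialRem σ a b t hx' n, hσn]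
  simp

lemma prod_mul_inv_prod_eq_pow_trinomialRem_zero (ha : a ≠ 0) {t k j : ℕ}
    (hzero : trinomialRem σ a b t (k + j) 0 = 1)
    (hsucc : ∀ i < j, trinomialRem σ a b t (k + j) (i + 1) = 0) :
    (∏ i ∈ range j, (σ ^ i) b) * (∏ i ∈ range j, (σ ^ i) a)⁻¹
      = (-1) ^ j * (σ ^ j) (trinomialRem σ a b t k 0) := by
  have hprod : ∏ i ∈ range j, (σ ^ i) a ≠ 0 :=
    prod_ne_zero_iff.2 fun i _ => (map_ne_zero _).2 ha
  rw [← div_eq_mul_inv, div_eq_iff hprod, mul_assoc, pow_trinomialRem_zero_mul_prod hzero hsucc,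
    ← mul_assoc, ← mul_pow, neg_one_mul, neg_neg, one_pow, one_mul]

end Kernel

theorem stmt_4_general {K L : Type*} [Field K] [Field L] [Algebra K L] {σ : L ≃ₐ[K] L}
    (hfix : ∀ z, σ z = z → z ∈ Set.range (algebraMap K L)) {d g : ℕ} (hg1 : 1 ≤ g)
    (hg2 : g ≤ d - 1) (hσn : σ ^ (d * (d - 1) + g) = 1) {a b : L}
    (hker : d ≤ finrank K (LinearMap.ker (LinearMap.mulLeft K a
      + LinearMap.mulLeft K b ∘ₗ σ.toLinearMap - (σ ^ d : L ≃ₐ[K] L).toLinearMap))) :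
    a ≠ 0
      ∧ (∏ i ∈ range g, (σ ^ i) b) * (∏ i ∈ range g, (σ ^ i) a)⁻¹
          = (-1 : L) ^ g * ∏ i ∈ range (d - 1), (σ ^ (g + i * d)) a
      ∧ (∏ i ∈ range (g - 1), (σ ^ i) b) * (∏ i ∈ range g, (σ ^ i) a)⁻¹
          = (-1 : L) ^ (g - 1) * ∏ i ∈ Icc 1 (d - 1), (σ ^ (g - 1 + (d - 1) * i)) b := by
  obtain ⟨t, rfl⟩ := Nat.exists_eq_add_of_le' (show 2 ≤ d by omega)
  obtain ⟨g, rfl⟩ := Nat.exists_eq_add_of_le' hg1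
  simp only [show t + 2 - 1 = t + 1 by omega, Nat.add_sub_cancel] at *
  have hrem := fun j => trinomialRem_eq_ite_of_le_finrank_ker (j := j) hfix hσn hker
  have hzero := hrem 0 (by omega)
  have hsucc : ∀ i < t + 1, trinomialRem σ a b t _ (i + 1) = 0 := fun i hi => hrem _ (by omega)
  have ha : a ≠ 0 := by
    rintro rfl
    simp [trinomialRem] at hzero
  refine ⟨ha, ?_, ?_⟩
  · have hquot := prod_mul_inv_prod_eq_pow_trinomialRem_zero ha hzero fun i hi =>
      hsucc i (by omega)
    rw [hquot, trinomialRem_mul_zero σ a b t le_rfl, map_prod]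
    simp only [← AlgEquiv.mul_apply, ← pow_add]
  · rw [add_comm g 1, ← add_assoc] at hzero hsucc
    have hquot := prod_mul_inv_prod_eq_pow_trinomialRem_zero ha hzero fun i hi =>
      hsucc i (by omega)
    have hσa : (σ ^ g) a ≠ 0 := (map_ne_zero _).2 ha
    rw [prod_range_succ, mul_inv, ← mul_assoc, hquot, trinomialRem_mul_add_one_zero, map_mul,
      map_prod, mul_left_comm, mul_comm, inv_mul_cancel_left₀ hσa]
    simp only [← AlgEquiv.mul_apply, ← pow_add]

/-- (Corollary `cor:neccond`.) With `σ : x ↦ x^{q^s}`, `gcd(s,n)=1`,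
`d ≥ 3`, `n = d(d-1)+g`, `1 ≤ g ≤ d-1`: if the `F_q`-dimension of the kernel of
`x ↦ a·x + b·σ(x) − σ^d(x)` equals `d`, then `a ≠ 0` and
`(∏_{i=0}^{g-1} σ^i(b))·(∏_{i=0}^{g-1} σ^i(a))⁻¹ = (-1)^g·∏_{i=0}^{d-2} σ^{g+id}(a)` and
`(∏_{i=0}^{g-2} σ^i(b))·(∏_{i=0}^{g-1} σ^i(a))⁻¹ = (-1)^{g-1}·∏_{i=1}^{d-1} σ^{g-1+(d-1)i}(b)`. -/
theorem stmt_4 (p q : ℕ) (hp : p.Prime) (hq : ∃ m : ℕ, 0 < m ∧ q = p ^ m)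
    (K L : Type*) [Field K] [Field L] [Fintype K] [Fintype L] [Algebra K L]
    (hcardK : Fintype.card K = q)
    (n : ℕ) (hn : 0 < n) (hcardL : Fintype.card L = q ^ n)
    (s : ℕ) (hs : 0 < s) (hsn : Nat.gcd s n = 1)
    (σ : L ≃ₐ[K] L) (hσ : ∀ x : L, σ x = x ^ q ^ s)
    (d g : ℕ) (hd : 3 ≤ d) (hg1 : 1 ≤ g) (hg2 : g ≤ d - 1)
    (hnval : n = d * (d - 1) + g)
    (a b : L)
    (hker : Module.finrank K
      (LinearMap.ker
        (LinearMap.mulLeft K a + LinearMap.mulLeft K b ∘ₗ σ.toLinearMap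
          - (σ ^ d : L ≃ₐ[K] L).toLinearMap)) = d) :
    a ≠ 0
      ∧ (∏ i ∈ Finset.range g, (σ ^ i) b) * (∏ i ∈ Finset.range g, (σ ^ i) a)⁻¹
          = (-1 : L) ^ g * ∏ i ∈ Finset.range (d - 1), (σ ^ (g + i * d)) a
      ∧ (∏ i ∈ Finset.range (g - 1), (σ ^ i) b) * (∏ i ∈ Finset.range g, (σ ^ i) a)⁻¹
          = (-1 : L) ^ (g - 1)
            * ∏ i ∈ Finset.Icc 1 (d - 1), (σ ^ (g - 1 + (d - 1) * i)) b := by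
  subst hcardK hnval
  have hfinrank : finrank K L = d * (d - 1) + g :=
    Nat.pow_right_injective Fintype.one_lt_card (card_eq_pow_finrank.symm.trans hcardL)
  have hord : orderOf σ = finrank K L := orderOf_eq_finrank_of_coprime (hfinrank ▸ hsn) hσ
  exact stmt_4_general (fun _ => mem_range_algebraMap_of_orderOf_eq_finrank hord) hg1 hg2
    (hfinrank ▸ hord ▸ pow_orderOf_eq_one σ) hker.ge
end

section
/- Let q be even, let d ≥ 4 be a power of 2, let n = d²−1 = (d−1)d + (d−1), and let s be a positive integer with gcd(s,n)=1. Let a ∈ F_{q^n} with N_{q^n/q}(a) = 1 and set b = (∏_{i=1}^{d−1} σ^{id}(a))^{−1}. Then the F_q-dimension of the kernel of the σ-linearized polynomial −x^{σ^d} + b·x^σ + a·x equals d. -/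
/-!
By Hilbert's Theorem 90 applied to the generator `σ ^ d` of the Galois group, `a = σ^d(c) / c` for
some `c ≠ 0`. As `σ^{d²} = σ`, the product defining `b` telescopes to `b = σ^d(c) / σ(c)`.
Substituting `x = c y` therefore turns `-x^{σ^d} + b x^σ + a x` into
`-σ^d(c) (y^{σ^d} - y^σ - y)`, so the kernel in question has the dimension of `ker h(σ)`, where
`h = X^d - X - 1`. In characteristic `2` we have `X (X^{d²-1} - 1) = h^d + h`, so `h` divides
`X^n - 1`, which is the minimal polynomial of `σ`. This minimal polynomial has full degree `n`, and
for such an endomorphism the kernel of each divisor `h` evaluated at it has dimension `deg h`.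
-/

open Polynomial

section MinimalPolynomial

theorem coe_aeval_restrict_apply {R M : Type*} [CommRing R] [AddCommGroup M] [Module R M]
    {T : Module.End R M} {N : Submodule R M} (hN : ∀ x ∈ N, T x ∈ N) (p : R[X]) (x : N) :
    (aeval (T.restrict hN : Module.End R N) p x : M) = aeval T p x := by
  induction p using Polynomial.induction_on' with
  | add p q hp hq => simp [hp, hq]
  | monomial k r => simp [aeval_monomial, Module.End.pow_restrict k hN, LinearMap.restrict_apply]

variable {K V : Type*} [Field K] [AddCommGroup V] [Module K V] [FiniteDimensional K V]

-- The characteristic polynomial of `T` on the range of `h(T)`, times `h`, annihilates `T`.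
theorem natDegree_minpoly_le_finrank_range_aeval_add (T : Module.End K V) {h : K[X]} (hh : h ≠ 0) :
    (minpoly K T).natDegree ≤ Module.finrank K (LinearMap.range (aeval T h)) + h.natDegree := by
  set R := LinearMap.range (aeval T h)
  have hcomm : Commute (aeval T h) T := by simpa using (Commute.all h X).map (aeval T)
  have hR : ∀ x ∈ R, T x ∈ R := by
    rintro _ ⟨x, rfl⟩
    exact ⟨T x, LinearMap.congr_fun hcomm x⟩
  set χ := (T.restrict hR).charpoly
  have hχ : aeval T (χ * h) = 0 := by
    ext x
    rw [map_mul, Module.End.mul_apply, ← coe_aeval_restrict_apply hR χ ⟨_, x, rfl⟩,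
      LinearMap.aeval_self_charpoly]
    rfl
  calc (minpoly K T).natDegree
      ≤ (χ * h).natDegree :=
        natDegree_le_of_dvd (minpoly.dvd K T hχ)
          (mul_ne_zero (LinearMap.charpoly_monic _).ne_zero hh)
    _ = Module.finrank K R + h.natDegree := by
        rw [natDegree_mul (LinearMap.charpoly_monic _).ne_zero hh, LinearMap.charpoly_natDegree]

theorem finrank_ker_aeval_of_dvd_minpoly {T : Module.End K V}
    (hT : (minpoly K T).natDegree = Module.finrank K V) {h : K[X]} (hdvd : h ∣ minpoly K T) :
    Module.finrank K (LinearMap.ker (aeval T h)) = h.natDegree := by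
  obtain ⟨g, hg⟩ := hdvd
  obtain ⟨hh₀, hg₀⟩ : h ≠ 0 ∧ g ≠ 0 :=
    mul_ne_zero_iff.mp (hg ▸ minpoly.ne_zero (Algebra.IsIntegral.isIntegral T))
  have hdeg : h.natDegree + g.natDegree = Module.finrank K V := by
    rw [← natDegree_mul hh₀ hg₀, ← hg, hT]
  have hrange : LinearMap.range (aeval T g) ≤ LinearMap.ker (aeval T h) := by
    rw [LinearMap.range_le_ker_iff, ← Module.End.mul_eq_comp, ← map_mul, ← hg, minpoly.aeval]
  have := Submodule.finrank_mono hrange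
  have := natDegree_minpoly_le_finrank_range_aeval_add T hh₀
  have := natDegree_minpoly_le_finrank_range_aeval_add T hg₀
  have := LinearMap.finrank_range_add_finrank_ker (aeval T h)
  lia

end MinimalPolynomial

theorem pow_sub_self_sub_one_dvd_pow_sub_one {R : Type*} [CommRing R] [CharP R 2] (x : R)
    {d m : ℕ} (hd : d = 2 ^ m) : x ^ d - x - 1 ∣ x ^ (d ^ 2 - 1) - 1 := by
  have hd₀ : d ≠ 0 := hd ▸ (Nat.two_pow_pos m).ne'
  have hcoprime : IsCoprime (x ^ d - x - 1) x :=
    ⟨-1, x ^ (d - 1) - 1, by rw [← pow_sub_one_mul hd₀ x]; ring⟩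
  have hfrob : (x ^ d - x - 1) ^ d = (x ^ d) ^ d - x ^ d - 1 := by
    subst hd
    rw [sub_pow_char_pow, sub_pow_char_pow, one_pow]
  have hmul : (x ^ (d ^ 2 - 1) - 1) * x = (x ^ d - x - 1) ^ d + (x ^ d - x - 1) := by
    rw [sub_mul, pow_sub_one_mul (pow_ne_zero 2 hd₀), hfrob, ← pow_mul, ← sq]
    linear_combination CharTwo.two_eq_zero (R := R)
  refine hcoprime.dvd_of_dvd_mul_right ?_
  rw [hmul]
  exact dvd_add (dvd_pow_self _ hd₀) dvd_rfl

section CyclicExtension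

variable {K L : Type*} [Field K] [Field L] [Algebra K L]

-- Hilbert 90: `c⁻¹` is the Lagrange resolvent `y` below, nonzero for some `z` by Dedekind.
-- (`groupCohomology.exists_div_of_norm_eq_one` only covers fields in the universe `Type`.)
theorem exists_apply_eq_mul_of_prod_eq_one {τ : L ≃ₐ[K] L} (hτ : IsOfFinOrder τ) {a : L}
    (ha : ∏ i ∈ Finset.range (orderOf τ), (τ ^ i) a = 1) : ∃ c : L, c ≠ 0 ∧ τ c = a * c := by
  set u : ℕ → L := fun i ↦ ∏ j ∈ Finset.range i, (τ ^ j) a with hu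
  have hu_succ (i : ℕ) : a * τ (u i) = u (i + 1) := by
    simp only [hu, Finset.prod_range_succ', map_prod, pow_succ', AlgEquiv.mul_apply, pow_zero,
      AlgEquiv.one_apply, mul_comm]
  have hindep : LinearIndependent L fun i : Fin (orderOf τ) ↦ ⇑(τ ^ (i : ℕ)) :=
    (linearIndependent_monoidHom L L).comp
      (fun i : Fin (orderOf τ) ↦ ((τ ^ (i : ℕ) : L ≃ₐ[K] L) : L →* L)) fun i j hij ↦
        Fin.ext <| pow_injOn_Iio_orderOf i.isLt j.isLt <|
          AlgEquiv.ext fun x ↦ DFunLike.congr_fun hij x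
  obtain ⟨z, hz⟩ : ∃ z, ∑ i ∈ Finset.range (orderOf τ), u i * (τ ^ i) z ≠ 0 := by
    by_contra! hzero
    have hu₀ := Fintype.linearIndependent_iff.mp hindep (fun i ↦ u i) (funext fun z ↦ by
      simpa [Finset.sum_apply, Finset.sum_range] using hzero z) ⟨0, hτ.orderOf_pos⟩
    simp [hu] at hu₀
  set y := ∑ i ∈ Finset.range (orderOf τ), u i * (τ ^ i) z with hy
  have hfixed : a * τ y = y := by
    have hshift : a * τ y = ∑ i ∈ Finset.range (orderOf τ), u (i + 1) * (τ ^ (i + 1)) z := by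
      simp only [hy, map_sum, map_mul, Finset.mul_sum, ← mul_assoc, hu_succ, pow_succ',
        AlgEquiv.mul_apply]
    have hu_orderOf : u (orderOf τ) = u 0 := by simpa [hu] using ha
    have := Finset.sum_range_succ' (fun i ↦ u i * (τ ^ i) z) (orderOf τ)
    rw [Finset.sum_range_succ, hu_orderOf, pow_orderOf_eq_one, pow_zero] at this
    rw [hshift, ← add_right_cancel this]
  refine ⟨y⁻¹, inv_ne_zero hz, ?_⟩
  have hτy : τ y ≠ 0 := (_root_.map_ne_zero τ).mpr hz
  rw [map_inv₀, ← div_eq_mul_inv, eq_div_iff hz, inv_mul_eq_iff_eq_mul₀ hτy, mul_comm, hfixed]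

theorem exists_apply_eq_mul_of_norm_eq_one_s5 [FiniteDimensional K L] [IsGalois K L] {τ : L ≃ₐ[K] L}
    (hτ : ∀ g, g ∈ Subgroup.zpowers τ) {a : L} (ha : Algebra.norm K a = 1) :
    ∃ c : L, c ≠ 0 ∧ τ c = a * c := by
  classical
  refine exists_apply_eq_mul_of_prod_eq_one (isOfFinOrder_of_finite τ) ?_
  calc ∏ i ∈ Finset.range (orderOf τ), (τ ^ i) a
      = ∏ g : L ≃ₐ[K] L, g a := by
        rw [← IsCyclic.image_range_orderOf hτ, Finset.prod_image]
        exact fun i hi j hj hij ↦ pow_injOn_Iio_orderOf (by simpa using hi) (by simpa using hj) hij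
    _ = 1 := by rw [← Algebra.norm_eq_prod_automorphisms, ha, map_one]

theorem prod_Icc_pow_apply_mul_apply {τ : L ≃ₐ[K] L} {a c : L} (hc : τ c = a * c) (k : ℕ) :
    (∏ i ∈ Finset.Icc 1 k, (τ ^ i) a) * τ c = (τ ^ (k + 1)) c := by
  induction k with
  | zero => simp
  | succ k ih =>
    rw [Finset.prod_Icc_succ_top (by lia), mul_right_comm, ih, pow_succ τ (k + 1),
      AlgEquiv.mul_apply, hc, map_mul, mul_comm]

theorem inv_prod_Icc_pow_mul_apply {σ : L ≃ₐ[K] L} {d : ℕ} (hσ : σ ^ (d * d) = σ) (hd : d ≠ 0)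
    {a c : L} (hc : c ≠ 0) (hac : (σ ^ d) c = a * c) :
    (∏ i ∈ Finset.Icc 1 (d - 1), (σ ^ (i * d)) a)⁻¹ * σ c = (σ ^ d) c := by
  have htelescope : (∏ i ∈ Finset.Icc 1 (d - 1), (σ ^ (i * d)) a) * (σ ^ d) c = σ c := by
    have hprod := prod_Icc_pow_apply_mul_apply hac (d - 1)
    simp only [← pow_mul, mul_comm d] at hprod
    rwa [Nat.sub_add_cancel (Nat.one_le_iff_ne_zero.mpr hd), hσ] at hprod
  have hσc : σ c ≠ 0 := (_root_.map_ne_zero σ).mpr hc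
  rw [inv_mul_eq_iff_eq_mul₀ (left_ne_zero_of_mul (htelescope ▸ hσc)), htelescope]

theorem finrank_ker_aeval_of_dvd_X_pow_finrank_sub_one [FiniteDimensional K L] [IsGalois K L]
    {σ : L ≃ₐ[K] L} (hσ : ∀ g, g ∈ Subgroup.zpowers σ) {h : K[X]}
    (hdvd : h ∣ X ^ Module.finrank K L - 1) :
    Module.finrank K (LinearMap.ker (aeval (σ.toLinearMap : Module.End K L) h)) = h.natDegree := by
  have hminpoly : minpoly K (σ.toLinearMap : Module.End K L) = X ^ Module.finrank K L - 1 := by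
    rw [minpoly_algEquiv_toLinearMap σ (isOfFinOrder_of_finite σ),
      orderOf_eq_card_of_forall_mem_zpowers hσ, IsGalois.card_aut_eq_finrank, C_1]
  refine finrank_ker_aeval_of_dvd_minpoly ?_ (hminpoly ▸ hdvd)
  rw [hminpoly, ← C_1, natDegree_X_pow_sub_C]

theorem finrank_ker_trinomial_eq_finrank_ker_aeval {σ : L ≃ₐ[K] L} {d : ℕ} {a b c : L}
    (hc : c ≠ 0) (hac : (σ ^ d) c = a * c) (hbc : b * σ c = (σ ^ d) c) :
    Module.finrank K
      (LinearMap.ker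
        (- (σ ^ d : L ≃ₐ[K] L).toLinearMap
          + LinearMap.mulLeft K b ∘ₗ σ.toLinearMap + LinearMap.mulLeft K a)) =
    Module.finrank K
      (LinearMap.ker (aeval (σ.toLinearMap : Module.End K L) (X ^ d - X - 1 : K[X]))) := by
  set T : L →ₗ[K] L := - (σ ^ d : L ≃ₐ[K] L).toLinearMap
    + LinearMap.mulLeft K b ∘ₗ σ.toLinearMap + LinearMap.mulLeft K a
  set S := aeval (σ.toLinearMap : Module.End K L) (X ^ d - X - 1 : K[X]) with hS
  let e : L ≃ₗ[K] L := DistribMulAction.toLinearEquiv K L (Units.mk0 c hc)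
  have hconj (y : L) : T (e y) = -((σ ^ d) c * S y) := by
    have hSy : S y = (σ ^ d) y - σ y - y := by
      simp [hS, ← AlgEquiv.pow_toLinearMap]
    have hTy : T (e y) = -(σ ^ d) (c * y) + b * σ (c * y) + a * (c * y) := rfl
    rw [hSy, hTy, map_mul, map_mul]
    linear_combination σ y * hbc - y * hac
  have hker : LinearMap.ker S = (LinearMap.ker T).comap (e : L →ₗ[K] L) := by
    ext y
    have hσc : (σ ^ d) c ≠ 0 := (_root_.map_ne_zero _).mpr hc
    rw [Submodule.mem_comap, LinearMap.mem_ker, LinearMap.mem_ker, LinearEquiv.coe_coe, hconj,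
      neg_eq_zero, mul_eq_zero_iff_left hσc]
  rw [hker, Submodule.comap_equiv_eq_map_symm, LinearEquiv.finrank_map_eq]

theorem stmt_5_general [CharP K 2] [FiniteDimensional K L] [IsGalois K L]
    {σ : L ≃ₐ[K] L} (hσ : ∀ g, g ∈ Subgroup.zpowers σ) {d m : ℕ} (hd : d = 2 ^ m)
    (hfinrank : Module.finrank K L = d ^ 2 - 1) {a b : L} (ha : Algebra.norm K a = 1)
    (hb : b = (∏ i ∈ Finset.Icc 1 (d - 1), (σ ^ (i * d)) a)⁻¹) :
    Module.finrank K
      (LinearMap.ker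
        (- (σ ^ d : L ≃ₐ[K] L).toLinearMap
          + LinearMap.mulLeft K b ∘ₗ σ.toLinearMap + LinearMap.mulLeft K a)) = d := by
  have hd₁ : 1 < d := by
    have := Module.finrank_pos (R := K) (M := L)
    by_contra!
    interval_cases d <;> lia
  have hdd : d * d = d ^ 2 - 1 + 1 := by
    rw [Nat.sub_add_cancel (Nat.one_le_pow _ _ (by lia)), sq]
  have hσ_order : orderOf σ = d ^ 2 - 1 := by
    rw [orderOf_eq_card_of_forall_mem_zpowers hσ, IsGalois.card_aut_eq_finrank, hfinrank]
  have hσd (g : L ≃ₐ[K] L) : g ∈ Subgroup.zpowers (σ ^ d) := by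
    have hcoprime : (d * d).Coprime (orderOf σ) := by
      rw [hdd, hσ_order]
      simp
    exact Subgroup.zpowers_le.mpr (mem_zpowers_pow_iff.mpr hcoprime.coprime_mul_right) (hσ g)
  obtain ⟨c, hc, hac⟩ := exists_apply_eq_mul_of_norm_eq_one_s5 hσd ha
  have hbc : b * σ c = (σ ^ d) c := by
    have hσdd : σ ^ (d * d) = σ := by
      rw [hdd, pow_succ, ← hσ_order, pow_orderOf_eq_one, one_mul]
    rw [hb, inv_prod_Icc_pow_mul_apply hσdd (by lia) hc hac]
  have hdvd : (X ^ d - X - 1 : K[X]) ∣ X ^ Module.finrank K L - 1 :=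
    hfinrank ▸ pow_sub_self_sub_one_dvd_pow_sub_one X hd
  rw [finrank_ker_trinomial_eq_finrank_ker_aeval hc hac hbc,
    finrank_ker_aeval_of_dvd_X_pow_finrank_sub_one hσ hdvd, ← C_1, natDegree_sub_C,
    FiniteField.X_pow_card_sub_X_natDegree_eq K hd₁]

end CyclicExtension

section FiniteField

variable {K L : Type*} [Field K] [Field L] [Fintype K] [Finite L] [Algebra K L]

theorem forall_mem_zpowers_of_apply_eq_pow {s : ℕ} (hs : s.Coprime (Module.finrank K L))
    {σ : L ≃ₐ[K] L} (hσ : ∀ x, σ x = x ^ Fintype.card K ^ s) (g : L ≃ₐ[K] L) :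
    g ∈ Subgroup.zpowers σ := by
  set φ := FiniteField.frobeniusAlgEquivOfAlgebraic K L
  have hσφ : σ = φ ^ s := by
    ext x
    rw [hσ, AlgEquiv.coe_pow, FiniteField.coe_frobeniusAlgEquivOfAlgebraic_iterate]
  have hφ : φ ∈ Subgroup.zpowers σ := by
    rwa [hσφ, mem_zpowers_pow_iff, FiniteField.orderOf_frobeniusAlgEquivOfAlgebraic]
  obtain ⟨i, rfl⟩ := (FiniteField.bijective_frobeniusAlgEquivOfAlgebraic_pow K L).surjective g
  exact pow_mem hφ i

end FiniteField

/-- (Theorem `zullopaultheo`.) Let `q` be even, `d ≥ 4` a power of `2`,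
`n = d² - 1`, `gcd(s,n)=1`, `σ : x ↦ x^{q^s}`. If `N_{q^n/q}(a) = 1` and
`b = (∏_{i=1}^{d-1} σ^{id}(a))⁻¹`, then the `F_q`-dimension of the kernel of the
`σ`-linearized polynomial `−x^{σ^d} + b·x^σ + a·x` equals `d`. -/
theorem stmt_5 (p q : ℕ) (hp : p.Prime) (hq : ∃ m : ℕ, 0 < m ∧ q = p ^ m)
    (hqeven : Even q)
    (K L : Type*) [Field K] [Field L] [Fintype K] [Fintype L] [Algebra K L]
    (hcardK : Fintype.card K = q)
    (d : ℕ) (hd : 4 ≤ d) (hd2 : ∃ m : ℕ, d = 2 ^ m)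
    (n : ℕ) (hnval : n = d ^ 2 - 1) (hcardL : Fintype.card L = q ^ n)
    (s : ℕ) (hs : 0 < s) (hsn : Nat.gcd s n = 1)
    (σ : L ≃ₐ[K] L) (hσ : ∀ x : L, σ x = x ^ q ^ s)
    (a b : L) (ha : a ^ ((q ^ n - 1) / (q - 1)) = 1)
    (hb : b = (∏ i ∈ Finset.Icc 1 (d - 1), (σ ^ (i * d)) a)⁻¹) :
    Module.finrank K
      (LinearMap.ker
        (- (σ ^ d : L ≃ₐ[K] L).toLinearMap
          + LinearMap.mulLeft K b ∘ₗ σ.toLinearMap + LinearMap.mulLeft K a)) = d := by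
  have hfinrank : Module.finrank K L = n := by
    have hcard := Module.card_eq_pow_finrank (K := K) (V := L)
    rw [hcardL, hcardK] at hcard
    exact Nat.pow_right_injective (hcardK ▸ Fintype.one_lt_card : 2 ≤ q) hcard.symm
  have : CharP K 2 :=
    ringChar.of_eq <| FiniteField.even_card_iff_char_two.mpr <| hcardK ▸ Nat.even_iff.mp hqeven
  have hnorm : Algebra.norm K a = 1 := by
    apply (algebraMap K L).injective
    rw [FiniteField.algebraMap_norm_eq_pow, Nat.card_eq_fintype_card, Nat.card_eq_fintype_card,
      hcardL, hcardK, ha, map_one]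
  obtain ⟨m, hm⟩ := hd2
  exact stmt_5_general (forall_mem_zpowers_of_apply_eq_pow (hfinrank ▸ hsn) (hcardK ▸ hσ)) hm
    (hfinrank.trans hnval) hnorm hb
end

section
/- For every i ∈ {0,1,…,d−3} and every integer j with i·d+2 ≤ j ≤ (i+1)d−(i+1), one has M_{1,j} = 0. -/
/-- The `σ`-companion matrix `C_L` of `L(x) = −x^{σ^d} + b·x^σ + a·x`: its `(i+1,i)`-entries
(1-based) equal `1` for `i = 1, …, d-1`, its last column is `(a, b, 0, …, 0)ᵀ`, and all
remaining entries are `0`. (Indices here are 0-based.) -/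
def companionCL (L : Type*) [Field L] (d : ℕ) (a b : L) : Matrix (Fin d) (Fin d) L :=
  fun i j =>
    if (i : ℕ) = (j : ℕ) + 1 then 1
    else if (j : ℕ) = d - 1 ∧ (i : ℕ) = 0 then a
    else if (j : ℕ) = d - 1 ∧ (i : ℕ) = 1 then b
    else 0

/-- `A_k = C_L · C_L^σ · ⋯ · C_L^{σ^{k-1}}`, where `C^{σ^i}` applies `σ^i` entrywise. -/
noncomputable def Amat {K L : Type*} [Field K] [Field L] [Algebra K L]
    (σ : L ≃ₐ[K] L) (d : ℕ) (a b : L) (k : ℕ) : Matrix (Fin d) (Fin d) L :=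
  ((List.range k).map (fun i => (companionCL L d a b).map ⇑(σ ^ i : L ≃ₐ[K] L))).prod

/-!
The companion matrix has nonzero entries only at `(j + 1, j)` and in the last column, in rows `0`
and `1`. Reading a product of `k` such matrices as a walk, each factor either lowers the column
index by one or returns it from `0` or `1` to `d - 1`. The sum of the column index and the number
of factors is therefore constant except for jumps of `d` and `d - 1`, so a nonzero `(i, j)` entry
of `A_k` forces `k + j - i` into the numerical semigroup generated by `d - 1` and `d`. The first
row of `C_L` has `a` in its last column as its only nonzero entry, whence
`M_{1,k+1} = a * σ (M_{d,k})`, and `M_{d,k}` vanishes whenever `k` is in a gap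
`i * d < k < (i + 1) * (d - 1)` of that semigroup.
-/

theorem le_or_le_of_mem_closure_pair {c d s : ℕ} (hcd : c ≤ d)
    (hs : s ∈ AddSubmonoid.closure {c, d}) (i : ℕ) : s ≤ i * d ∨ (i + 1) * c ≤ s := by
  obtain ⟨u, v, rfl⟩ := (AddSubmonoid.mem_closure_pair c d s).mp hs
  simp only [smul_eq_mul]
  rcases le_or_gt (u + v) i with huv | huv
  · left
    calc u * c + v * d ≤ u * d + v * d := by gcongr
      _ = (u + v) * d := (add_mul u v d).symm
      _ ≤ i * d := by gcongr
  · right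
    calc (i + 1) * c ≤ (u + v) * c := Nat.mul_le_mul_right c huv
      _ = u * c + v * c := add_mul u v c
      _ ≤ u * c + v * d := by gcongr

section companionCL

variable {L : Type*} [Field L] {d : ℕ} {a b : L}

theorem companionCL_apply_ne_zero {i j : Fin d} (h : companionCL L d a b i j ≠ 0) :
    (i : ℕ) = j + 1 ∨ (j : ℕ) = d - 1 ∧ ((i : ℕ) = 0 ∨ (i : ℕ) = 1) := by
  unfold companionCL at h
  grind

theorem companionCL_first_row (hd : 0 < d) (j : Fin d) :
    companionCL L d a b ⟨0, hd⟩ j = if j = ⟨d - 1, Nat.sub_one_lt_of_lt hd⟩ then a else 0 := by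
  simp [companionCL, Fin.ext_iff]

end companionCL

section Amat

variable {K L : Type*} [Field K] [Field L] [Algebra K L] (σ : L ≃ₐ[K] L) {d : ℕ} (a b : L)

theorem Amat_zero : Amat σ d a b 0 = 1 := rfl

theorem Amat_succ (k : ℕ) :
    Amat σ d a b (k + 1) = Amat σ d a b k * (companionCL L d a b).map ⇑(σ ^ k) := by
  simp [Amat, List.range_succ]

theorem Amat_succ_eq_companionCL_mul (k : ℕ) :
    Amat σ d a b (k + 1) = companionCL L d a b * (Amat σ d a b k).map σ := by
  induction k with
  | zero => simp [Amat]
  | succ k ih =>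
    have map_comp : ((companionCL L d a b).map ⇑(σ ^ k)).map σ =
        (companionCL L d a b).map ⇑(σ ^ (k + 1)) := by
      rw [Matrix.map_map, pow_succ']
      rfl
    calc Amat σ d a b (k + 2)
      _ = companionCL L d a b * (Amat σ d a b k).map σ *
            (companionCL L d a b).map ⇑(σ ^ (k + 1)) := by rw [Amat_succ, ih]
      _ = companionCL L d a b * (Amat σ d a b (k + 1)).map σ := by
        rw [Amat_succ, Matrix.map_mul, map_comp, Matrix.mul_assoc]

theorem Amat_succ_first_row (hd : 0 < d) (k : ℕ) (j : Fin d) :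
    Amat σ d a b (k + 1) ⟨0, hd⟩ j =
      a * σ (Amat σ d a b k ⟨d - 1, Nat.sub_one_lt_of_lt hd⟩ j) := by
  simp [Amat_succ_eq_companionCL_mul, Matrix.mul_apply, companionCL_first_row]

variable {σ a b}

theorem exists_mem_closure_of_Amat_apply_ne_zero {k : ℕ} {i j : Fin d}
    (h : Amat σ d a b k i j ≠ 0) :
    ∃ s ∈ AddSubmonoid.closure {d - 1, d}, k + j = i + s := by
  induction k generalizing j with
  | zero =>
    have hij : i = j := by
      by_contra hij
      exact h (by rw [Amat_zero, Matrix.one_apply_ne hij])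
    exact ⟨0, zero_mem _, by simp [hij]⟩
  | succ k ih =>
    rw [Amat_succ, Matrix.mul_apply] at h
    obtain ⟨m, -, hm⟩ := Finset.exists_ne_zero_of_sum_ne_zero h
    have hcomp : companionCL L d a b m j ≠ 0 := by
      intro hzero
      simp [hzero] at hm
    obtain ⟨s, hs, hsum⟩ := ih (left_ne_zero_of_mul hm)
    rcases companionCL_apply_ne_zero hcomp with hstep | ⟨hlast, hzero | hone⟩
    · exact ⟨s, hs, by omega⟩
    · exact ⟨s + d, add_mem hs (AddSubmonoid.subset_closure (by simp)), by omega⟩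
    · exact ⟨s + (d - 1), add_mem hs (AddSubmonoid.subset_closure (by simp)), by omega⟩

theorem Amat_last_last_eq_zero (hd : 0 < d) {i k : ℕ} (hlow : i * d < k)
    (hhigh : k < (i + 1) * (d - 1)) :
    Amat σ d a b k ⟨d - 1, Nat.sub_one_lt_of_lt hd⟩ ⟨d - 1, Nat.sub_one_lt_of_lt hd⟩ = 0 := by
  by_contra hne
  obtain ⟨s, hs, hsum⟩ := exists_mem_closure_of_Amat_apply_ne_zero hne
  obtain rfl : k = s := by simpa [add_comm k] using hsum
  rcases le_or_le_of_mem_closure_pair (Nat.sub_le d 1) hs i with hle | hle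
  · exact hle.not_gt hlow
  · exact hle.not_gt hhigh

variable (σ a b)

theorem stmt_7_general (hd : 0 < d) {i j : ℕ} (hlow : i * d + 2 ≤ j)
    (hhigh : j ≤ (i + 1) * (d - 1)) :
    Amat σ d a b j ⟨0, hd⟩ ⟨d - 1, Nat.sub_one_lt_of_lt hd⟩ = 0 := by
  obtain ⟨k, rfl⟩ : ∃ k, j = k + 1 := Nat.exists_eq_add_of_le' (by omega)
  have hgap := Amat_last_last_eq_zero (σ := σ) (a := a) (b := b) (k := k) hd
    (by omega : i * d < k) hhigh
  rw [Amat_succ_first_row, hgap, map_zero, mul_zero]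

end Amat

/-- (Proposition `propM1`.) For every `i ∈ {0, …, d-3}` and every `j` with
`i·d + 2 ≤ j ≤ (i+1)d − (i+1)`, one has `M 1 j = 0`. -/
theorem stmt_7
    (p q : ℕ) (hp : p.Prime) (hq : ∃ m : ℕ, 0 < m ∧ q = p ^ m)
    (K L : Type*) [Field K] [Field L] [Fintype K] [Fintype L] [Algebra K L]
    (hcardK : Fintype.card K = q)
    (n : ℕ) (hn : 0 < n) (hcardL : Fintype.card L = q ^ n)
    (s : ℕ) (hs : 0 < s) (hsn : Nat.gcd s n = 1)
    (σ : L ≃ₐ[K] L) (hσ : ∀ x : L, σ x = x ^ q ^ s)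
    (d : ℕ) (hd : 3 ≤ d) (a b : L)
    (M : ℕ → ℤ → L)
    (hMpos : ∀ (l : ℕ) (hl1 : 1 ≤ l) (hl2 : l ≤ d) (k : ℕ), 1 ≤ k →
      M l k = Amat σ d a b k ⟨l - 1, by omega⟩ ⟨d - 1, by omega⟩)
    (hMdiag : ∀ (l : ℕ), 1 ≤ l → l ≤ d → M l ((l : ℤ) - d) = 1)
    (hMzero : ∀ (l : ℕ), 1 ≤ l → l ≤ d → ∀ k : ℤ, k ≤ 0 → k ≠ (l : ℤ) - d → M l k = 0)
    :
    ∀ i : ℕ, i ≤ d - 3 → ∀ j : ℕ, i * d + 2 ≤ j → j ≤ (i + 1) * d - (i + 1) →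
      M 1 (j : ℤ) = 0 := by
  intro i _ j hlow hhigh
  rw [hMpos 1 le_rfl (by omega) j (by omega)]
  exact stmt_7_general σ a b (by omega) hlow (by rwa [Nat.mul_sub_one])
end

section
/- Let d ≥ 3 and n ≥ d+1, and let a, b ∈ F_{q^n}. Then the F_q-dimension of the kernel of L(x) = −x^{σ^d} + b·x^σ + a·x equals d if and only if M_{1,n−d+1} = 1 and M_{l,n−d+1} = 0 for every l ∈ {2,…,d}. -/
/-!
A `σ`-polynomial `∑_{i < m} cᵢ σ^i` with some `cᵢ ≠ 0` has kernel of dimension less than `m`: the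
powers of `σ` span `Hom_K(V, L)` for every `K`-subspace `V`, composition with `σ` shifts them, and
so already the first `dim V` of them form an `L`-basis.

Right division by `f = ∑_{i < d} cᵢ σ^i - σ^d` gives `σ^n - 1 = -g ∘ f + r`, where `g` has degree
`n - d` and the coefficients of `r + 1` are the last column of `A_{n-d+1}`. If `dim ker f = d`, then
`r`, which vanishes on `ker f` and has degree less than `d`, is zero. If `r = 0`, then the range of
`f` lies in `ker g`, so `f` has rank at most `n - d` and its kernel has dimension exactly `d`.
-/

section SemilinearShift

open Submodule

variable {L E : Type*} [DivisionRing L] [AddCommGroup E] [Module L E] {σ : L →+* L}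
  {T : E →ₛₗ[σ] E} {x : ℕ → E}

theorem mem_span_of_semilinear_shift (hT : ∀ i, T (x i) = x (i + 1)) {m : ℕ}
    (hm : x m ∈ span L (Set.range fun i : Fin m => x i)) (k : ℕ) :
    x k ∈ span L (Set.range fun i : Fin m => x i) := by
  have mem_of_le {k : ℕ} (hk : k ≤ m) : x k ∈ span L (Set.range fun i : Fin m => x i) := by
    obtain rfl | hlt := hk.eq_or_lt
    · exact hm
    · exact subset_span ⟨⟨k, hlt⟩, rfl⟩
  have invariant : span L (Set.range fun i : Fin m => x i) ≤
      (span L (Set.range fun i : Fin m => x i)).comap T := by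
    rw [span_le]
    rintro _ ⟨i, rfl⟩
    simpa only [SetLike.mem_coe, mem_comap, hT] using mem_of_le i.isLt
  induction k with
  | zero => exact mem_of_le m.zero_le
  | succ k ih => exact hT k ▸ invariant ih

theorem linearIndependent_of_semilinear_shift (hT : ∀ i, T (x i) = x (i + 1))
    (hx : span L (Set.range x) = ⊤) {m : ℕ} (hm : m ≤ Module.finrank L E) :
    LinearIndependent L fun i : Fin m => x i := by
  induction m with
  | zero => exact linearIndependent_empty_type
  | succ m ih =>
    refine linearIndependent_finSucc'.mpr ⟨ih (Nat.le_of_succ_le hm), fun hmem => ?_⟩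
    have span_eq_top : span L (Set.range fun i : Fin m => x i) = ⊤ := by
      rw [eq_top_iff, ← hx, span_le]
      rintro _ ⟨k, rfl⟩
      exact mem_span_of_semilinear_shift hT hmem k
    have finrank_le := finrank_range_le_card (R := L) fun i : Fin m => x i
    rw [Set.finrank, span_eq_top, finrank_top, Fintype.card_fin] at finrank_le
    lia

end SemilinearShift

section SkewPolynomial

open Module

variable {K L : Type*} [Field K] [Field L] [Algebra K L] (σ : L ≃ₐ[K] L)

/-- The `K`-linear map `∑ i, c i • σ ^ i` of `L` given by a `σ`-polynomial of degree less than `m`,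
as an `L`-linear function of its coefficient vector `c`. -/
noncomputable def skewPolyMap {m : ℕ} : (Fin m → L) →ₗ[L] L →ₗ[K] L :=
  Fintype.linearCombination L fun i : Fin m => (σ ^ (i : ℕ)).toLinearMap

theorem skewPolyMap_apply {m : ℕ} (c : Fin m → L) (x : L) :
    skewPolyMap σ c x = ∑ i, c i * (σ ^ (i : ℕ)) x := by
  simp [skewPolyMap, Fintype.linearCombination_apply]

theorem skewPolyMap_snoc {m : ℕ} (c : Fin m → L) (t : L) :
    skewPolyMap σ (Fin.snoc c t : Fin (m + 1) → L) =
      skewPolyMap σ c + t • (σ ^ m).toLinearMap := by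
  ext x
  simp [skewPolyMap_apply, Fin.sum_univ_castSucc]

theorem skewPolyMap_cons {m : ℕ} (t : L) (c : Fin m → L) :
    skewPolyMap σ (Fin.cons t (σ ∘ c) : Fin (m + 1) → L) =
      t • LinearMap.id + σ.toLinearMap ∘ₗ skewPolyMap σ c := by
  ext x
  simp [skewPolyMap_apply, Fin.sum_univ_succ, pow_succ', -AlgEquiv.coe_pow]

variable {σ} [FiniteDimensional K L]

theorem span_range_pow_eq_top (hσ : orderOf σ = finrank K L) :
    Submodule.span L (Set.range fun i : ℕ => (σ ^ i).toLinearMap) = ⊤ := by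
  have pow_injective : Function.Injective fun i : Fin (finrank K L) => σ ^ (i : ℕ) :=
    fun i j hij => Fin.ext <|
      pow_injOn_Iio_orderOf (i.isLt.trans_eq hσ.symm) (j.isLt.trans_eq hσ.symm) hij
  have independent : LinearIndependent L fun i : Fin (finrank K L) => (σ ^ (i : ℕ)).toLinearMap :=
    ((linearIndependent_algHom_toLinearMap K L L).comp (fun τ : L ≃ₐ[K] L => (τ : L →ₐ[K] L))
      AlgEquiv.coe_toAlgHom_injective).comp _ pow_injective
  have span_eq_top := independent.span_eq_top_of_card_eq_finrank'
    (by rw [Fintype.card_fin, finrank_linearMap_self])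
  exact top_le_iff.mp <| span_eq_top.ge.trans <| Submodule.span_mono <|
    Set.range_subset_iff.mpr fun i => ⟨i, rfl⟩

theorem span_range_pow_domRestrict_eq_top (hσ : orderOf σ = finrank K L) (V : Submodule K L) :
    Submodule.span L (Set.range fun i : ℕ => (σ ^ i).toLinearMap.domRestrict V) = ⊤ := by
  have restrict_surjective : Function.Surjective (LinearMap.lcomp L L V.subtype) :=
    fun f => f.exists_extend
  have span_map := Submodule.map_span (LinearMap.lcomp L L V.subtype)
    (Set.range fun i : ℕ => (σ ^ i).toLinearMap)
  rw [span_range_pow_eq_top hσ, Submodule.map_top, LinearMap.range_eq_top.mpr restrict_surjective,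
    ← Set.range_comp] at span_map
  exact span_map.symm

theorem linearIndependent_pow_domRestrict (hσ : orderOf σ = finrank K L) (V : Submodule K L)
    {m : ℕ} (hm : m ≤ finrank K V) :
    LinearIndependent L fun i : Fin m => (σ ^ (i : ℕ)).toLinearMap.domRestrict V := by
  let postcomp : (V →ₗ[K] L) →ₛₗ[(σ : L →+* L)] V →ₗ[K] L :=
    { toFun := fun f => σ.toLinearMap ∘ₗ f
      map_add' := fun f g => LinearMap.comp_add f g _
      map_smul' := fun t f => by ext; simp }
  refine linearIndependent_of_semilinear_shift (T := postcomp)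
    (x := fun i => (σ ^ i).toLinearMap.domRestrict V) (fun i => ?_)
    (span_range_pow_domRestrict_eq_top hσ V) (finrank_linearMap_self K L V ▸ hm)
  ext x
  simp [postcomp, pow_succ', -AlgEquiv.coe_pow]

theorem finrank_ker_skewPolyMap_lt (hσ : orderOf σ = finrank K L) {m : ℕ} {c : Fin m → L}
    (hc : c ≠ 0) : finrank K (LinearMap.ker (skewPolyMap σ c)) < m := by
  by_contra! hm
  have independent := linearIndependent_pow_domRestrict hσ _ hm
  refine hc <| funext <| Fintype.linearIndependent_iff.mp independent c ?_
  ext ⟨x, hx⟩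
  simpa [skewPolyMap_apply] using hx

theorem finrank_ker_skewPolyMap_eq_iff (hσ : orderOf σ = finrank K L) {d e : ℕ}
    (hde : d + e = finrank K L) {f : Fin (d + 1) → L} {g : Fin (e + 1) → L} {r : Fin d → L}
    (hf : f ≠ 0) (hg : g ≠ 0) (h : skewPolyMap σ r = skewPolyMap σ g ∘ₗ skewPolyMap σ f) :
    finrank K (LinearMap.ker (skewPolyMap σ f)) = d ↔ r = 0 := by
  constructor
  · intro hker
    by_contra hr
    have ker_le : LinearMap.ker (skewPolyMap σ f) ≤ LinearMap.ker (skewPolyMap σ r) :=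
      h ▸ LinearMap.ker_le_ker_comp _ _
    have := Submodule.finrank_mono ker_le
    have := finrank_ker_skewPolyMap_lt hσ hr
    lia
  · rintro rfl
    have range_le : LinearMap.range (skewPolyMap σ f) ≤ LinearMap.ker (skewPolyMap σ g) :=
      LinearMap.range_le_ker_iff.mpr (h.symm.trans (map_zero _))
    have := Submodule.finrank_mono range_le
    have := finrank_ker_skewPolyMap_lt hσ hf
    have := finrank_ker_skewPolyMap_lt hσ hg
    have := LinearMap.finrank_range_add_finrank_ker (skewPolyMap σ f)
    lia

end SkewPolynomial

section Companion

open Matrix Module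

variable {K L ι : Type*} [Field K] [Field L] [Algebra K L] (σ : L ≃ₐ[K] L)
  [Fintype ι] [DecidableEq ι]

/-- The product `C * C^σ * ⋯ * C^(σ^(k-1))`, where `C^(σ^i)` is `C` with `σ ^ i` applied to its
entries; `Amat σ d a b` is the case `C = companionCL L d a b`. -/
noncomputable def twistedProd (C : Matrix ι ι L) (k : ℕ) : Matrix ι ι L :=
  ((List.range k).map fun i => C.map (σ ^ i : L ≃ₐ[K] L)).prod

theorem twistedProd_zero (C : Matrix ι ι L) : twistedProd σ C 0 = 1 := rfl

theorem twistedProd_succ (C : Matrix ι ι L) (k : ℕ) :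
    twistedProd σ C (k + 1) = C * (twistedProd σ C k).map σ := by
  have map_prod := map_list_prod (σ : L →+* L).mapMatrix
    ((List.range k).map fun i => C.map (σ ^ i : L ≃ₐ[K] L))
  simp only [RingHom.mapMatrix_apply, List.map_map] at map_prod
  rw [twistedProd, List.range_succ_eq_map, List.map_cons, List.prod_cons, List.map_map]
  congr 1
  refine Eq.trans ?_ map_prod.symm
  congr 2 with i r t
  simp [pow_succ', -AlgEquiv.coe_pow]

theorem vecMul_twistedProd_succ {C : Matrix ι ι L} {v w : ι → L} (h : v ᵥ* C = σ ∘ v + w) (k : ℕ) :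
    v ᵥ* twistedProd σ C (k + 1) =
      σ ∘ (v ᵥ* twistedProd σ C k) + w ᵥ* (twistedProd σ C k).map σ := by
  have comp_vecMul : σ ∘ (v ᵥ* twistedProd σ C k) = (σ ∘ v) ᵥ* (twistedProd σ C k).map σ :=
    funext fun j => RingHom.map_vecMul (σ : L →+* L) _ v j
  rw [twistedProd_succ, ← vecMul_vecMul, h, add_vecMul, comp_vecMul]

/-- The companion matrix of the monic `σ`-polynomial `σ^(m+1) - ∑ i, c i • σ ^ i`: ones below the
diagonal and last column `c`. -/
def skewCompanion {m : ℕ} (c : Fin (m + 1) → L) : Matrix (Fin (m + 1)) (Fin (m + 1)) L :=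
  of fun i => Fin.snoc (fun j : Fin m => if i = j.succ then 1 else 0) (c i)

theorem vecMul_skewCompanion {m : ℕ} (c : Fin (m + 1) → L) (x : L) :
    (fun i : Fin (m + 1) => (σ ^ (i : ℕ)) x) ᵥ* skewCompanion c =
      σ ∘ (fun i : Fin (m + 1) => (σ ^ (i : ℕ)) x) +
        Pi.single (Fin.last m) (skewPolyMap σ (Fin.snoc c (-1) : Fin (m + 2) → L) x) := by
  ext j
  cases j using Fin.lastCases with
  | last =>
    simp [vecMul, dotProduct, skewCompanion, skewPolyMap_snoc, skewPolyMap_apply, mul_comm,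
      pow_succ', -AlgEquiv.coe_pow]
  | cast j => simp [vecMul, dotProduct, skewCompanion, pow_succ', -AlgEquiv.coe_pow]

/-- The coefficients of `g`, of degree `k - 1`, in the right division `σ^(k+m) = r - g ∘ f` by the
`σ`-polynomial `f = ∑ i, c i • σ ^ i - σ^(m+1)`, by recursion on `k`. -/
noncomputable def skewQuotient {m : ℕ} (c : Fin (m + 1) → L) : (k : ℕ) → Fin k → L
  | 0 => Fin.elim0
  | k + 1 => Fin.cons (σ (twistedProd σ (skewCompanion c) k (Fin.last m) (Fin.last m)))
      (σ ∘ skewQuotient c k)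

theorem skewQuotient_last {m : ℕ} (c : Fin (m + 1) → L) (k : ℕ) :
    skewQuotient σ c (k + 1) (Fin.last k) = 1 := by
  induction k with
  | zero => simp [skewQuotient, twistedProd_zero]
  | succ k ih => rw [skewQuotient, ← Fin.succ_last, Fin.cons_succ, Function.comp_apply, ih, map_one]

theorem skewPolyMap_col_twistedProd_succ {m : ℕ} (c : Fin (m + 1) → L) (k : ℕ) (x : L) :
    skewPolyMap σ ((twistedProd σ (skewCompanion c) (k + 1)).col (Fin.last m)) x =
      σ (skewPolyMap σ ((twistedProd σ (skewCompanion c) k).col (Fin.last m)) x) +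
        σ (twistedProd σ (skewCompanion c) k (Fin.last m) (Fin.last m)) *
          skewPolyMap σ (Fin.snoc c (-1) : Fin (m + 2) → L) x := by
  have skewPolyMap_col (A : Matrix (Fin (m + 1)) (Fin (m + 1)) L) :
      skewPolyMap σ (A.col (Fin.last m)) x =
        ((fun i : Fin (m + 1) => (σ ^ (i : ℕ)) x) ᵥ* A) (Fin.last m) := by
    rw [skewPolyMap_apply, vecMul_eq_sum]
    simp [mul_comm, -AlgEquiv.coe_pow]
  simp only [skewPolyMap_col, vecMul_twistedProd_succ σ (vecMul_skewCompanion σ c x) k]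
  simp [mul_comm]

theorem skewPolyMap_col_twistedProd {m : ℕ} (c : Fin (m + 1) → L) (k : ℕ) :
    skewPolyMap σ ((twistedProd σ (skewCompanion c) k).col (Fin.last m)) =
      (σ ^ (k + m)).toLinearMap + skewPolyMap σ (skewQuotient σ c k) ∘ₗ
        skewPolyMap σ (Fin.snoc c (-1) : Fin (m + 2) → L) := by
  induction k with
  | zero =>
    ext x
    simp [skewPolyMap_apply, twistedProd_zero, one_apply]
  | succ k ih =>
    ext x
    rw [skewPolyMap_col_twistedProd_succ, ih, skewQuotient, skewPolyMap_cons, add_right_comm k]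
    simp only [LinearMap.add_apply, LinearMap.comp_apply, LinearMap.smul_apply, LinearMap.id_apply,
      AlgEquiv.toLinearMap_apply, pow_succ', AlgEquiv.mul_apply, map_add, smul_eq_mul]
    ring

theorem finrank_ker_skewPolyMap_eq_iff_col_eq [FiniteDimensional K L]
    (hσ : orderOf σ = finrank K L) {m e : ℕ} (hme : m + 1 + e = finrank K L) (c : Fin (m + 1) → L) :
    finrank K (LinearMap.ker (skewPolyMap σ (Fin.snoc c (-1) : Fin (m + 2) → L))) = m + 1 ↔
      (twistedProd σ (skewCompanion c) (e + 1)).col (Fin.last m) = Pi.single 0 1 := by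
  have snoc_ne_zero : (Fin.snoc c (-1) : Fin (m + 2) → L) ≠ 0 := fun h => by
    simpa using congrFun h (Fin.last (m + 1))
  have quotient_ne_zero : skewQuotient σ c (e + 1) ≠ 0 := fun h => by
    simpa [h] using skewQuotient_last σ c e
  refine Iff.trans (finrank_ker_skewPolyMap_eq_iff hσ hme snoc_ne_zero quotient_ne_zero ?_)
    sub_eq_zero
  have pow_eq_one : σ ^ (e + 1 + m) = 1 := by
    rw [show e + 1 + m = orderOf σ by lia, pow_orderOf_eq_one]
  rw [map_sub, skewPolyMap_col_twistedProd, pow_eq_one]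
  ext x
  simp [skewPolyMap_apply, Pi.single_apply]

end Companion

section Trinomial

variable {K L : Type*} [Field K] [Field L] [Algebra K L]

theorem companionCL_eq_skewCompanion (m : ℕ) (a b : L) :
    companionCL L (m + 2) a b = skewCompanion (Fin.cons a (Fin.cons b 0)) := by
  ext i j
  cases j using Fin.lastCases with
  | last =>
    refine Fin.cases ?_ (Fin.cases ?_ fun i => ?_) i
    · simp [companionCL, skewCompanion]
    · simp [companionCL, skewCompanion]
    · simp [companionCL, skewCompanion, i.isLt.ne]
  | cast j =>
    have : (j : ℕ) ≠ m + 1 := j.isLt.ne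
    simp [companionCL, skewCompanion, this, Fin.ext_iff, -Fin.val_eq_zero_iff]

theorem trinomial_eq_skewPolyMap (σ : L ≃ₐ[K] L) (m : ℕ) (a b : L) :
    -(σ ^ (m + 2) : L ≃ₐ[K] L).toLinearMap
        + LinearMap.mulLeft K b ∘ₗ σ.toLinearMap + LinearMap.mulLeft K a =
      skewPolyMap σ (Fin.snoc (Fin.cons a (Fin.cons b 0) : Fin (m + 2) → L) (-1) :
        Fin (m + 3) → L) := by
  ext x
  have binomial_apply :
      skewPolyMap σ (Fin.cons a (Fin.cons b 0) : Fin (m + 2) → L) x = a * x + b * σ x := by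
    simp [skewPolyMap_apply, Fin.sum_univ_succ]
  simp only [skewPolyMap_snoc, LinearMap.add_apply, LinearMap.neg_apply, LinearMap.smul_apply,
    LinearMap.comp_apply, LinearMap.mulLeft_apply, AlgEquiv.toLinearMap_apply, smul_eq_mul,
    binomial_apply]
  ring

end Trinomial

open Module in
-- The hypothesis on the order of `σ` says that `L/K` is Galois with cyclic group generated by `σ`.
theorem stmt_9_general {K L : Type*} [Field K] [Field L] [Algebra K L] [FiniteDimensional K L]
    (σ : L ≃ₐ[K] L) (hσ : orderOf σ = finrank K L)
    (d : ℕ) (hd : 2 ≤ d) (hdn : d ≤ finrank K L) (a b : L) (M : ℕ → ℤ → L)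
    (hM : ∀ (l : ℕ) (hl1 : 1 ≤ l) (hl2 : l ≤ d) (k : ℕ), 1 ≤ k →
      M l k = Amat σ d a b k ⟨l - 1, by omega⟩ ⟨d - 1, by omega⟩) :
    finrank K
      (LinearMap.ker
        (- (σ ^ d : L ≃ₐ[K] L).toLinearMap
          + LinearMap.mulLeft K b ∘ₗ σ.toLinearMap + LinearMap.mulLeft K a)) = d
      ↔ (M 1 ((finrank K L : ℤ) - d + 1) = 1
          ∧ ∀ l : ℕ, 2 ≤ l → l ≤ d → M l ((finrank K L : ℤ) - d + 1) = 0) := by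
  obtain ⟨m, rfl⟩ := Nat.exists_eq_add_of_le' hd
  obtain ⟨e, he⟩ := Nat.exists_eq_add_of_le hdn
  have M_eq (i : Fin (m + 2)) : M (i + 1) ((finrank K L : ℤ) - (m + 2 : ℕ) + 1) =
      (twistedProd σ (companionCL L (m + 2) a b) (e + 1)).col (Fin.last (m + 1)) i := by
    rw [show (finrank K L : ℤ) - (m + 2 : ℕ) + 1 = (e + 1 : ℕ) by lia]
    exact hM (i + 1) (by lia) (by lia) (e + 1) (by lia)
  rw [trinomial_eq_skewPolyMap, finrank_ker_skewPolyMap_eq_iff_col_eq σ hσ he.symm,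
    ← companionCL_eq_skewCompanion, funext_iff, Fin.forall_fin_succ]
  simp only [← M_eq]
  refine and_congr (by simp) ⟨fun h l hl hld => ?_, fun h i => ?_⟩
  · obtain ⟨i, rfl⟩ := Nat.exists_eq_add_of_le' hl
    simpa using h ⟨i, by lia⟩
  · simpa using h (i + 1 + 1) (by lia) (by lia)

section FiniteField

variable {K L : Type*} [Field K] [Field L] [Fintype K] [Finite L] [Algebra K L]

theorem orderOf_eq_finrank_of_apply_eq_pow {σ : L ≃ₐ[K] L} {s : ℕ}
    (hσ : ∀ x, σ x = x ^ Fintype.card K ^ s) (hs : s.Coprime (Module.finrank K L)) :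
    orderOf σ = Module.finrank K L := by
  have eq_frobenius_pow : σ = FiniteField.frobeniusAlgEquivOfAlgebraic K L ^ s := by
    ext x
    rw [hσ, AlgEquiv.coe_pow, FiniteField.coe_frobeniusAlgEquivOfAlgebraic_iterate]
  have order_frobenius := FiniteField.orderOf_frobeniusAlgEquivOfAlgebraic K L
  rw [eq_frobenius_pow, Nat.Coprime.orderOf_pow (order_frobenius ▸ hs.symm), order_frobenius]

end FiniteField

/-- (Corollary `systemsplit`.) Let `d ≥ 3`, `n ≥ d+1`. The `F_q`-dimension
of the kernel of `L(x) = −x^{σ^d} + b·x^σ + a·x` equals `d` if and only if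
`M 1 (n-d+1) = 1` and `M l (n-d+1) = 0` for every `l ∈ {2, …, d}`. -/
theorem stmt_9
    (p q : ℕ) (hp : p.Prime) (hq : ∃ m : ℕ, 0 < m ∧ q = p ^ m)
    (K L : Type*) [Field K] [Field L] [Fintype K] [Fintype L] [Algebra K L]
    (hcardK : Fintype.card K = q)
    (n : ℕ) (hn : 0 < n) (hcardL : Fintype.card L = q ^ n)
    (s : ℕ) (hs : 0 < s) (hsn : Nat.gcd s n = 1)
    (σ : L ≃ₐ[K] L) (hσ : ∀ x : L, σ x = x ^ q ^ s)
    (d : ℕ) (hd : 3 ≤ d) (a b : L)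
    (M : ℕ → ℤ → L)
    (hMpos : ∀ (l : ℕ) (hl1 : 1 ≤ l) (hl2 : l ≤ d) (k : ℕ), 1 ≤ k →
      M l k = Amat σ d a b k ⟨l - 1, by omega⟩ ⟨d - 1, by omega⟩)
    (hMdiag : ∀ (l : ℕ), 1 ≤ l → l ≤ d → M l ((l : ℤ) - d) = 1)
    (hMzero : ∀ (l : ℕ), 1 ≤ l → l ≤ d → ∀ k : ℤ, k ≤ 0 → k ≠ (l : ℤ) - d → M l k = 0)
    (hnd : d + 1 ≤ n) :
    Module.finrank K
      (LinearMap.ker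
        (- (σ ^ d : L ≃ₐ[K] L).toLinearMap
          + LinearMap.mulLeft K b ∘ₗ σ.toLinearMap + LinearMap.mulLeft K a)) = d
      ↔ (M 1 ((n : ℤ) - d + 1) = 1
          ∧ ∀ l : ℕ, 2 ≤ l → l ≤ d → M l ((n : ℤ) - d + 1) = 0) := by
  subst hcardK
  obtain rfl : Module.finrank K L = n :=
    Nat.pow_right_injective Fintype.one_lt_card (Module.card_eq_pow_finrank.symm.trans hcardL)
  exact stmt_9_general σ (orderOf_eq_finrank_of_apply_eq_pow hσ hsn) d (by lia) (by lia) a b M hMpos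
end
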